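/- arXiv:2009.01097 — 3 statements merged into one kernel-verified Lean document; each statement's English description precedes it below -/
import Mathlib

section
/- Let A be a commutative noetherian ring and let B be a flat A-algebra which is essentially of finite type over A, and let μ : B ⊗_A B → B denote the multiplication map. Then B is a formally smooth A-algebra if and only if for every prime ideal q of B, setting p = μ^{-1}(q), the kernel of the induced local homomorphism (B ⊗_A B)_p → B_q is generated by a (B ⊗_A B)_p-regular sequence (i.e., the diagonal μ is a local complete intersection). -/
universe u

/-- A surjective ring homomorphism `ψ : B →+* A` is a *local complete intersection* if for
every prime `q` of `A`, with `p = ψ⁻¹(q)`, the kernel of the induced local homomorphism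
`B_p →+* A_q` is generated by a `B_p`-regular sequence. -/
def RingHom.IsLocalCompleteIntersection {B A : Type u} [CommRing B] [CommRing A]
    (ψ : B →+* A) : Prop :=
  ∀ (q : Ideal A) (hq : q.IsPrime),
    haveI := hq
    haveI : (q.comap ψ).IsPrime := hq.comap ψ
    ∃ rs : List (Localization.AtPrime (q.comap ψ)),
      RingTheory.Sequence.IsRegular (Localization.AtPrime (q.comap ψ)) rs ∧
      RingHom.ker (Localization.localRingHom (q.comap ψ) q ψ rfl) = Ideal.ofList rs

/-!
Forward direction: at a point of the diagonal, `R = (B ⊗ B)_p` and `R ⧸ K = B_q` are both formally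
smooth over `B`. An element `x` of `K` outside `𝔪K` has a differential that splits off `Ω[R⁄B]`, so
some derivation `D` of `R` has `D x = 1`. Smoothness integrates `D` modulo `x` to a ring
homomorphism `R → (R ⧸ x)⟦X⟧` sending `x` to `X` times a unit. By Nakayama it is injective, so `x`
is regular, while correcting lifts along `D` shows that `R ⧸ x` is again smooth; iterate.

Converse: the conormal module `K ⧸ K ^ 2 = Ω[B⁄A]` is locally free, hence projective. It remains to
show that `J ⧸ J ^ 2 → B ⊗ Ω[P⁄A]` is injective for a polynomial presentation `B = P ⧸ J`, that is,
`H₁` of the cotangent complex vanishes. If `j ∈ J` has zero differential, then `j ⊗ 1` lies in the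
square of the ideal `G` of the graph `P ⊗ B → B`. Modulo the kernel `L` of `P ⊗ B → B ⊗ B`, the
ideal `G` is locally generated by a regular sequence, which gives `L ∩ G ^ 2 ≤ LG`; as `B` is flat
over `A`, an element `j ∈ J` with `j ⊗ 1 ∈ LG` lies in `J ^ 2`.
-/

lemma isAdicComplete_pow {R : Type*} [CommRing R] (I : Ideal R) [IsAdicComplete I R] {n : ℕ}
    (hn : n ≠ 0) : IsAdicComplete (I ^ n) R := by
  let _ := I.adicTopology
  let _ : UniformSpace R := IsTopologicalAddGroup.rightUniformSpace R
  have : IsUniformAddGroup R := isUniformAddGroup_of_addCommGroup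
  have hI : IsAdic I := rfl
  rw [(is_ideal_adic_pow hI (Nat.pos_of_ne_zero hn)).isAdicComplete_iff]
  exact hI.isAdicComplete_iff.mp ‹_›

section Derivation

open PowerSeries

lemma exists_algHom_quotient_span_X_sq_of_derivation {B R S : Type*} [CommRing B]
    [CommRing R] [CommRing S] [Algebra B R] [Algebra B S] [Algebra R S] [IsScalarTower B R S]
    (D : Derivation B R S) :
    ∃ f : R →ₐ[B] S⟦X⟧ ⧸ (Ideal.span {(X : S⟦X⟧)} ^ 2),
      ∀ r, f r = Ideal.Quotient.mk _ (C (algebraMap R S r) + X * C (D r)) := by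
  refine ⟨AlgHom.ofLinearMap
    { toFun := fun r => Ideal.Quotient.mk _ (C (algebraMap R S r) + X * C (D r))
      map_add' := fun a b => by rw [← map_add]; congr 1; simp only [map_add]; ring
      map_smul' := fun b r => ?_ } ?_ fun a b => ?_, fun r => rfl⟩
  · have hb : C (algebraMap R S (b • r)) + X * C (D (b • r)) =
        b • (C (algebraMap R S r) + X * C (D r)) := by
      simp [Algebra.smul_def, IsScalarTower.algebraMap_apply B S S⟦X⟧,
        ← IsScalarTower.algebraMap_apply B R S]
      ring
    exact (congrArg (Ideal.Quotient.mkₐ B _) hb).trans (map_smul _ _ _)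
  · exact (congrArg (Ideal.Quotient.mk _) (by simp)).trans (map_one _)
  · change Ideal.Quotient.mk _ _ = Ideal.Quotient.mk _ _ * Ideal.Quotient.mk _ _
    rw [← map_mul, Ideal.Quotient.eq, Ideal.span_singleton_pow, Ideal.mem_span_singleton]
    refine ⟨- (C (D a) * C (D b)), ?_⟩
    simp only [Derivation.leibniz, Algebra.smul_def, map_add, map_mul]
    ring

lemma exists_algHom_powerSeries_of_derivation {B R S : Type*} [CommRing B] [CommRing R]
    [CommRing S] [Algebra B R] [Algebra B S] [Algebra R S] [IsScalarTower B R S]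
    [Algebra.FormallySmooth B R] (D : Derivation B R S) :
    ∃ θ : R →ₐ[B] S⟦X⟧,
      ∀ r, constantCoeff (θ r) = algebraMap R S r ∧ coeff 1 (θ r) = D r := by
  obtain ⟨f, hf⟩ := exists_algHom_quotient_span_X_sq_of_derivation D
  have := isAdicComplete_pow (Ideal.span {(X : S⟦X⟧)}) two_ne_zero
  obtain ⟨θ, hθ⟩ := Algebra.FormallySmooth.exists_mkₐ_comp_eq_of_isAdicComplete f
  refine ⟨θ, fun r => ?_⟩
  have hr : Ideal.Quotient.mk _ (θ r) = Ideal.Quotient.mk _ (C (algebraMap R S r) + X * C (D r)) :=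
    (DFunLike.congr_fun hθ r).trans (hf r)
  rw [Ideal.Quotient.eq, Ideal.span_singleton_pow, Ideal.mem_span_singleton, X_pow_dvd_iff] at hr
  have h0 := hr 0 (by simp)
  have h1 := hr 1 (by simp)
  simp only [coeff_zero_eq_constantCoeff, map_sub, map_add, constantCoeff_C, map_mul,
    constantCoeff_X, zero_mul, add_zero, sub_eq_zero] at h0
  simp only [map_sub, map_add, coeff_succ_C, coeff_succ_X_mul 0, coeff_zero_C, zero_add,
    sub_eq_zero] at h1
  exact ⟨h0, h1⟩

lemma isSMulRegular_of_derivation_apply_eq_one {B R : Type*} [CommRing B] [CommRing R]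
    [Algebra B R] [Algebra.FormallySmooth B R] [IsNoetherianRing R]
    (D : Derivation B R R) {x : R} (hD : D x = 1) (hx : x ∈ Ideal.jacobson (⊥ : Ideal R)) :
    IsSMulRegular R x := by
  let J : Ideal R := Ideal.span {x}
  let D' : Derivation B R (R ⧸ J) := (Algebra.linearMap R (R ⧸ J)).compDer D
  obtain ⟨θ, hθ⟩ := exists_algHom_powerSeries_of_derivation D'
  have hθx : ∃ u, θ x = X * u ∧ IsUnit u := by
    have h0 : constantCoeff (θ x) = 0 := by
      rw [(hθ x).1]
      exact Ideal.Quotient.eq_zero_iff_mem.mpr (Ideal.mem_span_singleton_self x)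
    obtain ⟨u, hu⟩ := X_dvd_iff.mpr h0
    refine ⟨u, hu, isUnit_iff_constantCoeff.mpr ?_⟩
    have h1 := (hθ x).2
    rw [hu, coeff_succ_X_mul 0] at h1
    rw [← coeff_zero_eq_constantCoeff_apply, h1]
    simp [D', hD]
  obtain ⟨u, hxu, hu⟩ := hθx
  have hreg : ∀ f, θ x * f = 0 → f = 0 := by
    intro f hf
    rwa [hxu, mul_assoc, ← mul_zero X, X_mul_inj, hu.mul_right_eq_zero] at hf
  have hker : RingHom.ker θ = ⊥ := by
    refine Submodule.eq_bot_of_le_smul_of_le_jacobson_bot J _ (IsNoetherian.noetherian _) ?_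
      ((Ideal.span_singleton_le_iff_mem _).mpr hx)
    intro y hy
    rw [RingHom.mem_ker] at hy
    have hyJ : y ∈ J := by
      rw [← Ideal.Quotient.eq_zero_iff_mem]
      simpa [hy] using ((hθ y).1).symm
    obtain ⟨z, rfl⟩ := Ideal.mem_span_singleton.mp hyJ
    refine Submodule.smul_mem_smul (Ideal.mem_span_singleton_self x) ?_
    exact hreg _ (by rw [← map_mul, hy])
  rw [isSMulRegular_iff_right_eq_zero_of_smul]
  intro y hy
  rw [← Ideal.mem_bot, ← hker]
  exact hreg _ (by rw [← map_mul, ← smul_eq_mul, hy, map_zero])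

end Derivation

lemma formallySmooth_quotient_span_singleton {B R : Type*} [CommRing B] [CommRing R] [Algebra B R]
    [Algebra.FormallySmooth B R] (D : Derivation B R R) {x : R} (hD : D x = 1) :
    Algebra.FormallySmooth B (R ⧸ Ideal.span {x}) := by
  refine .of_comp_surjective fun C _ _ I hI f => ?_
  obtain ⟨g, hg⟩ := Algebra.FormallySmooth.comp_surjective B R I hI
    (f.comp (Ideal.Quotient.mkₐ B (Ideal.span {x})))
  have hgf (r : R) : Ideal.Quotient.mk I (g r) = f (Ideal.Quotient.mk _ r) :=
    DFunLike.congr_fun hg r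
  have hx : g x ∈ I := by
    rw [← Ideal.Quotient.eq_zero_iff_mem, hgf,
      Ideal.Quotient.eq_zero_iff_mem.mpr (Ideal.mem_span_singleton_self x), map_zero]
  have hxx : g x * g x = 0 := by
    rw [← Ideal.mem_bot, ← hI, pow_two]
    exact Ideal.mul_mem_mul hx hx
  -- Correcting the lift along `D` makes it vanish on `x`.
  let g' : R →ₐ[B] C := AlgHom.ofLinearMap
    (g.toLinearMap - LinearMap.mulLeft B (g x) ∘ₗ g.toLinearMap ∘ₗ D.toLinearMap)
    (by simp) fun a b => by
      simp only [LinearMap.sub_apply, LinearMap.comp_apply, LinearMap.mulLeft_apply,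
        AlgHom.toLinearMap_apply, Derivation.coeFn_coe, Derivation.leibniz, smul_eq_mul,
        map_add, map_mul]
      linear_combination (- g (D a) * g (D b)) * hxx
  have hg' (r : R) : g' r = g r - g x * g (D r) := rfl
  refine ⟨Ideal.Quotient.liftₐ _ g' fun r hr => ?_, ?_⟩
  · obtain ⟨s, rfl⟩ := Ideal.mem_span_singleton.mp hr
    rw [map_mul, hg' x, hD, map_one, mul_one, sub_self, zero_mul]
  · refine Ideal.Quotient.algHom_ext _ (AlgHom.ext fun r => ?_)
    change Ideal.Quotient.mk I (g' r) = f (Ideal.Quotient.mk _ r)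
    rw [← hgf, hg', Ideal.Quotient.eq, sub_sub_cancel_left]
    exact I.neg_mem (I.mul_mem_right _ hx)

open IsLocalRing in
lemma exists_dual_apply_eq_one {R P : Type*} [CommRing R] [IsLocalRing R] [AddCommGroup P]
    [Module R P] [Module.Projective R P] {p : P}
    (hp : p ∉ maximalIdeal R • (⊤ : Submodule R P)) : ∃ f : Module.Dual R P, f p = 1 := by
  obtain ⟨s, hs⟩ := Module.projective_def'.mp (inferInstance : Module.Projective R P)
  obtain ⟨i, hi⟩ : ∃ i, IsUnit (s p i) := by
    by_contra! h
    refine hp ?_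
    rw [← LinearMap.id_apply (R := R) p, ← hs, LinearMap.comp_apply,
      Finsupp.linearCombination_apply]
    exact Submodule.sum_mem _ fun i _ => Submodule.smul_mem_smul (h i) trivial
  exact ⟨hi.unit⁻¹.1 • Finsupp.lapply i ∘ₗ s, hi.val_inv_mul⟩

open KaehlerDifferential in
lemma mem_mul_ker_of_D_mem_smul_top {B R S : Type*} [CommRing B] [CommRing R] [CommRing S]
    [Algebra B R] [Algebra B S] [Algebra R S] [IsScalarTower B R S] [Algebra.FormallySmooth B R]
    [Algebra.FormallySmooth B S] (hs : Function.Surjective (algebraMap R S)) {I : Ideal R}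
    (hI : RingHom.ker (algebraMap R S) ≤ I) {x : R} (hx : x ∈ RingHom.ker (algebraMap R S))
    (hDx : D B R x ∈ I • (⊤ : Submodule R Ω[R⁄B])) : x ∈ I * RingHom.ker (algebraMap R S) := by
  set K := RingHom.ker (algebraMap R S)
  obtain ⟨l, hl⟩ := (Algebra.FormallySmooth.iff_split_injection (R := B) hs).mp inferInstance
  let m : Ω[R⁄B] →ₗ[R] K.Cotangent := l ∘ₗ TensorProduct.mk R S Ω[R⁄B] 1
  have hm : m (D B R x) = K.toCotangent ⟨x, hx⟩ := LinearMap.congr_fun hl (K.toCotangent ⟨x, hx⟩)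
  have hxI : K.toCotangent ⟨x, hx⟩ ∈ (I • (⊤ : Submodule R K)).map K.toCotangent := by
    rw [Submodule.map_smul'', Submodule.map_top, Ideal.toCotangent_range, ← hm]
    refine Submodule.smul_mono le_rfl le_top (?_ : _ ∈ I • (⊤ : Submodule R Ω[R⁄B]).map m)
    rw [← Submodule.map_smul'']
    exact Submodule.mem_map_of_mem hDx
  obtain ⟨y, hy, hyx⟩ := hxI
  have hy' : (y : R) ∈ I * K := by
    simpa [Submodule.map_smul''] using Submodule.mem_map_of_mem (f := K.subtype) hy
  rw [Ideal.toCotangent_eq, pow_two] at hyx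
  simpa using Ideal.sub_mem _ hy' (Ideal.mul_mono_left hI hyx)

open IsLocalRing in
lemma exists_derivation_apply_eq_one {B R : Type*} [CommRing B] [CommRing R] [Algebra B R]
    [IsLocalRing R] [Algebra.FormallySmooth B R] {K : Ideal R} [Algebra.FormallySmooth B (R ⧸ K)]
    (hK : K ≠ ⊤) {x : R} (hx : x ∈ K) (hx' : x ∉ maximalIdeal R * K) :
    ∃ D : Derivation B R R, D x = 1 := by
  have hker : RingHom.ker (algebraMap R (R ⧸ K)) = K := Ideal.mk_ker
  have hDx : KaehlerDifferential.D B R x ∉ maximalIdeal R • (⊤ : Submodule R Ω[R⁄B]) := fun h =>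
    hx' (by
      simpa only [hker] using mem_mul_ker_of_D_mem_smul_top (S := R ⧸ K)
        Ideal.Quotient.mk_surjective (hker.trans_le (le_maximalIdeal hK)) (hker.ge hx) h)
  obtain ⟨f, hf⟩ := exists_dual_apply_eq_one hDx
  exact ⟨f.compDer (KaehlerDifferential.D B R), hf⟩
open IsLocalRing in
lemma exists_isSMulRegular_formallySmooth_quotient {B R : Type*} [CommRing B] [CommRing R]
    [Algebra B R] [IsLocalRing R] [IsNoetherianRing R] [Algebra.FormallySmooth B R] {K : Ideal R}
    [Algebra.FormallySmooth B (R ⧸ K)] (hbot : K ≠ ⊥) (htop : K ≠ ⊤) :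
    ∃ x ∈ K, x ≠ 0 ∧ IsSMulRegular R x ∧ Algebra.FormallySmooth B (R ⧸ Ideal.span {x}) := by
  have hjac : maximalIdeal R = Ideal.jacobson ⊥ := (jacobson_eq_maximalIdeal ⊥ bot_ne_top).symm
  obtain ⟨x, hx, hx'⟩ : ∃ x ∈ K, x ∉ maximalIdeal R * K := by
    by_contra! h
    exact hbot (Submodule.eq_bot_of_le_smul_of_le_jacobson_bot _ K (IsNoetherian.noetherian K) h
      hjac.le)
  obtain ⟨D, hD⟩ := exists_derivation_apply_eq_one (B := B) htop hx hx'
  exact ⟨x, hx, fun h => hx' (h ▸ zero_mem _),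
    isSMulRegular_of_derivation_apply_eq_one D hD (hjac ▸ le_maximalIdeal htop hx),
    formallySmooth_quotient_span_singleton D hD⟩

lemma exists_isSMulRegular_formallySmooth_quotient_sup {B R : Type*} [CommRing B] [CommRing R]
    [Algebra B R] [IsLocalRing R] [IsNoetherianRing R] {J K : Ideal R}
    [Algebra.FormallySmooth B (R ⧸ J)] [Algebra.FormallySmooth B (R ⧸ K)] (hJK : J < K)
    (htop : K ≠ ⊤) :
    ∃ x ∈ K, x ∉ J ∧ IsSMulRegular (R ⧸ J) x ∧
      Algebra.FormallySmooth B (R ⧸ J ⊔ Ideal.span {x}) := by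
  have : Nontrivial (R ⧸ J) := Ideal.Quotient.nontrivial_iff.mpr (ne_top_of_le_ne_top htop hJK.le)
  have : IsLocalRing (R ⧸ J) := .of_surjective' (Ideal.Quotient.mk J) Ideal.Quotient.mk_surjective
  have : Algebra.FormallySmooth B ((R ⧸ J) ⧸ K.map (Ideal.Quotient.mkₐ B J)) :=
    .of_equiv (DoubleQuot.quotQuotEquivQuotOfLEₐ B hJK.le).symm
  have hmem (r : R) : Ideal.Quotient.mk J r ∈ K.map (Ideal.Quotient.mkₐ B J) ↔ r ∈ K :=
    Ideal.mem_quotient_iff_mem hJK.le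
  have htop' : K.map (Ideal.Quotient.mkₐ B J) ≠ ⊤ := by
    rwa [Ne, Ideal.eq_top_iff_one, ← map_one (Ideal.Quotient.mk J), hmem, ← Ideal.eq_top_iff_one]
  have hbot' : K.map (Ideal.Quotient.mkₐ B J) ≠ ⊥ := fun h =>
    hJK.not_ge fun r hr =>
      Ideal.Quotient.eq_zero_iff_mem.mp (Ideal.mem_bot.mp (h ▸ (hmem r).mpr hr))
  obtain ⟨x, hxK, hx0, hreg, hsm⟩ :=
    exists_isSMulRegular_formallySmooth_quotient (B := B) hbot' htop'
  obtain ⟨x, rfl⟩ := Ideal.Quotient.mk_surjective x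
  rw [← Set.image_singleton, ← Ideal.map_span] at hsm
  have : Algebra.FormallySmooth B ((R ⧸ J) ⧸ (Ideal.span {x}).map (Ideal.Quotient.mkₐ B J)) := hsm
  exact ⟨x, (hmem x).mp hxK, fun h => hx0 (Ideal.Quotient.eq_zero_iff_mem.mpr h), hreg,
    .of_equiv (DoubleQuot.quotQuotEquivQuotSupₐ B J (Ideal.span {x}))⟩

open RingTheory.Sequence in
theorem exists_isWeaklyRegular_ofList_eq (B : Type*) {R : Type*} [CommRing B] [CommRing R]
    [Algebra B R] [IsLocalRing R] [IsNoetherianRing R] [Algebra.FormallySmooth B R] {K : Ideal R}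
    [Algebra.FormallySmooth B (R ⧸ K)] (htop : K ≠ ⊤) :
    ∃ rs : List R, IsWeaklyRegular R rs ∧ K = Ideal.ofList rs := by
  let 𝒥 : Set (Ideal R) := {J | J ≤ K ∧ Algebra.FormallySmooth B (R ⧸ J) ∧
    ∃ rs : List R, IsWeaklyRegular R rs ∧ J = Ideal.ofList rs}
  have hne : 𝒥.Nonempty := ⟨⊥, bot_le,
    .of_equiv (AlgEquiv.quotientBot B R).symm, [], .nil _ _, by simp⟩
  obtain ⟨J, ⟨hJK, hJ, rs, hrs, hJrs⟩, hmax⟩ := set_has_maximal_iff_noetherian.mpr ‹_› 𝒥 hne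
  obtain rfl | hlt := hJK.eq_or_lt
  · exact ⟨rs, hrs, hJrs⟩
  obtain ⟨x, hxK, hxJ, hreg, hsm⟩ :=
    exists_isSMulRegular_formallySmooth_quotient_sup (B := B) hlt htop
  refine absurd ?_ (hmax (J ⊔ Ideal.span {x}) ⟨?_, hsm, rs ++ [x], ?_, ?_⟩)
  · simpa [left_lt_sup] using hxJ
  · exact sup_le hJK ((Ideal.span_singleton_le_iff_mem _).mpr hxK)
  · rw [isWeaklyRegular_append_iff, isWeaklyRegular_singleton_iff, ← hJrs, smul_eq_mul,
      Ideal.mul_top]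
    exact ⟨hrs, hreg⟩
  · rw [Ideal.ofList_append, Ideal.ofList_singleton, hJrs]

theorem isLocalCompleteIntersection_of_formallySmooth {B D E : Type u} [CommRing B] [CommRing D]
    [CommRing E] [Algebra B D] [Algebra B E] [IsNoetherianRing D] [Algebra.FormallySmooth B D]
    [Algebra.FormallySmooth B E] (μ : D →ₐ[B] E) (hμ : Function.Surjective μ) :
    (μ : D →+* E).IsLocalCompleteIntersection := by
  intro q hq
  let p := q.comap (μ : D →+* E)
  have : p.IsPrime := hq.comap _
  let φ : Localization.AtPrime p →ₐ[B] Localization.AtPrime q := Localization.localAlgHom p q μ rfl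
  have hφ : Function.Surjective φ :=
    RingHom.surjective_localRingHom_of_surjective (μ : D →+* E) hμ _
  have : Algebra.FormallySmooth D (Localization.AtPrime p) := .of_isLocalization p.primeCompl
  have : Algebra.FormallySmooth B (Localization.AtPrime p) := .comp B D _
  have : Algebra.FormallySmooth E (Localization.AtPrime q) := .of_isLocalization q.primeCompl
  have : Algebra.FormallySmooth B (Localization.AtPrime q) := .comp B E _
  have : Algebra.FormallySmooth B (Localization.AtPrime p ⧸ RingHom.ker φ) :=
    .of_equiv (Ideal.quotientKerAlgEquivOfSurjective hφ).symm
  obtain ⟨rs, hrs, hker⟩ := exists_isWeaklyRegular_ofList_eq B (RingHom.ker_ne_top φ)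
  refine ⟨rs, ⟨hrs, ?_⟩, hker⟩
  rw [← hker, smul_eq_mul, Ideal.mul_top]
  exact (RingHom.ker_ne_top φ).symm

open RingTheory.Sequence in
lemma ker_inf_ofList_smul_top_le {R N M : Type*} [CommRing R] [AddCommGroup N] [AddCommGroup M]
    [Module R N] [Module R M] {f : N →ₗ[R] M} (hf : Function.Surjective f) {rs : List R}
    (hrs : IsWeaklyRegular M rs) :
    LinearMap.ker f ⊓ Ideal.ofList rs • ⊤ ≤ Ideal.ofList rs • LinearMap.ker f := by
  intro z hz
  have hexact := map_first_exact_on_four_term_right_exact_of_isSMulRegular_last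
    (f₁ := (0 : Unit →ₗ[R] LinearMap.ker f)) (f₂ := (LinearMap.ker f).subtype) (f₃ := f)
    (fun x => by simp [eq_comm]) (LinearMap.exact_subtype_ker_map f) hf hrs
  have hzL : (⟨z, hz.1⟩ : LinearMap.ker f) ∈
      Ideal.ofList rs • (⊤ : Submodule R (LinearMap.ker f)) := by
    rw [← Submodule.Quotient.mk_eq_zero]
    obtain ⟨y, hy⟩ := (hexact (Submodule.Quotient.mk ⟨z, hz.1⟩)).mp
      ((Submodule.Quotient.mk_eq_zero _).mpr hz.2)
    obtain ⟨y, rfl⟩ := Submodule.Quotient.mk_surjective _ y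
    rw [← hy, Submodule.mapQ_apply, LinearMap.zero_apply, Submodule.Quotient.mk_zero]
  simpa [Submodule.map_smul''] using Submodule.mem_map_of_mem (f := (LinearMap.ker f).subtype) hzL

open RingTheory.Sequence in
lemma ker_inf_comap_ofList_sq_le {N R : Type*} [CommRing N] [CommRing R] {f : N →+* R}
    (hf : Function.Surjective f) {rs : List R} (hrs : IsWeaklyRegular R rs) :
    RingHom.ker f ⊓ (Ideal.ofList rs).comap f ^ 2 ≤ RingHom.ker f * (Ideal.ofList rs).comap f := by
  let := f.toAlgebra
  obtain ⟨xs, rfl⟩ := List.map_surjective_iff.mpr hf rs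
  set L := RingHom.ker f
  set X := Ideal.ofList xs
  have hX : L ⊓ X ≤ L * X := by
    have h := ker_inf_ofList_smul_top_le (f := Algebra.linearMap N R) hf
      ((isWeaklyRegular_map_algebraMap_iff R R xs).mp hrs)
    rw [smul_eq_mul, Ideal.mul_top, smul_eq_mul, mul_comm] at h
    exact h
  rw [← Ideal.map_ofList, Ideal.comap_map_of_surjective' _ hf, sup_comm]
  calc
    L ⊓ (L ⊔ X) ^ 2 ≤ (L * (L ⊔ X) ⊔ X) ⊓ L := by
      rw [inf_comm, pow_two, Ideal.sup_mul]
      exact inf_le_inf_right _ (sup_le_sup le_rfl Ideal.mul_le_left)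
    _ = L * (L ⊔ X) ⊔ L ⊓ X := by rw [sup_inf_assoc_of_le X Ideal.mul_le_left, inf_comm]
    _ ≤ L * (L ⊔ X) := sup_le le_rfl (hX.trans (Ideal.mul_mono_right le_sup_right))

lemma map_primeCompl_comap {N D : Type*} [CommRing N] [CommRing D] {f : N →+* D}
    (hf : Function.Surjective f) (p : Ideal D) [p.IsPrime] :
    (p.comap f).primeCompl.map f = p.primeCompl :=
  Submonoid.map_comap_eq_of_surjective hf p.primeCompl

lemma ker_localRingHom {N D : Type*} [CommRing N] [CommRing D] {f : N →+* D}
    (hf : Function.Surjective f) (p : Ideal D) [p.IsPrime] :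
    RingHom.ker (Localization.localRingHom (p.comap f) p f rfl) =
      (RingHom.ker f).map (algebraMap N (Localization.AtPrime (p.comap f))) :=
  IsLocalization.ker_map (Localization.AtPrime p) f (map_primeCompl_comap hf p)
lemma map_ker_inf_ker_comp_sq_le {N D B : Type u} [CommRing N] [CommRing D] [CommRing B]
    {f : N →+* D} (hf : Function.Surjective f) {μ : D →+* B} (hμ : Function.Surjective μ)
    (h : μ.IsLocalCompleteIntersection) (q : Ideal B) [hq : q.IsPrime] :
    (RingHom.ker f ⊓ RingHom.ker (μ.comp f) ^ 2).map
        (algebraMap N (Localization.AtPrime ((q.comap μ).comap f))) ≤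
      (RingHom.ker f * RingHom.ker (μ.comp f)).map (algebraMap N _) := by
  obtain ⟨rs, hrs, hker⟩ := h q hq
  have hfs := RingHom.surjective_localRingHom_of_surjective f hf (q.comap μ)
  have hK : (RingHom.ker (μ.comp f)).map
      (algebraMap N (Localization.AtPrime ((q.comap μ).comap f))) = (Ideal.ofList rs).comap
        (Localization.localRingHom ((q.comap μ).comap f) (q.comap μ) f rfl) := by
    rw [← hker, RingHom.comap_ker, ← Localization.localRingHom_comp _ _ q f rfl μ rfl]
    exact (ker_localRingHom (f := μ.comp f) (hμ.comp hf) q).symm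
  have hle := ker_inf_comap_ofList_sq_le hfs hrs.toIsWeaklyRegular
  rw [← hK, ker_localRingHom hf, ← Ideal.map_pow, ← Ideal.map_mul] at hle
  exact (Ideal.map_inf_le ..).trans hle

lemma ker_inf_ker_comp_sq_le {N D B : Type u} [CommRing N] [CommRing D] [CommRing B]
    {f : N →+* D} (hf : Function.Surjective f) {μ : D →+* B} (hμ : Function.Surjective μ)
    (h : μ.IsLocalCompleteIntersection) :
    RingHom.ker f ⊓ RingHom.ker (μ.comp f) ^ 2 ≤ RingHom.ker f * RingHom.ker (μ.comp f) := by
  refine Ideal.le_of_localization_maximal fun n hn => ?_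
  by_cases hKn : RingHom.ker (μ.comp f) ≤ n
  · have hs : Function.Surjective (μ.comp f) := hμ.comp hf
    obtain ⟨q, hq, rfl⟩ : ∃ q : Ideal B, q.IsPrime ∧ n = (q.comap μ).comap f := by
      refine ⟨n.map (μ.comp f), Ideal.map_isPrime_of_surjective hs hKn, ?_⟩
      rw [Ideal.comap_comap, Ideal.comap_map_of_surjective' _ hs, sup_eq_left.mpr hKn]
    exact map_ker_inf_ker_comp_sq_le hf hμ h q
  · rw [Ideal.map_mul, IsLocalization.AtPrime.map_eq_top_of_not_le _ hKn, Ideal.mul_top]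
    exact Ideal.map_mono inf_le_left

section

open TensorProduct KaehlerDifferential

lemma derivation_apply_eq_zero_of_one_tmul_D_eq_zero {A P B M : Type*} [CommRing A]
    [CommRing P] [CommRing B] [Algebra A P] [Algebra P B] [AddCommGroup M] [Module A M]
    [Module P M] [Module B M] [IsScalarTower P B M] [IsScalarTower A P M] (d : Derivation A P M)
    {j : P}
    (hj : (1 : B) ⊗ₜ[P] D A P j = 0) : d j = 0 := by
  simpa using congrArg (d.liftKaehlerDifferential.liftBaseChange B) hj

lemma apply_eq_of_one_tmul_D_eq_zero {A P B Q : Type*} [CommRing A] [CommRing P] [CommRing B]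
    [CommRing Q] [Algebra A P] [Algebra A B] [Algebra P B] [IsScalarTower A P B] [Algebra A Q]
    {I : Ideal Q} (hI : I ^ 2 = ⊥) (i : P →ₐ[A] Q) (t : B →ₐ[A] Q)
    (h : ∀ p, i p - t (algebraMap P B p) ∈ I) {j : P} (hj : (1 : B) ⊗ₜ[P] D A P j = 0) :
    i j = t (algebraMap P B j) := by
  algebraize [t.toRingHom, t.toRingHom.comp (algebraMap P B)]
  have : IsScalarTower A P Q := .of_algebraMap_eq fun a => by
    simp [RingHom.algebraMap_toAlgebra, ← IsScalarTower.algebraMap_apply]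
  have hlift : (Ideal.Quotient.mkₐ A I).comp i = IsScalarTower.toAlgHom A P (Q ⧸ I) :=
    AlgHom.ext fun p => Ideal.Quotient.eq.mpr (h p)
  have hd := derivation_apply_eq_zero_of_one_tmul_D_eq_zero
    (derivationToSquareZeroOfLift I hI i hlift) hj
  rw [← sub_eq_zero]
  exact congrArg Subtype.val hd

lemma injective_liftBaseChange_linearMap_comp_subtype {P : Type*} (N : Type*) [CommRing P]
    [CommRing N] [Algebra P N] [Module.Flat P N] (J : Ideal P) :
    Function.Injective ((Algebra.linearMap P N ∘ₗ J.subtype).liftBaseChange N) := by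
  have h : (((Algebra.linearMap P N ∘ₗ J.subtype).liftBaseChange N).restrictScalars P) =
      (TensorProduct.rid P N).toLinearMap ∘ₗ J.subtype.lTensor N := by
    ext n x
    simp [Algebra.smul_def, mul_comm]
  rw [← LinearMap.coe_restrictScalars P, h]
  exact (TensorProduct.rid P N).injective.comp
    (Module.Flat.lTensor_preserves_injective_linearMap _ J.injective_subtype)

lemma mem_sq_of_mem_map_mul_ker {P N : Type*} [CommRing P] [CommRing N] [Algebra P N]
    [Module.Flat P N] {J : Ideal P} (g : N →ₐ[P] P ⧸ J) {j : P} (hjJ : j ∈ J)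
    (hj : algebraMap P N j ∈ J.map (algebraMap P N) * RingHom.ker g) : j ∈ J ^ 2 := by
  let Φ : N ⊗[P] J →ₗ[N] N := (Algebra.linearMap P N ∘ₗ J.subtype).liftBaseChange N
  let Ψ : N ⊗[P] J →ₗ[P] J.Cotangent :=
    (J.toCotangent.liftBaseChange (P ⧸ J)).restrictScalars P ∘ₗ g.toLinearMap.rTensor J
  have hΦ : LinearMap.range Φ = J.map (algebraMap P N) := by
    rw [LinearMap.range_liftBaseChange, LinearMap.coe_range, LinearMap.coe_comp, Set.range_comp,
      Submodule.coe_subtype, Subtype.range_coe]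
    rfl
  have hΨ (k : N) (hk : k ∈ RingHom.ker g) (t : N ⊗[P] J) : Ψ (k • t) = 0 := by
    rw [RingHom.mem_ker] at hk
    induction t with
    | zero => simp
    | tmul n x => simp [Ψ, smul_tmul', hk]
    | add s t hs ht => rw [smul_add, map_add, hs, ht, add_zero]
  have hlift (z : N) (hz : z ∈ J.map (algebraMap P N) * RingHom.ker g) :
      ∃ t, Φ t = z ∧ Ψ t = 0 := by
    induction hz using Submodule.mul_induction_on' with
    | mem_mul_mem a ha k hk =>
      obtain ⟨t, rfl⟩ := hΦ.ge ha
      exact ⟨k • t, by rw [map_smul, smul_eq_mul, mul_comm], hΨ k hk t⟩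
    | add y _ z _ hy hz =>
      obtain ⟨s, rfl, hs⟩ := hy
      obtain ⟨t, rfl, ht⟩ := hz
      exact ⟨s + t, map_add _ _ _, by rw [map_add, hs, ht, add_zero]⟩
  obtain ⟨t, hΦt, hΨt⟩ := hlift _ hj
  obtain rfl : t = 1 ⊗ₜ ⟨j, hjJ⟩ :=
    injective_liftBaseChange_linearMap_comp_subtype N J (hΦt.trans (by simp))
  exact (J.toCotangent_eq_zero ⟨j, hjJ⟩).mp (by simpa [Ψ] using hΨt)

lemma tmul_one_mem_ker_sq {A P B : Type*} [CommRing A] [CommRing P] [CommRing B]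
    [Algebra A P] [Algebra A B] [Algebra P B] [IsScalarTower A P B] {j : P}
    (hj : j ∈ RingHom.ker (algebraMap P B)) (hDj : (1 : B) ⊗ₜ[P] D A P j = 0) :
    j ⊗ₜ[A] (1 : B) ∈
      RingHom.ker
        (Algebra.TensorProduct.productLeftAlgHom (Algebra.ofId P B) (AlgHom.id A B)) ^ 2 := by
  set K := RingHom.ker (Algebra.TensorProduct.productLeftAlgHom (Algebra.ofId P B) (AlgHom.id A B))
  rw [← Ideal.Quotient.eq_zero_iff_mem]
  have h := apply_eq_of_one_tmul_D_eq_zero K.cotangentIdeal_square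
    ((Ideal.Quotient.mkₐ A (K ^ 2)).comp Algebra.TensorProduct.includeLeft)
    ((Ideal.Quotient.mkₐ A (K ^ 2)).comp Algebra.TensorProduct.includeRight) (fun p => by
      simp only [AlgHom.comp_apply]
      rw [← map_sub]
      refine Ideal.mk_mem_cotangentIdeal.mpr ?_
      simp [K, RingHom.mem_ker, Algebra.ofId_apply]) hDj
  rw [(hj : algebraMap P B j = 0), map_zero] at h
  exact h

theorem kerCotangentToTensor_injective_of_isLocalCompleteIntersection {A : Type*} {P B : Type u}
    [CommRing A] [CommRing P] [CommRing B] [Algebra A P] [Algebra A B] [Algebra P B]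
    [IsScalarTower A P B] [Module.Flat A B]
    (hs : Function.Surjective (algebraMap P B))
    (hμ : (Algebra.TensorProduct.lmul' A (S := B)).toRingHom.IsLocalCompleteIntersection) :
    Function.Injective (kerCotangentToTensor A P B) := by
  rw [injective_iff_map_eq_zero]
  intro x hx
  obtain ⟨⟨j, hj⟩, rfl⟩ := Ideal.toCotangent_surjective _ x
  rw [kerCotangentToTensor_toCotangent] at hx
  let φ : P ⊗[A] B →ₐ[A] B ⊗[A] B :=
    Algebra.TensorProduct.map (IsScalarTower.toAlgHom A P B) (AlgHom.id A B)
  have hφ : Function.Surjective φ := TensorProduct.map_surjective hs Function.surjective_id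
  have hkerφ : RingHom.ker φ = (RingHom.ker (algebraMap P B)).map (algebraMap P (P ⊗[A] B)) :=
    Algebra.TensorProduct.rTensor_ker (IsScalarTower.toAlgHom A P B) hs
  let g := Algebra.TensorProduct.productLeftAlgHom (Algebra.ofId P B) (AlgHom.id A B)
  have hg : (Algebra.TensorProduct.lmul' A (S := B)).toRingHom.comp φ.toRingHom = g.toRingHom :=
    congrArg AlgHom.toRingHom (Algebra.TensorProduct.productMap_eq_comp_map
      (IsScalarTower.toAlgHom A P B) (AlgHom.id A B)).symm
  have hjφ : j ⊗ₜ[A] (1 : B) ∈ RingHom.ker φ := hkerφ ▸ Ideal.mem_map_of_mem _ hj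
  have hjφg : j ⊗ₜ[A] (1 : B) ∈ RingHom.ker φ * RingHom.ker g := by
    have hle := ker_inf_ker_comp_sq_le (f := φ.toRingHom) hφ (fun b => ⟨b ⊗ₜ 1, by simp⟩) hμ
    rw [hg] at hle
    exact hle ⟨hjφ, tmul_one_mem_ker_sq hj hx⟩
  let e := Ideal.quotientKerAlgEquivOfSurjective (f := Algebra.ofId P B) hs
  have hker : RingHom.ker g = RingHom.ker (e.symm.toAlgHom.comp g) := by
    ext; simp [RingHom.mem_ker]
  rw [Ideal.toCotangent_eq_zero]
  exact mem_sq_of_mem_map_mul_ker (e.symm.toAlgHom.comp g) hj (hker ▸ hkerφ ▸ hjφg)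

end

open RingTheory.Sequence in
lemma mem_span_range_of_sum_mul_eq_zero {R : Type*} [CommRing R] {n : ℕ} {x : Fin n → R}
    (hx : IsWeaklyRegular R (List.ofFn x)) {a : Fin n → R} (ha : ∑ i, a i * x i = 0) (i : Fin n) :
    a i ∈ Ideal.span (Set.range x) := by
  induction n with
  | zero => exact i.elim0
  | succ n ih =>
    set X := Ideal.span (Set.range fun j : Fin n => x j.castSucc)
    have hX : X ≤ Ideal.span (Set.range x) :=
      Ideal.span_mono (Set.range_comp_subset_range Fin.castSucc x)
    rw [List.ofFn_succ', List.concat_eq_append, isWeaklyRegular_append_iff,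
      isWeaklyRegular_singleton_iff] at hx
    obtain ⟨hinit, hlast⟩ := hx
    have hofList : Ideal.ofList (List.ofFn fun j : Fin n => x j.castSucc) = X := by
      simp only [Ideal.ofList, List.mem_ofFn', X]
      rfl
    rw [smul_eq_mul, Ideal.mul_top, hofList] at hlast
    rw [Fin.sum_univ_castSucc] at ha
    have halast : a (Fin.last n) ∈ X := by
      rw [← Ideal.Quotient.eq_zero_iff_mem]
      refine hlast.right_eq_zero_of_smul ?_
      rw [← Ideal.Quotient.mk_eq_mk, ← Submodule.Quotient.mk_smul, smul_eq_mul, mul_comm,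
        Submodule.Quotient.mk_eq_zero, ← neg_eq_of_add_eq_zero_right ha]
      exact X.neg_mem (X.sum_mem fun j _ => X.mul_mem_left _ (Ideal.subset_span ⟨j, rfl⟩))
    obtain ⟨c, hc⟩ := Ideal.mem_span_range_iff_exists_fun.mp halast
    have hac (j : Fin n) : a j.castSucc + c j * x (Fin.last n) ∈ X := by
      refine ih hinit (a := fun j => a j.castSucc + c j * x (Fin.last n)) ?_ j
      rw [← ha, ← hc, Finset.sum_mul, ← Finset.sum_add_distrib]
      exact Finset.sum_congr rfl fun j _ => by ring
    induction i using Fin.lastCases with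
    | last => exact hX halast
    | cast j =>
      exact (Ideal.add_mem_iff_left _ (Ideal.mul_mem_left _ _
        (Ideal.subset_span (Set.mem_range_self _)))).mp (hX (hac j))

open RingTheory.Sequence in
lemma free_cotangent_ofList {R : Type*} [CommRing R] {rs : List R} (hrs : IsWeaklyRegular R rs) :
    Module.Free (R ⧸ Ideal.ofList rs) (Ideal.ofList rs).Cotangent := by
  set K := Ideal.ofList rs
  have hK : Ideal.span (Set.range rs.get) = K := by rw [Set.range_list_get]
  have hmem (i : Fin rs.length) : rs.get i ∈ K := hK.le (Ideal.subset_span ⟨i, rfl⟩)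
  have hsum (a : Fin rs.length → R) :
      ∑ i, (Ideal.Quotient.mk K (a i)) • K.toCotangent ⟨rs.get i, hmem i⟩ =
        K.toCotangent ⟨∑ i, a i * rs.get i, K.sum_mem fun i _ => K.mul_mem_left _ (hmem i)⟩ := by
    simp only [← Ideal.Quotient.algebraMap_eq, algebraMap_smul, ← map_smul, ← map_sum]
    congr 1
    exact Subtype.ext (by simp)
  refine .of_basis (Module.Basis.mk (v := fun i => K.toCotangent ⟨rs.get i, hmem i⟩) ?_ ?_)
  · rw [Fintype.linearIndependent_iff]
    intro g hg i
    obtain ⟨a, rfl⟩ : ∃ a, g = fun i => Ideal.Quotient.mk K (a i) :=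
      ⟨fun i => (g i).out, funext fun i => (Ideal.Quotient.mk_out _).symm⟩
    rw [hsum, Ideal.toCotangent_eq_zero, pow_two, ← smul_eq_mul] at hg
    nth_rw 2 [← hK] at hg
    obtain ⟨c, hcK, hc⟩ := (Submodule.mem_ideal_smul_span_iff_exists_sum K rs.get _).mp hg
    rw [c.sum_fintype (fun i c => c • rs.get i) fun _ => zero_smul _ _] at hc
    rw [Ideal.Quotient.eq_zero_iff_mem, ← sub_add_cancel (a i) (c i),
      Ideal.add_mem_iff_left _ (hcK i), ← hK]
    refine mem_span_range_of_sum_mul_eq_zero (a := fun i => a i - c i) (by rwa [List.ofFn_get]) ?_ i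
    simpa [sub_mul, sub_eq_zero] using hc.symm
  · intro y _
    obtain ⟨⟨k, hk⟩, rfl⟩ := Ideal.toCotangent_surjective _ y
    obtain ⟨a, rfl⟩ := Ideal.mem_span_range_iff_exists_fun.mp (hK.ge hk)
    rw [← hsum]
    exact sum_mem fun i _ => Submodule.smul_mem _ _ (Submodule.subset_span ⟨i, rfl⟩)

lemma isLocalizedModule_mapCotangent {D R : Type*} [CommRing D] [CommRing R] [Algebra D R]
    (S : Submonoid D) [IsLocalization S R] {I : Ideal D} {K : Ideal R}
    (hIK : I.map (algebraMap D R) = K) (hle : I ≤ K.comap (Algebra.ofId D R)) :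
    IsLocalizedModule S (I.mapCotangent K (Algebra.ofId D R) hle) where
  map_units s := by
    have := (IsLocalization.map_units R s).map (Algebra.lsmul D D K.Cotangent)
    rwa [AlgHom.commutes] at this
  surj y := by
    obtain ⟨⟨k, hk⟩, rfl⟩ := Ideal.toCotangent_surjective _ y
    obtain ⟨⟨i, s⟩, hs⟩ := (IsLocalization.mem_map_algebraMap_iff S R).mp (hIK.ge hk)
    refine ⟨⟨I.toCotangent i, s⟩, ?_⟩
    rw [Ideal.mapCotangent_toCotangent, Submonoid.smul_def, ← algebraMap_smul R, ← map_smul]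
    congr 1
    ext
    exact (mul_comm _ _).trans hs
  exists_of_eq {x y} h := by
    obtain ⟨i, rfl⟩ := Ideal.toCotangent_surjective _ x
    obtain ⟨j, rfl⟩ := Ideal.toCotangent_surjective _ y
    rw [Ideal.mapCotangent_toCotangent, Ideal.mapCotangent_toCotangent, Ideal.toCotangent_eq,
      ← map_sub, ← hIK, ← Ideal.map_pow] at h
    obtain ⟨s, hs, hsz⟩ := (IsLocalization.algebraMap_mem_map_algebraMap_iff S R _ _).mp h
    refine ⟨⟨s, hs⟩, ?_⟩
    rw [Submonoid.smul_def, Submonoid.smul_def, ← map_smul, ← map_smul, Ideal.toCotangent_eq]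
    simpa [mul_sub] using hsz

lemma smul_cotangent_of_ker_le_comap {B D R : Type*} [CommRing B] [CommRing D] [CommRing R]
    [Algebra B D] [Algebra D R] [Algebra B R] [IsScalarTower B D R] {μ : D →ₐ[B] B} {K : Ideal R}
    (hK : RingHom.ker μ ≤ K.comap (algebraMap D R)) (d : D) (x : K.Cotangent) :
    μ d • x = d • x := by
  have hd : algebraMap B D (μ d) - d ∈ RingHom.ker μ := by simp [RingHom.mem_ker]
  rw [← algebraMap_smul D, ← sub_eq_zero, ← sub_smul, ← algebraMap_smul R]
  exact Ideal.Cotangent.smul_eq_zero_of_mem (Ideal.mem_comap.mp (hK hd)) x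

lemma isLocalizedModule_mapCotangent_ker {B D R : Type*} [CommRing B] [CommRing D] [CommRing R]
    [Algebra B D] [Algebra D R] [Algebra B R] [IsScalarTower B D R] (S : Submonoid D)
    [IsLocalization S R] (μ : D →ₐ[B] B) {K : Ideal R}
    (hK : (RingHom.ker μ).map (algebraMap D R) = K)
    (hle : RingHom.ker μ ≤ K.comap (IsScalarTower.toAlgHom B D R)) :
    IsLocalizedModule (S.map μ)
      ((RingHom.ker μ).mapCotangent K (IsScalarTower.toAlgHom B D R) hle) := by
  let := μ.toAlgebra
  have : IsScalarTower D B (RingHom.ker μ).Cotangent :=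
    .of_algebraMap_smul (smul_cotangent_of_ker_le_comap (R := D) le_rfl)
  have : IsScalarTower D B K.Cotangent := .of_algebraMap_smul (smul_cotangent_of_ker_le_comap hle)
  have : IsLocalizedModule S (((RingHom.ker μ).mapCotangent K (IsScalarTower.toAlgHom B D R)
    hle).restrictScalars D) := isLocalizedModule_mapCotangent S hK hle
  exact IsLocalizedModule.of_restrictScalars S _

lemma isLocalization_quotient_map_ker {B D R : Type*} [CommRing B] [CommRing D] [CommRing R]
    [Algebra B D] [Algebra D R] [Algebra B R] [IsScalarTower B D R] (S : Submonoid D)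
    [IsLocalization S R] (μ : D →ₐ[B] B) {K : Ideal R}
    (hK : (RingHom.ker μ).map (algebraMap D R) = K) :
    IsLocalization (S.map μ) (R ⧸ K) := by
  refine IsLocalization.of_surjective S R (μ : D →+* B) (fun b => ⟨_, μ.commutes b⟩)
    (Ideal.Quotient.mk K) Ideal.Quotient.mk_surjective ?_ ?_
  · ext d
    have hd : d - algebraMap B D (μ d) ∈ RingHom.ker μ := by simp [RingHom.mem_ker]
    refine Ideal.Quotient.eq.mpr ?_
    rw [AlgHom.coe_toRingHom, IsScalarTower.algebraMap_apply B D R, ← map_sub, ← hK]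
    exact Ideal.mem_map_of_mem _ hd
  · rw [Ideal.mk_ker]
    exact hK.ge

lemma finite_cotangent_ker {B D : Type*} [CommRing B] [CommRing D] [Algebra B D] (μ : D →ₐ[B] B)
    (hμ : (RingHom.ker μ).FG) : Module.Finite B (RingHom.ker μ).Cotangent := by
  let := μ.toAlgebra
  have : IsScalarTower D B (RingHom.ker μ).Cotangent :=
    .of_algebraMap_smul (smul_cotangent_of_ker_le_comap (R := D) le_rfl)
  have : Module.Finite D (RingHom.ker μ) := .of_fg hμ
  have : Module.Finite D (RingHom.ker μ).Cotangent :=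
    .of_surjective _ (RingHom.ker μ).toCotangent_surjective
  exact .of_restrictScalars_finite D B _

theorem projective_cotangent_ker {B D : Type u} [CommRing B] [CommRing D] [Algebra B D]
    (μ : D →ₐ[B] B) (hμ : (μ : D →+* B).IsLocalCompleteIntersection)
    [Module.FinitePresentation B (RingHom.ker μ).Cotangent] :
    Module.Projective B (RingHom.ker μ).Cotangent := by
  have hs : Function.Surjective μ := fun b => ⟨_, μ.commutes b⟩
  let K (q : Ideal B) [q.IsMaximal] : Ideal (Localization.AtPrime (q.comap (μ : D →+* B))) :=
    (RingHom.ker μ).map (algebraMap D _)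
  have hprime (q : Ideal B) [q.IsMaximal] :
      (q.comap (μ : D →+* B)).primeCompl.map (μ : D →+* B) = q.primeCompl :=
    map_primeCompl_comap hs q
  have hloc (q : Ideal B) [q.IsMaximal] : IsLocalization.AtPrime (_ ⧸ K q) q := by
    rw [IsLocalization.AtPrime, ← hprime q]
    exact isLocalization_quotient_map_ker _ μ rfl
  have hlocM (q : Ideal B) [q.IsMaximal] : IsLocalizedModule q.primeCompl
      ((RingHom.ker μ).mapCotangent (K q) (IsScalarTower.toAlgHom B D _) Ideal.le_comap_map) := by
    rw [← hprime q]
    exact isLocalizedModule_mapCotangent_ker _ μ rfl _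
  have htower (q : Ideal B) [q.IsMaximal] : IsScalarTower B (_ ⧸ K q) (K q).Cotangent :=
    .to₁₃₄ B (Localization.AtPrime (q.comap (μ : D →+* B))) _ _
  refine @Module.projective_of_localization_maximal' B (RingHom.ker μ).Cotangent _ _ _
    (fun q _ => _ ⧸ K q) _ _ hloc (fun q _ => (K q).Cotangent) _ _ _ htower
    (fun q _ => (RingHom.ker μ).mapCotangent (K q) (IsScalarTower.toAlgHom B D _)
      Ideal.le_comap_map) hlocM (fun q hq => ?_) _
  obtain ⟨rs, hrs, hker⟩ := hμ q hq.isPrime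
  have hK : K q = Ideal.ofList rs := (ker_localRingHom hs q).symm.trans hker
  rw [hK]
  have := free_cotangent_ofList hrs.toIsWeaklyRegular
  infer_instance

open TensorProduct in
theorem formallySmooth_iff_diagonal_isLocalCompleteIntersection_general
    {A B : Type u} [CommRing A] [CommRing B] [Algebra A B] [IsNoetherianRing (B ⊗[A] B)]
    [Module.Flat A B] :
    Algebra.FormallySmooth A B ↔
      (Algebra.TensorProduct.lmul' A (S := B)).toRingHom.IsLocalCompleteIntersection := by
  let μ : B ⊗[A] B →ₐ[B] B := Algebra.TensorProduct.lmul'' A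
  have hμ : Function.Surjective μ := fun b => ⟨_, μ.commutes b⟩
  have : IsNoetherianRing B := isNoetherianRing_of_surjective _ _ (μ : B ⊗[A] B →+* B) hμ
  refine ⟨fun _ => isLocalCompleteIntersection_of_formallySmooth μ hμ, fun h => ?_⟩
  rw [Algebra.formallySmooth_iff]
  constructor
  · have := finite_cotangent_ker μ (IsNoetherian.noetherian _)
    have := Module.finitePresentation_of_finite B (RingHom.ker μ).Cotangent
    exact projective_cotangent_ker μ h
  · have hs : Function.Surjective (algebraMap (Algebra.Generators.self A B).Ring B) :=
      (Algebra.Generators.self A B).algebraMap_surjective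
    exact (Algebra.FormallySmooth.kerCotangentToTensor_injective_iff hs).mp
      (kerCotangentToTensor_injective_of_isLocalCompleteIntersection hs h)

open TensorProduct in
/-- **Smoothness via the diagonal being a local complete intersection.**
Let `A` be a commutative noetherian ring and `B` a flat `A`-algebra which is essentially of
finite type over `A`, and let `μ : B ⊗[A] B → B` be the multiplication map.  Then `B` is a
formally smooth `A`-algebra if and only if for every prime `q` of `B`, with
`p = μ⁻¹(q)`, the kernel of the induced local homomorphism `(B ⊗[A] B)_p → B_q` is
generated by a `(B ⊗[A] B)_p`-regular sequence; i.e. the diagonal `μ` is a local complete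
intersection. -/
theorem formallySmooth_iff_diagonal_isLocalCompleteIntersection
    {A B : Type u} [CommRing A] [CommRing B] [Algebra A B]
    [IsNoetherianRing A] [Algebra.EssFiniteType A B]
    (hflat : Module.Flat A B) :
    Algebra.FormallySmooth A B ↔
    ((Algebra.TensorProduct.lmul' A (S := B)).toRingHom).IsLocalCompleteIntersection := by
  have : IsNoetherianRing B := Algebra.EssFiniteType.isNoetherianRing A B
  have : IsNoetherianRing (B ⊗[A] B) := Algebra.EssFiniteType.isNoetherianRing B (B ⊗[A] B)
  exact formallySmooth_iff_diagonal_isLocalCompleteIntersection_general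
end

section
/- Let A be a commutative noetherian ring and let B be a nonzero, flat, formally smooth A-algebra which is essentially of finite type over A, and assume Spec(B) is connected. Then there exists an integer n ≥ 0 such that Ext^i_{B ⊗_A B}(B, B ⊗_A B) = 0 for all i ≠ n, and Ext^n_{B ⊗_A B}(B, B ⊗_A B) is an invertible B-module. -/
universe u

open CategoryTheory

/-- An `R`-module `L` is *invertible* if there is an `R`-module `L'` with `L ⊗[R] L' ≅ R`. -/
def Module.IsInvertible (R : Type u) [CommRing R] (L : Type u) [AddCommGroup L] [Module R L] :
    Prop :=
  ∃ (L' : Type u) (_ : AddCommGroup L') (_ : Module R L'),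
    Nonempty ((TensorProduct R L L') ≃ₗ[R] R)

/-!
Write `R = B ⊗[A] B`. Multiplication makes `B` a quotient of `R`, split by `b ↦ b ⊗ 1`, and both
`R` and `B` are formally smooth over `B`. Localize at a prime `p` of `R` containing the kernel:
`S = R_p` is a noetherian local ring, formally smooth over `B`, and so is `S ⧸ J`, where `J` is the
localized kernel. If `x` is a minimal generator of `J`, smoothness of `S ⧸ J` gives a `B`-derivation
`D` of `S` with `D x` a unit. Formal smoothness of `S` lifts `s ↦ s + D s • X` from `S⟦X⟧ ⧸ (X²)`
to a ring map `S → S⟦X⟧`; the image of `x` is nonzero modulo the maximal ideal, hence a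
nonzerodivisor by Weierstrass division, so `x` is regular. As `S ⧸ (x)` is again formally smooth,
`J` is generated by a regular sequence, and dividing by one regular element at a time shows that
`Ext^i_S(S ⧸ J, S)` is `S ⧸ J` in one degree `i = n(p)` and zero in all others.

`Ext` commutes with localization, so each `Ext^i_R(B, R)` is a finite projective `B`-module whose
rank at `p` is `1` if `i = n(p)` and `0` otherwise. Ranks are locally constant and `Spec B` is
connected, so `n(p)` does not depend on `p`.
-/

universe v

namespace ExtEnveloping

section Derivations

open PowerSeries

theorem isAdicComplete_pow {R M : Type*} [CommRing R] [AddCommGroup M] [Module R M] (I : Ideal R)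
    [IsAdicComplete I M] {n : ℕ} (hn : n ≠ 0) : IsAdicComplete (I ^ n) M := by
  have pow_le (k : ℕ) : (I ^ n) ^ k ≤ I ^ k := by
    rw [← pow_mul]
    exact Ideal.pow_le_pow_right (Nat.le_mul_of_pos_left k (Nat.pos_of_ne_zero hn))
  refine { haus' x hx := ?_, prec' f hf := ?_ }
  · exact IsHausdorff.haus (I := I) inferInstance x fun k ↦
      (hx k).mono (Submodule.smul_mono_left (pow_le k))
  · obtain ⟨L, hL⟩ := IsPrecomplete.prec (I := I) inferInstance (f := f) fun {k l} hkl ↦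
      (hf hkl).mono (Submodule.smul_mono_left (pow_le k))
    refine ⟨L, fun k ↦ ?_⟩
    have hk := hf (Nat.le_mul_of_pos_left k (Nat.pos_of_ne_zero hn))
    rw [← pow_mul] at hk ⊢
    exact hk.trans (hL (n * k))

variable {B S : Type*} [CommRing B] [CommRing S] [Algebra B S]

theorem exists_powerSeries_lift [Algebra.FormallySmooth B S] (D : Derivation B S S) :
    ∃ g : S →ₐ[B] S⟦X⟧, ∀ s, constantCoeff (g s) = s ∧ coeff 1 (g s) = D s := by
  let J : Ideal S⟦X⟧ := Ideal.span {X}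
  let I : Ideal (S⟦X⟧ ⧸ J ^ 2) := J.map (Ideal.Quotient.mk _)
  have hI : I ^ 2 = ⊥ := by rw [← Ideal.map_pow, Ideal.map_quotient_self]
  let x : I := ⟨Ideal.Quotient.mk _ X,
    Ideal.mem_map_of_mem _ (Ideal.mem_span_singleton_self X)⟩
  have := isAdicComplete_pow (M := S⟦X⟧) J two_ne_zero
  obtain ⟨g, hg⟩ := Algebra.FormallySmooth.exists_mkₐ_comp_eq_of_isAdicComplete
    (liftOfDerivationToSquareZero I hI ((LinearMap.toSpanSingleton S I x).compDer D))
  refine ⟨g, fun s ↦ ?_⟩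
  have hs : Ideal.Quotient.mk (J ^ 2) (g s) = Ideal.Quotient.mk (J ^ 2) (D s • X + C s) :=
    DFunLike.congr_fun hg s
  rw [Ideal.Quotient.eq, Ideal.span_singleton_pow, Ideal.mem_span_singleton, X_pow_dvd_iff] at hs
  exact ⟨by simpa [sub_eq_zero] using hs 0 two_pos,
    by simpa [sub_eq_zero, coeff_C] using hs 1 one_lt_two⟩

theorem mem_nonZeroDivisors_of_map_residue_ne_zero [IsLocalRing S]
    [IsHausdorff (IsLocalRing.maximalIdeal S) S] {f : S⟦X⟧}
    (hf : f.map (IsLocalRing.residue S) ≠ 0) : f ∈ nonZeroDivisors S⟦X⟧ := by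
  refine mem_nonZeroDivisors_iff_right.mpr fun q hq ↦ ?_
  refine ((IsWeierstrassDivisor.of_map_ne_zero hf).eq_zero_of_mul_eq (r := 0) ?_ ?_).1
  · exact Polynomial.degree_zero.trans_lt (WithBot.bot_lt_coe _)
  · rw [mul_comm, hq, Polynomial.coe_zero]

theorem mem_nonZeroDivisors_of_isUnit_derivation [IsLocalRing S]
    [IsHausdorff (IsLocalRing.maximalIdeal S) S] [Algebra.FormallySmooth B S]
    (D : Derivation B S S) {x : S} (hD : IsUnit (D x)) : x ∈ nonZeroDivisors S := by
  obtain ⟨g, hg⟩ := exists_powerSeries_lift D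
  have hgx : g x ∈ nonZeroDivisors S⟦X⟧ := mem_nonZeroDivisors_of_map_residue_ne_zero fun h ↦ by
    have h1 := congrArg (coeff 1) h
    rw [coeff_map, (hg x).2, map_zero, IsLocalRing.residue_eq_zero_iff] at h1
    exact (IsLocalRing.mem_maximalIdeal _).mp h1 hD
  refine mem_nonZeroDivisors_iff_right.mpr fun s hs ↦ ?_
  have hgs : g s = 0 := mem_nonZeroDivisors_iff_right.mp hgx _ (by rw [← map_mul, hs, map_zero])
  rw [← (hg s).1, hgs, map_zero]

theorem exists_isUnit_dual_apply {T P : Type*} [CommRing T] [IsLocalRing T] [AddCommGroup P]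
    [Module T P] [Module.Projective T P] {v : P}
    (hv : v ∉ (IsLocalRing.maximalIdeal T • ⊤ : Submodule T P)) :
    ∃ φ : Module.Dual T P, IsUnit (φ v) := by
  obtain ⟨σ, hσ⟩ := Module.projective_def'.mp ‹Module.Projective T P›
  by_contra! hφ
  refine hv ?_
  rw [← LinearMap.id_apply (R := T) v, ← hσ, LinearMap.comp_apply, Finsupp.linearCombination_apply]
  exact Submodule.sum_mem _ fun i _ ↦ Submodule.smul_mem_smul
    ((IsLocalRing.mem_maximalIdeal _).mpr (hφ (Finsupp.lapply i ∘ₗ σ))) trivial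

theorem formallySmooth_quotient_iff [Algebra.FormallySmooth B S] (J : Ideal S) :
    Algebra.FormallySmooth B (S ⧸ J) ↔
      ∃ δ : Derivation B S J.Cotangent, ∀ x : J, δ x = J.toCotangent x := by
  have hker : RingHom.ker (algebraMap S (S ⧸ J)) = J := Ideal.mk_ker
  let e := Ideal.Cotangent.equivOfEq _ J hker
  rw [Algebra.FormallySmooth.iff_split_injection (P := S) Ideal.Quotient.mk_surjective]
  constructor
  · rintro ⟨l, hl⟩
    refine ⟨(e.toLinearMap ∘ₗ l ∘ₗ TensorProduct.mk S (S ⧸ J) Ω[S⁄B] 1).compDer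
      (KaehlerDifferential.D B S), fun x ↦ ?_⟩
    have hx := LinearMap.congr_fun hl (Ideal.toCotangent _ ⟨x, hker.ge x.2⟩)
    exact congrArg e hx
  · rintro ⟨δ, hδ⟩
    refine ⟨e.symm.toLinearMap ∘ₗ
      (δ.liftKaehlerDifferential.liftBaseChange (S ⧸ J)).restrictScalars S, ?_⟩
    refine LinearMap.ext fun y ↦ ?_
    obtain ⟨x, rfl⟩ := Ideal.toCotangent_surjective _ y
    have hx : δ x = e (Ideal.toCotangent _ x) := hδ ⟨x, hker.le x.2⟩
    change e.symm _ = _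
    rw [LinearEquiv.symm_apply_eq, LinearMap.id_apply, ← hx, LinearMap.coe_restrictScalars,
      KaehlerDifferential.kerCotangentToTensor_toCotangent, LinearMap.liftBaseChange_tmul,
      one_smul, Derivation.liftKaehlerDifferential_comp_D]

theorem exists_derivation_isUnit [IsLocalRing S] [Algebra.FormallySmooth B S] {J : Ideal S}
    (hJ : J ≤ IsLocalRing.maximalIdeal S) [Algebra.FormallySmooth B (S ⧸ J)] {x : S}
    (hx : x ∈ J) (hx' : x ∉ IsLocalRing.maximalIdeal S * J) :
    ∃ D : Derivation B S S, IsUnit (D x) := by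
  let 𝔪 := IsLocalRing.maximalIdeal S
  obtain ⟨δ, hδ⟩ := (formallySmooth_quotient_iff J).mp ‹Algebra.FormallySmooth B (S ⧸ J)›
  suffices KaehlerDifferential.D B S x ∉ (𝔪 • ⊤ : Submodule S Ω[S⁄B]) by
    obtain ⟨φ, hφ⟩ := exists_isUnit_dual_apply this
    exact ⟨φ.compDer (KaehlerDifferential.D B S), hφ⟩
  intro hdx
  have hδx : J.toCotangent ⟨x, hx⟩ ∈ (𝔪 • ⊤ : Submodule S J).map J.toCotangent := by
    rw [Submodule.map_smul'', Submodule.map_top, Ideal.toCotangent_range, ← hδ,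
      ← δ.liftKaehlerDifferential_comp_D]
    have := Submodule.mem_map_of_mem (f := δ.liftKaehlerDifferential) hdx
    rw [Submodule.map_smul''] at this
    exact Submodule.smul_mono le_rfl le_top this
  obtain ⟨y, hy, hyx⟩ := hδx
  have hy' : (y : S) ∈ 𝔪 * J := by
    have := Submodule.mem_map_of_mem (f := J.subtype) hy
    rwa [Submodule.map_smul'', Submodule.map_top, Submodule.range_subtype] at this
  have hyx' : (y : S) - x ∈ 𝔪 * J := by
    refine Ideal.mul_mono_left hJ ?_
    rw [← sq]
    exact (Ideal.toCotangent_eq J).mp hyx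
  exact hx' (by simpa using sub_mem hy' hyx')

theorem formallySmooth_quotient_span_singleton [Algebra.FormallySmooth B S] {x : S}
    (D : Derivation B S S) (hD : IsUnit (D x)) : Algebra.FormallySmooth B (S ⧸ Ideal.span {x}) := by
  obtain ⟨u, hu⟩ := hD
  let J : Ideal S := Ideal.span {x}
  let ξ : J.Cotangent := J.toCotangent ⟨x, Ideal.mem_span_singleton_self x⟩
  have hξ : x • ξ = 0 := Ideal.Cotangent.smul_eq_zero_of_mem (Ideal.mem_span_singleton_self x) ξ
  refine (formallySmooth_quotient_iff J).mpr
    ⟨(LinearMap.toSpanSingleton S J.Cotangent ((u⁻¹ : Sˣ) • ξ)).compDer D, ?_⟩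
  rintro ⟨_, hrx⟩
  obtain ⟨r, rfl⟩ := Ideal.mem_span_singleton'.mp hrx
  calc D (r * x) • (u⁻¹ : Sˣ) • ξ = (r * u) • (u⁻¹ : Sˣ) • ξ + D r • (u⁻¹ : Sˣ) • x • ξ := by
        simp only [Units.smul_def, smul_smul, ← add_smul, Derivation.leibniz, smul_eq_mul, hu]
        ring_nf
    _ = r • ξ := by
        rw [hξ, smul_zero, smul_zero, add_zero, mul_smul, ← Units.smul_def, smul_inv_smul]

theorem exists_mem_nonZeroDivisors_formallySmooth_quotient [IsLocalRing S]
    [IsHausdorff (IsLocalRing.maximalIdeal S) S] [Algebra.FormallySmooth B S] {J : Ideal S}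
    (hJ : J ≠ ⊤) (hJ₀ : J ≠ ⊥) (hfg : J.FG) [Algebra.FormallySmooth B (S ⧸ J)] :
    ∃ x ∈ J, x ∈ nonZeroDivisors S ∧ Algebra.FormallySmooth B (S ⧸ Ideal.span {x}) := by
  obtain ⟨x, hxJ, hx⟩ : ∃ x ∈ J, x ∉ IsLocalRing.maximalIdeal S * J := by
    by_contra! hle
    exact hJ₀ (Submodule.eq_bot_of_le_smul_of_le_jacobson_bot _ J hfg hle
      (IsLocalRing.maximalIdeal_le_jacobson _))
  obtain ⟨D, hD⟩ := exists_derivation_isUnit (B := B) (IsLocalRing.le_maximalIdeal hJ) hxJ hx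
  exact ⟨x, hxJ, mem_nonZeroDivisors_of_isUnit_derivation D hD,
    formallySmooth_quotient_span_singleton D hD⟩

theorem exists_isSMulRegular_formallySmooth_quotient_sup [IsNoetherianRing S] [IsLocalRing S]
    {J K : Ideal S} (hKJ : K < J) (hJ : J ≠ ⊤) [Algebra.FormallySmooth B (S ⧸ K)]
    [Algebra.FormallySmooth B (S ⧸ J)] :
    ∃ x ∈ J, x ∉ K ∧ IsSMulRegular (S ⧸ K) x ∧
      Algebra.FormallySmooth B (S ⧸ K ⊔ Ideal.span {x}) := by
  let T := S ⧸ K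
  let J' : Ideal T := J.map (Ideal.Quotient.mk K)
  let e : (T ⧸ J') ≃ₐ[B] S ⧸ J := DoubleQuot.quotQuotEquivQuotOfLEₐ B hKJ.le
  have : Nontrivial T := Ideal.Quotient.nontrivial_iff.mpr (hKJ.trans_le le_top).ne
  have : IsLocalRing T := .of_surjective' (Ideal.Quotient.mk K) Ideal.Quotient.mk_surjective
  have : Algebra.FormallySmooth B (T ⧸ J') := .of_equiv e.symm
  have hJ' : J' ≠ ⊤ := by
    have := Ideal.Quotient.nontrivial_iff.mpr hJ
    exact Ideal.Quotient.nontrivial_iff.mp e.toEquiv.nontrivial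
  have hJ'₀ : J' ≠ ⊥ := by
    rw [Ne, Ideal.map_eq_bot_iff_le_ker, Ideal.mk_ker]
    exact hKJ.not_ge
  obtain ⟨y, hyJ, hy, hsmooth⟩ :=
    exists_mem_nonZeroDivisors_formallySmooth_quotient (B := B) hJ' hJ'₀
      (IsNoetherian.noetherian J')
  obtain ⟨x, hxJ, rfl⟩ := (Ideal.mem_map_iff_of_surjective _ Ideal.Quotient.mk_surjective).mp hyJ
  refine ⟨x, hxJ, fun hxK ↦ ?_, ?_, ?_⟩
  · exact nonZeroDivisors.ne_zero hy (Ideal.Quotient.eq_zero_iff_mem.mpr hxK)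
  · refine .of_right_eq_zero_of_smul fun t ht ↦ mem_nonZeroDivisors_iff_right.mp hy t ?_
    rwa [mul_comm, ← Ideal.Quotient.algebraMap_eq, ← Algebra.smul_def]
  · rw [← Set.image_singleton, ← Ideal.map_span] at hsmooth
    have : Algebra.FormallySmooth B
        (T ⧸ (Ideal.span {x}).map (Ideal.Quotient.mkₐ B K)) := hsmooth
    exact .of_equiv (DoubleQuot.quotQuotEquivQuotSupₐ B K (Ideal.span {x}))

open RingTheory.Sequence in
theorem exists_isWeaklyRegular_ofList_eq (B : Type*) {S : Type*} [CommRing B] [CommRing S]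
    [Algebra B S] [IsNoetherianRing S] [IsLocalRing S] [Algebra.FormallySmooth B S] {J : Ideal S}
    (hJ : J ≠ ⊤) [Algebra.FormallySmooth B (S ⧸ J)] :
    ∃ rs : List S, IsWeaklyRegular S rs ∧ Ideal.ofList rs = J := by
  suffices ∀ (K : Ideal S) (rs : List S), Ideal.ofList rs = K → K ≤ J → IsWeaklyRegular S rs →
      Algebra.FormallySmooth B (S ⧸ K) → ∃ rs, IsWeaklyRegular S rs ∧ Ideal.ofList rs = J from
    this ⊥ [] Ideal.ofList_nil bot_le (.nil S S) (.of_equiv (AlgEquiv.quotientBot B S).symm)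
  intro K
  induction K using WellFoundedGT.induction with
  | ind K ih =>
  rintro rs hK hKJ hrs hsmooth
  obtain rfl | hlt := hKJ.eq_or_lt
  · exact ⟨rs, hrs, hK⟩
  obtain ⟨x, hxJ, hxK, hx, hsmooth'⟩ :=
    exists_isSMulRegular_formallySmooth_quotient_sup (B := B) hlt hJ
  refine ih (K ⊔ Ideal.span {x}) ?_ (rs ++ [x]) ?_ ?_ ?_ hsmooth'
  · rwa [left_lt_sup, Ideal.span_singleton_le_iff_mem]
  · rw [Ideal.ofList_append, Ideal.ofList_singleton, hK]
  · exact sup_le hKJ ((Ideal.span_singleton_le_iff_mem J).mpr hxJ)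
  · refine (isWeaklyRegular_append_iff S rs [x]).mpr ⟨hrs, ?_⟩
    have hrsK : (Ideal.ofList rs • ⊤ : Submodule S S) = K := by
      rw [hK, smul_eq_mul, Ideal.mul_top]
    rwa [isWeaklyRegular_singleton_iff,
      LinearEquiv.isSMulRegular_congr (Submodule.quotEquivOfEq _ K hrsK)]

end Derivations

section Koszul

open Abelian Pointwise RingTheory.Sequence

section LinearCategory

variable {R : Type*} [CommRing R] {C : Type*} [Category* C] [Abelian C] [Linear R C] [HasExt C]

variable (R) in
/-- Functoriality of `Ext` in isomorphisms of both arguments, linear over the base ring of the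
category. -/
noncomputable def extLinearEquivOfIso {X X' Y Y' : C} (eX : X ≅ X') (eY : Y ≅ Y') (n : ℕ) :
    Ext X Y n ≃ₗ[R] Ext X' Y' n :=
  .ofLinearMap
    ((Ext.mk₀ eX.inv).precompOfLinear R Y' (zero_add n) ∘ₗ
      (Ext.mk₀ eY.hom).postcompOfLinear R X (add_zero n))
    ((Ext.mk₀ eX.hom).precompOfLinear R Y (zero_add n) ∘ₗ
      (Ext.mk₀ eY.inv).postcompOfLinear R X' (add_zero n))
    (by ext; simp)
    (by ext; simp)

variable {M N Y : C} {x : R} {g : M ⟶ N} {w : (x • 𝟙 M) ≫ g = 0} {n : ℕ}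

theorem mk₀_smul_id_comp (x : R) (e : Ext M Y n) :
    (Ext.mk₀ (x • 𝟙 M)).comp e (zero_add n) = x • e := by
  rw [Ext.mk₀_smul, Ext.smul_comp, Ext.mk₀_id_comp]

theorem mk₀_comp_eq_zero_of_isSMulRegular (w : (x • 𝟙 M) ≫ g = 0)
    (hx : IsSMulRegular (Ext M Y n) x) (e : Ext N Y n) :
    (Ext.mk₀ g).comp e (zero_add n) = 0 := by
  refine hx.right_eq_zero_of_smul ?_
  rw [← mk₀_smul_id_comp, Ext.mk₀_comp_mk₀_assoc, w, Ext.mk₀_zero, Ext.zero_comp]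

theorem subsingleton_ext_zero_of_isSMulRegular
    (hS : (ShortComplex.mk (x • 𝟙 M) g w).ShortExact) (hx : IsSMulRegular (Ext M Y 0) x) :
    Subsingleton (Ext N Y 0) :=
  have : Epi g := hS.epi_g
  subsingleton_of_forall_eq 0 fun e ↦ Ext.precomp_mk₀_injective_of_epi Y g <| by
    rw [map_zero]
    exact mk₀_comp_eq_zero_of_isSMulRegular w hx e

/-- When `x` is regular on `Ext^{n+1}(M, Y)`, the connecting homomorphism of a short exact
sequence `0 ⟶ M ⟶ M ⟶ N ⟶ 0`, with first map the multiplication by `x`, identifies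
`Ext^n(M, Y) / x` with `Ext^{n+1}(N, Y)`. -/
noncomputable def quotSMulTopExtEquiv (hS : (ShortComplex.mk (x • 𝟙 M) g w).ShortExact)
    (hx : IsSMulRegular (Ext M Y (n + 1)) x) :
    QuotSMulTop x (Ext M Y n) ≃ₗ[R] Ext N Y (n + 1) :=
  let δ : Ext M Y n →ₗ[R] Ext N Y (n + 1) := hS.extClass.precompOfLinear R Y (add_comm 1 n)
  have hδ : Function.Surjective δ := fun e ↦ Ext.contravariant_sequence_exact₃ hS Y e
    (mk₀_comp_eq_zero_of_isSMulRegular w hx e) (add_comm 1 n)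
  have hker : x • ⊤ = LinearMap.ker δ := by
    ext e
    rw [LinearMap.mem_ker, Submodule.mem_smul_pointwise_iff_exists]
    constructor
    · rintro ⟨e, -, rfl⟩
      rw [← mk₀_smul_id_comp]
      exact hS.extClass_comp_assoc e (h := add_comm 1 n)
    · intro he
      obtain ⟨e', he'⟩ := Ext.contravariant_sequence_exact₁ hS Y e (add_comm 1 n) he
      exact ⟨e', trivial, (mk₀_smul_id_comp x e').symm.trans he'⟩
  Submodule.quotEquivOfEq _ _ hker ≪≫ₗ δ.quotKerEquivOfSurjective hδ

end LinearCategory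

variable {S : Type u} [CommRing S] {M Y : ModuleCat.{u} S} {x : S} {n : ℕ}

/-- `Ext^i(M, Y)` vanishes for `i ≠ n`, and is isomorphic to `M` for `i = n`: the module `M` is
dual to itself, up to a shift by `n`, with respect to `Y`. -/
structure IsExtSelfDual (M Y : ModuleCat.{u} S) (n : ℕ) : Prop where
  subsingleton_ext : ∀ i ≠ n, Subsingleton (Ext M Y i)
  nonempty_linearEquiv : Nonempty (Ext M Y n ≃ₗ[S] M)

namespace IsExtSelfDual

theorem congr {N Z : ModuleCat.{u} S} (h : IsExtSelfDual M Y n) (eM : M ≅ N) (eY : Y ≅ Z) :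
    IsExtSelfDual N Z n where
  subsingleton_ext i hi :=
    have := h.subsingleton_ext i hi
    (extLinearEquivOfIso S eM eY i).symm.toEquiv.subsingleton
  nonempty_linearEquiv :=
    ⟨(extLinearEquivOfIso S eM eY n).symm ≪≫ₗ h.nonempty_linearEquiv.some ≪≫ₗ
      eM.toLinearEquiv⟩

theorem self (S : Type u) [CommRing S] :
    IsExtSelfDual (ModuleCat.of S S) (ModuleCat.of S S) 0 where
  subsingleton_ext i hi := by
    obtain ⟨j, rfl⟩ := Nat.exists_eq_succ_of_ne_zero hi
    exact subsingleton_of_forall_eq 0 Ext.eq_zero_of_projective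
  nonempty_linearEquiv :=
    ⟨Ext.linearEquiv₀ ≪≫ₗ ModuleCat.homLinearEquiv ≪≫ₗ LinearMap.ringLmapEquivSelf S S S⟩

theorem isSMulRegular_ext (h : IsExtSelfDual M Y n) (hx : IsSMulRegular M x) (i : ℕ) :
    IsSMulRegular (Ext M Y i) x := by
  obtain rfl | hi := eq_or_ne i n
  · exact (LinearEquiv.isSMulRegular_congr h.nonempty_linearEquiv.some x).mpr hx
  · have := h.subsingleton_ext i hi
    exact Function.injective_of_subsingleton _

theorem quotSMulTop (h : IsExtSelfDual M Y n) (hx : IsSMulRegular M x) :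
    IsExtSelfDual (ModuleCat.of S (QuotSMulTop x M)) Y (n + 1) :=
  have hS : (M.smulShortComplex x).ShortExact := hx.smulShortComplex_shortExact
  have hext := h.isSMulRegular_ext hx
  { subsingleton_ext
      | 0, _ => subsingleton_ext_zero_of_isSMulRegular hS (hext 0)
      | i + 1, hi =>
        have := h.subsingleton_ext i (by simpa using hi)
        (quotSMulTopExtEquiv hS (hext (i + 1))).symm.toEquiv.subsingleton
    nonempty_linearEquiv :=
      ⟨(quotSMulTopExtEquiv hS (hext (n + 1))).symm ≪≫ₗ
        QuotSMulTop.congr x h.nonempty_linearEquiv.some⟩ }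

theorem quotient_ofList (M : Type u) [AddCommGroup M] [Module S M] {rs : List S}
    (hrs : IsWeaklyRegular M rs) : ∀ {n : ℕ}, IsExtSelfDual (ModuleCat.of S M) Y n →
      IsExtSelfDual (ModuleCat.of S (M ⧸ (Ideal.ofList rs • ⊤ : Submodule S M))) Y
        (n + rs.length) := by
  induction hrs with
  | nil M =>
    intro n h
    exact h.congr (Submodule.quotEquivOfEqBot _ (by simp)).symm.toModuleIso (Iso.refl Y)
  | cons x rs hx _ ih =>
    intro n h
    rw [List.length_cons, ← Nat.add_assoc, Nat.add_right_comm]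
    exact (ih (h.quotSMulTop hx)).congr
      (Submodule.quotOfListConsSMulTopEquivQuotSMulTopInner _ x rs).symm.toModuleIso (Iso.refl Y)

end IsExtSelfDual

theorem exists_isExtSelfDual_quotient (B : Type*) {S : Type u} [CommRing B] [CommRing S]
    [Algebra B S] [IsNoetherianRing S] [IsLocalRing S] [Algebra.FormallySmooth B S] {J : Ideal S}
    (hJ : J ≠ ⊤) [Algebra.FormallySmooth B (S ⧸ J)] :
    ∃ n, IsExtSelfDual (ModuleCat.of S (S ⧸ J)) (ModuleCat.of S S) n := by
  obtain ⟨rs, hrs, rfl⟩ := exists_isWeaklyRegular_ofList_eq B hJ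
  have h := (IsExtSelfDual.self S).quotient_ofList S hrs
  rw [smul_eq_mul, Ideal.mul_top] at h
  exact ⟨_, h⟩

end Koszul

section Localization

open Abelian
open scoped ModuleCat.Algebra

section RightExact

variable {R K₁ K₂ K₃ L₁ L₂ L₃ : Type*} [CommRing R] (𝒮 : Submonoid R)
  [AddCommGroup K₁] [AddCommGroup K₂] [AddCommGroup K₃]
  [AddCommGroup L₁] [AddCommGroup L₂] [AddCommGroup L₃]
  [Module R K₁] [Module R K₂] [Module R K₃] [Module R L₁] [Module R L₂] [Module R L₃]
  {f : K₁ →ₗ[R] K₂} {g : K₂ →ₗ[R] K₃} {f' : L₁ →ₗ[R] L₂} {g' : L₂ →ₗ[R] L₃}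
  {i₁ : K₁ →ₗ[R] L₁} {i₂ : K₂ →ₗ[R] L₂} {i₃ : K₃ →ₗ[R] L₃}

theorem exists_smul_eq_zero_of_exact (hfg : Function.Exact f g) (hg : Function.Surjective g)
    (hfg' : Function.Exact f' g') (h₁₂ : f' ∘ₗ i₁ = i₂ ∘ₗ f) (h₂₃ : g' ∘ₗ i₂ = i₃ ∘ₗ g)
    [IsLocalizedModule 𝒮 i₁] [IsLocalizedModule 𝒮 i₂] {x : K₃} (hx : i₃ x = 0) :
    ∃ c : 𝒮, c • x = 0 := by
  obtain ⟨k, rfl⟩ := hg x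
  obtain ⟨l, hl⟩ := (hfg' (i₂ k)).mp ((LinearMap.congr_fun h₂₃ k).trans hx)
  obtain ⟨⟨k₁, s⟩, hs⟩ := IsLocalizedModule.surj 𝒮 i₁ l
  have hk : i₂ (s • k) = i₂ (f k₁) := by
    rw [← LinearMap.comp_apply i₂ f, ← h₁₂, LinearMap.comp_apply, ← hs]
    simp only [Submonoid.smul_def, map_smul, hl]
  obtain ⟨t, ht⟩ := IsLocalizedModule.exists_of_eq (S := 𝒮) hk
  refine ⟨t * s, ?_⟩
  rw [mul_smul]
  simp only [Submonoid.smul_def, ← map_smul] at ht ⊢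
  rw [ht, hfg.apply_apply_eq_zero]

theorem isLocalizedModule_of_exact (hfg : Function.Exact f g) (hg : Function.Surjective g)
    (hfg' : Function.Exact f' g') (hg' : Function.Surjective g')
    (h₁₂ : f' ∘ₗ i₁ = i₂ ∘ₗ f) (h₂₃ : g' ∘ₗ i₂ = i₃ ∘ₗ g)
    (h₁ : IsLocalizedModule 𝒮 i₁) (h₂ : IsLocalizedModule 𝒮 i₂) : IsLocalizedModule 𝒮 i₃ where
  map_units s := by
    have hu₁ := (Module.End.isUnit_iff _).mp (IsLocalizedModule.map_units i₁ s)
    have hu₂ := (Module.End.isUnit_iff _).mp (IsLocalizedModule.map_units i₂ s)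
    exact (Module.End.isUnit_iff _).mpr <|
      LinearMap.bijective_of_surjective_of_bijective_of_right_exact f' g' f' g' _ _ _
        (by ext; simp) (by ext; simp) hfg' hfg' hu₁.surjective hu₂ hg' hg'
  surj y := by
    obtain ⟨l, rfl⟩ := hg' y
    obtain ⟨⟨k, s⟩, hs⟩ := IsLocalizedModule.surj 𝒮 i₂ l
    refine ⟨⟨g k, s⟩, ?_⟩
    rw [← LinearMap.comp_apply i₃ g, ← h₂₃, LinearMap.comp_apply, ← hs]
    simp only [Submonoid.smul_def, map_smul]
  exists_of_eq {x y} hxy := by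
    obtain ⟨c, hc⟩ := exists_smul_eq_zero_of_exact 𝒮 hfg hg hfg' h₁₂ h₂₃
      (x := x - y) (by rw [map_sub, hxy, sub_self])
    exact ⟨c, by rwa [smul_sub, sub_eq_zero] at hc⟩

end RightExact

variable {R : Type u} [CommRing R] (𝒮 : Submonoid R)

instance : (ModuleCat.localizedModuleFunctor.{u} 𝒮).Linear R where
  map_smul {M N} f r := by
    ext x
    exact (LinearMap.congr_fun ((IsLocalizedModule.mapExtendScalars 𝒮
      (M.localizedModuleMkLinearMap 𝒮) (N.localizedModuleMkLinearMap 𝒮)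
      (Localization 𝒮)).map_smul r f.hom) x).trans
        (algebraMap_smul (Localization 𝒮) r (M := N.localizedModule 𝒮) _).symm

/-- The map induced by localization on `Ext`, as a linear map over the base ring. -/
noncomputable abbrev localizationExt (M N : ModuleCat.{u} R) (n : ℕ) :
    Ext M N n →ₗ[R] Ext (M.localizedModule 𝒮) (N.localizedModule 𝒮) n :=
  (ModuleCat.localizedModuleFunctor 𝒮).mapExtLinearMap R M N n

theorem isLocalizedModule_localizationExt_zero (M N : ModuleCat.{u} R)
    [Module.FinitePresentation R M] : IsLocalizedModule 𝒮 (localizationExt 𝒮 M N 0) := by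
  let eM : Ext M N 0 ≃ₗ[R] (M →ₗ[R] N) := Ext.linearEquiv₀ ≪≫ₗ ModuleCat.homLinearEquiv
  let eL : Ext (M.localizedModule 𝒮) (N.localizedModule 𝒮) 0 ≃ₗ[R]
      (M.localizedModule 𝒮 →ₗ[Localization 𝒮] N.localizedModule 𝒮) :=
    { Ext.addEquiv₀.trans ModuleCat.homAddEquiv with
      map_smul' r e := by
        ext x
        exact (congrArg (fun f ↦ f.hom x) (Ext.linearEquiv₀.map_smul r e)).trans
          (algebraMap_smul (Localization 𝒮) r (M := N.localizedModule 𝒮) _) }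
  let φ := IsLocalizedModule.mapExtendScalars 𝒮 (M.localizedModuleMkLinearMap 𝒮)
    (N.localizedModuleMkLinearMap 𝒮) (Localization 𝒮)
  have h : localizationExt 𝒮 M N 0 = eL.symm.toLinearMap ∘ₗ φ ∘ₗ eM.toLinearMap := by
    ext e
    obtain ⟨f, rfl⟩ := Ext.addEquiv₀.symm.surjective e
    have heM : eM (Ext.mk₀ f) = f.hom :=
      congrArg ModuleCat.Hom.hom (Ext.addEquiv₀.apply_symm_apply f)
    have heL : eL.symm (φ f.hom) = Ext.mk₀ ((ModuleCat.localizedModuleFunctor 𝒮).map f) := rfl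
    calc localizationExt 𝒮 M N 0 (Ext.mk₀ f)
        = eL.symm (φ f.hom) := (Ext.mapExactFunctor_mk₀ _ f).trans heL.symm
      _ = eL.symm (φ (eM (Ext.mk₀ f))) := by rw [heM]
  rw [h]
  infer_instance

theorem isLocalizedModule_localizationExt_succ {S : ShortComplex (ModuleCat.{u} R)}
    (hS : S.ShortExact) [Projective S.X₂] (N : ModuleCat.{u} R) (n : ℕ)
    (h₁ : IsLocalizedModule 𝒮 (localizationExt 𝒮 S.X₁ N n))
    (h₂ : IsLocalizedModule 𝒮 (localizationExt 𝒮 S.X₂ N n)) :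
    IsLocalizedModule 𝒮 (localizationExt 𝒮 S.X₃ N (n + 1)) := by
  let F := ModuleCat.localizedModuleFunctor 𝒮
  have hF : (S.map F).ShortExact := hS.map_of_exact F
  have : Projective (S.map F).X₂ := F.projective_obj_of_projective ‹_›
  refine isLocalizedModule_of_exact 𝒮 (i₁ := localizationExt 𝒮 S.X₂ N n)
    (i₂ := localizationExt 𝒮 S.X₁ N n)
    (f := (Ext.mk₀ S.f).precompOfLinear R N (zero_add n))
    (g := hS.extClass.precompOfLinear R N (add_comm 1 n))
    (f' := (Ext.mk₀ (S.map F).f).precompOfLinear R (F.obj N) (zero_add n))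
    (g' := hF.extClass.precompOfLinear R (F.obj N) (add_comm 1 n))
    ((ShortComplex.ab_exact_iff_function_exact _).mp
      (Ext.contravariant_sequence_exact₁' hS N n (n + 1) (add_comm 1 n)))
    (precomp_extClass_surjective_of_projective_X₂ N hS n)
    ((ShortComplex.ab_exact_iff_function_exact _).mp
      (Ext.contravariant_sequence_exact₁' hF (F.obj N) n (n + 1) (add_comm 1 n)))
    (precomp_extClass_surjective_of_projective_X₂ (F.obj N) hF n)
    ?_ ?_ h₂ h₁
  · ext e
    change _ = ((Ext.mk₀ S.f).comp e (zero_add n)).mapExactFunctor F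
    rw [Ext.mapExactFunctor_comp, Ext.mapExactFunctor_mk₀]
    rfl
  · ext e
    change _ = (hS.extClass.comp e (add_comm 1 n)).mapExactFunctor F
    rw [Ext.mapExactFunctor_comp, Ext.mapExactFunctor_extClass]
    rfl

theorem isLocalizedModule_localizationExt [IsNoetherianRing R] (M N : ModuleCat.{u} R)
    [Module.Finite R M] (n : ℕ) : IsLocalizedModule 𝒮 (localizationExt 𝒮 M N n) := by
  induction n generalizing M with
  | zero =>
    have := Module.finitePresentation_of_finite R M
    exact isLocalizedModule_localizationExt_zero 𝒮 M N
  | succ n ih =>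
    obtain ⟨P, _, _, _, _, f, hf⟩ := Module.exists_finite_presentation R M
    have : Projective (ModuleCat.of R P) := ModuleCat.projective_of_categoryTheory_projective _
    exact isLocalizedModule_localizationExt_succ 𝒮 (LinearMap.shortExact_shortComplexKer hf) N n
      (ih (ModuleCat.of R (LinearMap.ker f))) (ih (ModuleCat.of R P))

end Localization

section DerivedFunctor

open Abelian

variable {R C : Type*} [CommRing R] [Category* C] [Abelian C] [Linear R C] [HasExt C]
  {X Y : C} (P : ProjectiveResolution X)

theorem extMk_zero_eq_zero_iff (f : P.complex.X 0 ⟶ Y) (m : ℕ) (hm : 0 + 1 = m)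
    (hf : P.complex.d m 0 ≫ f = 0) : P.extMk f m hm hf = 0 ↔ f = 0 := by
  refine ⟨fun h ↦ ?_, fun h ↦ by subst h; exact P.extMk_zero m hm⟩
  simp only [← P.extEquivCohomologyClass.apply_eq_iff_eq,
    ProjectiveResolution.extEquivCohomologyClass_extMk,
    ProjectiveResolution.extEquivCohomologyClass_zero,
    CochainComplex.HomComplex.CohomologyClass.mk_eq_zero_iff] at h
  rw [CochainComplex.HomComplex.Cocycle.toSingleMk_mem_coboundaries_iff _ _ _ _ _ 1 (by lia)] at h
  obtain ⟨g, hg⟩ := h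
  have hz : Limits.IsZero (P.cochainComplex.X 1) := P.cochainComplex.isZero_of_isStrictlyLE 0 1
  rw [hz.eq_of_src g 0, Limits.comp_zero] at hg
  rw [← cancel_epi (P.cochainComplexXIso (-(0 : ℕ)) 0 rfl).hom, Limits.comp_zero]
  exact hg.symm

theorem extMk_eq_zero_iff_exists_prev (n : ℕ) (f : P.complex.X n ⟶ Y) (m : ℕ) (hm : n + 1 = m)
    (hf : P.complex.d m n ≫ f = 0) :
    P.extMk f m hm hf = 0 ↔ ∃ g : P.complex.X ((ComplexShape.up ℕ).prev n) ⟶ Y,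
      P.complex.d n ((ComplexShape.up ℕ).prev n) ≫ g = f := by
  cases n with
  | zero =>
    have hd : P.complex.d 0 ((ComplexShape.up ℕ).prev 0) = 0 := P.complex.shape _ _ (by simp)
    rw [extMk_zero_eq_zero_iff]
    simp only [hd, Limits.zero_comp, exists_const, eq_comm]
  | succ p => exact P.extMk_eq_zero_iff f m hm hf _ (by rw [CochainComplex.prev_nat_succ])

theorem smul_extMk (n : ℕ) (r : R) (f : P.complex.X n ⟶ Y) (m : ℕ) (hm : n + 1 = m)
    (hf : P.complex.d m n ≫ f = 0) :
    r • P.extMk f m hm hf = P.extMk (r • f) m hm (by rw [Linear.comp_smul, hf, smul_zero]) := by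
  rw [Ext.smul_eq_comp_mk₀, ProjectiveResolution.extMk_comp_mk₀]
  simp only [Linear.comp_smul, Category.comp_id]

/-- The map sending a cocycle of `Hom(P, Y)`, for a projective resolution `P` of `X`, to its class
in the group of extensions of `X` by `Y`. -/
noncomputable def cocyclesToExt (n : ℕ) :
    LinearMap.ker ((P.complex.linearYonedaObj R Y).sc n).g.hom →ₗ[R] Ext X Y n where
  toFun z := P.extMk (Y := Y) z.1 _ (CochainComplex.next ℕ n).symm z.2
  map_add' z w := (P.add_extMk (Y := Y) z.1 w.1 _ _ z.2 w.2).symm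
  map_smul' r z := (smul_extMk P n r (Y := Y) z.1 _ _ z.2).symm

/-- The derived functors `Ext` agree with the groups `CategoryTheory.Abelian.Ext`
of morphisms in the derived category. -/
noncomputable def derivedExtEquiv [EnoughProjectives C] (n : ℕ) :
    ((_root_.Ext R C n).obj (Opposite.op X)).obj Y ≃ₗ[R] Ext X Y n := by
  refine (P.isoExt (R := R) n Y).toLinearEquiv.trans
    ((((P.complex.linearYonedaObj R Y).sc n).moduleCatHomologyIso.toLinearEquiv).trans
    ((Submodule.quotEquivOfEq _ _ ?_).trans
      ((cocyclesToExt (Y := Y) P n).quotKerEquivOfSurjective ?_)))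
  · ext z
    rw [LinearMap.mem_range, LinearMap.mem_ker]
    refine Iff.trans ?_ (extMk_eq_zero_iff_exists_prev P n (Y := Y) z.1 _
      (CochainComplex.next ℕ n).symm z.2).symm
    exact exists_congr fun g ↦ Subtype.ext_iff
  · intro e
    obtain ⟨f, hf, rfl⟩ := P.extMk_surjective e _ (CochainComplex.next ℕ n).symm
    exact ⟨⟨f, hf⟩, rfl⟩

end DerivedFunctor

section Gluing

open TensorProduct

variable {B : Type*} [CommRing B] {E : Type*} [AddCommGroup E] [Module B E]

theorem range_contractLeft_smul_top [Module.Projective B E] :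
    LinearMap.range (contractLeft B E) • (⊤ : Submodule B E) = ⊤ := by
  obtain ⟨s, hs⟩ := Module.projective_def'.mp ‹Module.Projective B E›
  refine eq_top_iff.mpr fun x _ ↦ ?_
  rw [← LinearMap.id_apply (R := B) x, ← hs, LinearMap.comp_apply,
    Finsupp.linearCombination_apply]
  exact Submodule.sum_mem _ fun y _ ↦ Submodule.smul_mem_smul
    ⟨(Finsupp.lapply y ∘ₗ s) ⊗ₜ x, contractLeft_apply _ x⟩ trivial

theorem contractLeft_surjective [Module.Finite B E] [Module.Projective B E]
    (hE : Module.support B E = Set.univ) : Function.Surjective (contractLeft B E) := by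
  rw [← LinearMap.range_eq_top]
  by_contra hne
  obtain ⟨m, hm, hle⟩ := Ideal.exists_le_maximal _ hne
  obtain ⟨r, hr, hrE⟩ := Submodule.exists_sub_one_mem_and_smul_eq_zero_of_fg_of_le_smul _
    (⊤ : Submodule B E) Module.Finite.fg_top range_contractLeft_smul_top.ge
  have hmE : (⟨m, hm.isPrime⟩ : PrimeSpectrum B) ∈ Module.support B E := hE ▸ trivial
  have hrm : r ∈ m := Module.mem_support_iff_of_finite.mp hmE <|
    Module.mem_annihilator.mpr fun x ↦ hrE x trivial
  exact hm.ne_top ((Ideal.eq_top_iff_one m).mpr (by simpa using m.sub_mem hrm (hle hr)))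

theorem rankAtStalk_dual [Module.Finite B E] [Module.Projective B E] :
    Module.rankAtStalk (R := B) (Module.Dual B E) = Module.rankAtStalk (R := B) E := by
  ext p
  let Bp := Localization.AtPrime p.asIdeal
  let Ep := LocalizedModule p.asIdeal.primeCompl E
  have : Module.FinitePresentation B E := Module.finitePresentation_of_projective B E
  have : Module.Free Bp Ep := Module.free_of_flat_of_isLocalRing
  let e : LocalizedModule p.asIdeal.primeCompl (Module.Dual B E) ≃ₗ[Bp] Module.Dual Bp Ep :=
    (IsLocalizedModule.linearEquiv p.asIdeal.primeCompl (LocalizedModule.mkLinearMap _ _)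
      (IsLocalizedModule.mapExtendScalars p.asIdeal.primeCompl
        (LocalizedModule.mkLinearMap p.asIdeal.primeCompl E)
        (Algebra.linearMap B Bp) Bp)).extendScalarsOfIsLocalization p.asIdeal.primeCompl Bp
  rw [Module.rankAtStalk, Module.rankAtStalk, e.finrank_eq, Module.finrank_linearMap,
    Module.finrank_self, mul_one]

theorem invertible_of_rankAtStalk_eq_one [Module.Finite B E] [Module.Projective B E]
    (hE : Module.rankAtStalk (R := B) E = 1) : Module.Invertible B E where
  bijective := by
    have hsupp : Module.support B E = Set.univ := Set.eq_univ_of_forall fun p ↦ by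
      rw [← Module.rankAtStalk_pos_iff_mem_support, hE]
      exact one_pos
    have hrank : Module.rankAtStalk (R := B) (Module.Dual B E ⊗[B] E) =
        Module.rankAtStalk (R := B) B := by
      ext p
      have := PrimeSpectrum.nontrivial p
      rw [Module.rankAtStalk_tensorProduct, rankAtStalk_dual, hE, Module.rankAtStalk_self, mul_one]
    exact Module.bijective_of_surjective_of_rankAtStalk_eq
      (M := Module.Dual B E ⊗[B] E) (N := B) (contractLeft_surjective hsupp)
      fun m hm ↦ congr_fun hrank ⟨m, hm.isPrime⟩

theorem rankAtStalk_of_linearEquiv (p : PrimeSpectrum B)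
    (e : LocalizedModule p.asIdeal.primeCompl E ≃ₗ[Localization.AtPrime p.asIdeal]
      Localization.AtPrime p.asIdeal) : Module.rankAtStalk E p = 1 := by
  rw [Module.rankAtStalk, e.finrank_eq, Module.finrank_self]

theorem exists_subsingleton_and_invertible [ConnectedSpace (PrimeSpectrum B)] {ι : Type*}
    (E : ι → Type*) [∀ i, AddCommGroup (E i)] [∀ i, Module B (E i)]
    [∀ i, Module.FinitePresentation B (E i)]
    (hE : ∀ (q : Ideal B) [q.IsPrime], ∃ k,
      (∀ i ≠ k, Subsingleton (LocalizedModule q.primeCompl (E i))) ∧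
      Nonempty (LocalizedModule q.primeCompl (E k) ≃ₗ[Localization.AtPrime q]
        Localization.AtPrime q)) :
    ∃ n, (∀ i ≠ n, Subsingleton (E i)) ∧ Module.Invertible B (E n) := by
  choose k hsub hfree using fun q : PrimeSpectrum B ↦ hE q.asIdeal
  have hflat (i) : Module.Flat B (E i) := Module.flat_of_localized_maximal _ fun m hm ↦ by
    obtain rfl | hi := eq_or_ne i (k ⟨m, hm.isPrime⟩)
    · have := Module.Flat.of_linearEquiv (hfree ⟨m, hm.isPrime⟩).some
      exact Module.Flat.trans B (Localization.AtPrime m) _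
    · have := hsub ⟨m, hm.isPrime⟩ i hi
      infer_instance
  have hrank₀ (i q) (hi : i ≠ k q) : Module.rankAtStalk (E i) q = 0 := by
    have := hsub q i hi
    exact Module.finrank_zero_of_subsingleton
  have hrank₁ (q) : Module.rankAtStalk (E (k q)) q = 1 :=
    rankAtStalk_of_linearEquiv q (hfree q).some
  have hconst (i) (p q : PrimeSpectrum B) :
      Module.rankAtStalk (E i) p = Module.rankAtStalk (E i) q :=
    Module.isLocallyConstant_rankAtStalk.apply_eq_of_preconnectedSpace p q
  obtain ⟨p⟩ : Nonempty (PrimeSpectrum B) := inferInstance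
  refine ⟨k p, fun i hi ↦ ?_, ?_⟩
  · exact Module.rankAtStalk_eq_zero_iff_subsingleton.mp <|
      funext fun q ↦ (hconst i q p).trans (hrank₀ i p hi)
  · have : Module.Projective B (E (k p)) := Module.Flat.projective_of_finitePresentation
    exact invertible_of_rankAtStalk_eq_one <| funext fun q ↦ (hconst _ q p).trans (hrank₁ p)

end Gluing

section Retract

open Abelian
open scoped ModuleCat.Algebra

theorem exists_isExtSelfDual_of_surjective (B : Type*) {S C : Type u} [CommRing B] [CommRing S]
    [CommRing C] [Algebra B S] [Algebra B C] [Algebra S C] [IsScalarTower B S C]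
    [IsNoetherianRing S] [IsLocalRing S] [Nontrivial C] [Algebra.FormallySmooth B S]
    [Algebra.FormallySmooth B C] (hS : Function.Surjective (algebraMap S C)) :
    ∃ n, IsExtSelfDual (ModuleCat.of S C) (ModuleCat.of S S) n := by
  let e := Ideal.quotientKerAlgEquivOfSurjective (f := Algebra.ofId S C) hS
  have : Algebra.FormallySmooth B (S ⧸ RingHom.ker (Algebra.ofId S C)) :=
    .of_equiv (e.restrictScalars B).symm
  obtain ⟨n, hn⟩ := exists_isExtSelfDual_quotient B (RingHom.ker_ne_top (Algebra.ofId S C))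
  exact ⟨n, hn.congr e.toLinearEquiv.toModuleIso (Iso.refl _)⟩

/-- The concrete localization of `X` is identified with any other localization of `X`. -/
noncomputable def isoLocalizedModule {R : Type u} [CommRing R] (𝒮 : Submonoid R)
    (X : ModuleCat.{u} R) {N : Type u} [AddCommGroup N] [Module R N] [Module (Localization 𝒮) N]
    [IsScalarTower R (Localization 𝒮) N] (f : X →ₗ[R] N) [IsLocalizedModule 𝒮 f] :
    ModuleCat.of (Localization 𝒮) N ≅ X.localizedModule 𝒮 :=
  ((IsLocalizedModule.linearEquiv 𝒮 f
    (X.localizedModuleMkLinearMap 𝒮)).extendScalarsOfIsLocalization 𝒮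
      (Localization 𝒮)).toModuleIso

theorem isLocalizedModule_restrictScalars_of_surjective {R B E F : Type*} [CommRing R]
    [CommRing B] [Algebra R B] [AddCommGroup E] [Module R E] [Module B E] [IsScalarTower R B E]
    [AddCommGroup F] [Module R F] [Module B F] [IsScalarTower R B F]
    (hB : Function.Surjective (algebraMap R B)) (q : Ideal B) [q.IsPrime] (f : E →ₗ[B] F)
    [IsLocalizedModule q.primeCompl f] :
    IsLocalizedModule (q.under R).primeCompl (f.restrictScalars R) := by
  rw [← IsLocalizedModule.restrictScalars_iff,
    Ideal.algebraMapSubmonoid_primeCompl_of_liesOver_surjective q _ hB]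
  infer_instance

theorem smul_eq_smul_of_smul_id_eq {R R' C : Type*} [CommRing R] [CommRing R'] [Category* C]
    [Abelian C] [Linear R C] [Linear R' C] [HasExt C] {X : C} (Y : C) {r : R} {r' : R'}
    (h : r • 𝟙 X = r' • 𝟙 X) {n : ℕ} (e : Ext X Y n) : r • e = r' • e := by
  rw [← mk₀_smul_id_comp, ← mk₀_smul_id_comp, h]

instance {R : Type u} [CommRing R] (𝒮 : Submonoid R) (X Y : ModuleCat.{u} (Localization 𝒮))
    (n : ℕ) : IsScalarTower R (Localization 𝒮) (Ext X Y n) :=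
  .of_algebraMap_smul fun r e ↦ smul_eq_smul_of_smul_id_eq Y (by ext; rfl) e

variable {R B : Type u} [CommRing R] [CommRing B] [Algebra R B] [Algebra B R] [IsScalarTower B R B]

variable (R B) in
theorem algebraMap_surjective_of_isScalarTower : Function.Surjective (algebraMap R B) :=
  fun b ↦ ⟨algebraMap B R b, (IsScalarTower.algebraMap_apply B R B b).symm⟩

variable (R) in
theorem exists_isExtSelfDual_localizedModule [IsNoetherianRing R] [Algebra.FormallySmooth B R]
    (q : Ideal B) [q.IsPrime] :
    ∃ n, IsExtSelfDual ((ModuleCat.of R B).localizedModule (q.under R).primeCompl)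
      ((ModuleCat.of R R).localizedModule (q.under R).primeCompl) n := by
  let p := q.under R
  let S := Localization.AtPrime p
  let C := Localization.AtPrime q
  have hB := algebraMap_surjective_of_isScalarTower R B
  let : Algebra S C := Localization.AtPrime.algebraOfLiesOver p q
  have : IsScalarTower B S C := .of_algebraMap_eq fun b ↦ by
    rw [IsScalarTower.algebraMap_apply B R S, ← IsScalarTower.algebraMap_apply R S C,
      IsScalarTower.algebraMap_apply R B C, ← IsScalarTower.algebraMap_apply B R B]
    rfl
  have : IsNoetherianRing S := IsLocalization.isNoetherianRing p.primeCompl S inferInstance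
  have : Algebra.FormallySmooth R S := .of_isLocalization p.primeCompl
  have : Algebra.FormallySmooth B S := .comp B R S
  have : Algebra.FormallySmooth B C := .of_isLocalization q.primeCompl
  have hC : IsLocalizedModule p.primeCompl ((Algebra.linearMap B C).restrictScalars R) :=
    isLocalizedModule_restrictScalars_of_surjective hB q _
  have hS : Function.Surjective (algebraMap S C) :=
    RingHom.surjective_localRingHom_of_surjective (algebraMap R B) hB q
  obtain ⟨n, hn⟩ := exists_isExtSelfDual_of_surjective B hS
  exact ⟨n, hn.congr
    (isoLocalizedModule p.primeCompl (ModuleCat.of R B)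
      ((Algebra.linearMap B C).restrictScalars R))
    (isoLocalizedModule p.primeCompl (ModuleCat.of R R) (Algebra.linearMap R S))⟩

theorem isScalarTower_of_linearEquiv_ext {E : Type*} [AddCommGroup E] [Module R E] [Module B E]
    [IsScalarTower B R E] {Y : ModuleCat.{u} R} {n : ℕ}
    (ψ : E ≃ₗ[R] Ext (ModuleCat.of R B) Y n) : IsScalarTower R B E :=
  .of_algebraMap_smul fun r e ↦ by
    rw [← algebraMap_smul R]
    refine ψ.injective ?_
    rw [map_smul, map_smul]
    refine smul_eq_smul_of_smul_id_eq Y (ModuleCat.hom_ext <| LinearMap.ext fun b ↦ ?_) _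
    change algebraMap B R (algebraMap R B r) • b = r • b
    rw [algebraMap_smul, algebraMap_smul]

theorem exists_subsingleton_localizedModule_and_linearEquiv [IsNoetherianRing R]
    [Algebra.FormallySmooth B R] {E : ℕ → Type*} [∀ i, AddCommGroup (E i)] [∀ i, Module R (E i)]
    [∀ i, Module B (E i)] [∀ i, IsScalarTower R B (E i)]
    (ψ : ∀ i, E i ≃ₗ[R] Ext (ModuleCat.of R B) (ModuleCat.of R R) i) (q : Ideal B) [q.IsPrime] :
    ∃ n, (∀ i ≠ n, Subsingleton (LocalizedModule q.primeCompl (E i))) ∧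
      Nonempty (LocalizedModule q.primeCompl (E n) ≃ₗ[Localization.AtPrime q]
        Localization.AtPrime q) := by
  let 𝒮 := (q.under R).primeCompl
  have hB := algebraMap_surjective_of_isScalarTower R B
  have : Module.Finite R (ModuleCat.of R B) := .of_surjective (Algebra.linearMap R B) hB
  obtain ⟨n, hn⟩ := exists_isExtSelfDual_localizedModule R q
  have hloc (i) := isLocalizedModule_localizationExt 𝒮 (ModuleCat.of R B) (ModuleCat.of R R) i
  have hq (i) := isLocalizedModule_restrictScalars_of_surjective hB q
    (LocalizedModule.mkLinearMap q.primeCompl (E i))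
  have hC := isLocalizedModule_restrictScalars_of_surjective hB q
    (Algebra.linearMap B (Localization.AtPrime q))
  let eE (i) := IsLocalizedModule.linearEquiv 𝒮
    ((LocalizedModule.mkLinearMap q.primeCompl (E i)).restrictScalars R)
    (localizationExt 𝒮 (ModuleCat.of R B) (ModuleCat.of R R) i ∘ₗ (ψ i).toLinearMap)
  have hM := (ModuleCat.of R B).localizedModule_isLocalizedModule 𝒮
  let eB := IsLocalizedModule.linearEquiv 𝒮 ((ModuleCat.of R B).localizedModuleMkLinearMap 𝒮)
    ((Algebra.linearMap B (Localization.AtPrime q)).restrictScalars R)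
  let e := eE n ≪≫ₗ hn.nonempty_linearEquiv.some.restrictScalars R ≪≫ₗ eB
  refine ⟨n, fun i hi ↦ ?_, ⟨(e.extendScalarsOfSurjective hB).extendScalarsOfIsLocalization
    q.primeCompl (Localization.AtPrime q)⟩⟩
  have := hn.subsingleton_ext i hi
  exact (eE i).toEquiv.subsingleton

theorem exists_subsingleton_and_invertible_of_linearEquiv_ext [IsNoetherianRing R]
    [Algebra.FormallySmooth B R] [ConnectedSpace (PrimeSpectrum B)] {E : ℕ → Type*}
    [∀ i, AddCommGroup (E i)] [∀ i, Module R (E i)] [∀ i, Module B (E i)]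
    [∀ i, IsScalarTower B R (E i)]
    (ψ : ∀ i, E i ≃ₗ[R] Ext (ModuleCat.of R B) (ModuleCat.of R R) i) :
    ∃ n, (∀ i ≠ n, Subsingleton (E i)) ∧ Module.Invertible B (E n) := by
  have hB := algebraMap_surjective_of_isScalarTower R B
  have : IsNoetherianRing B := isNoetherianRing_of_surjective R B (algebraMap R B) hB
  have : Module.Finite R (ModuleCat.of R B) := .of_surjective (Algebra.linearMap R B) hB
  have hRBE (i) : IsScalarTower R B (E i) := isScalarTower_of_linearEquiv_ext (ψ i)
  have hRE (i) : Module.Finite R (E i) := .equiv (ψ i).symm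
  have hBE (i) : Module.Finite B (E i) := .of_restrictScalars_finite R B (E i)
  have hfp (i) : Module.FinitePresentation B (E i) := Module.finitePresentation_of_finite B (E i)
  exact exists_subsingleton_and_invertible E
    (exists_subsingleton_localizedModule_and_linearEquiv ψ)

end Retract

end ExtEnveloping

open TensorProduct in
theorem ext_enveloping_concentrated_invertible_general
    {A : Type v} {B : Type u} [CommRing A] [CommRing B] [Algebra A B]
    [IsNoetherianRing (B ⊗[A] B)] [Algebra.FormallySmooth A B]
    [ConnectedSpace (PrimeSpectrum B)] :
    ∃ n : ℕ,
      (∀ i : ℕ, i ≠ n →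
        letI := ((Algebra.TensorProduct.lmul' A (S := B)).toRingHom).toModule
        Subsingleton (((Ext (B ⊗[A] B) (ModuleCat.{u} (B ⊗[A] B)) i).obj
          (Opposite.op (ModuleCat.of (B ⊗[A] B) B))).obj
            (ModuleCat.of (B ⊗[A] B) (B ⊗[A] B)))) ∧
      (letI := ((Algebra.TensorProduct.lmul' A (S := B)).toRingHom).toModule
       letI : Module B (((Ext (B ⊗[A] B) (ModuleCat.{u} (B ⊗[A] B)) n).obj
          (Opposite.op (ModuleCat.of (B ⊗[A] B) B))).obj
            (ModuleCat.of (B ⊗[A] B) (B ⊗[A] B))) :=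
         Module.compHom _ (algebraMap B (B ⊗[A] B))
       Module.IsInvertible B (((Ext (B ⊗[A] B) (ModuleCat.{u} (B ⊗[A] B)) n).obj
          (Opposite.op (ModuleCat.of (B ⊗[A] B) B))).obj
            (ModuleCat.of (B ⊗[A] B) (B ⊗[A] B)))) := by
  let : Algebra (B ⊗[A] B) B := ((Algebra.TensorProduct.lmul' A (S := B)).toRingHom).toAlgebra
  have : IsScalarTower B (B ⊗[A] B) B :=
    .of_algebraMap_eq fun b ↦ (Algebra.TensorProduct.lmul'_apply_tmul b 1 |>.trans (mul_one b)).symm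
  let E (n : ℕ) := ((Ext (B ⊗[A] B) (ModuleCat.{u} (B ⊗[A] B)) n).obj
    (Opposite.op (ModuleCat.of (B ⊗[A] B) B))).obj (ModuleCat.of (B ⊗[A] B) (B ⊗[A] B))
  let (n : ℕ) : Module B (E n) := Module.compHom _ (algebraMap B (B ⊗[A] B))
  have hE (n : ℕ) : IsScalarTower B (B ⊗[A] B) (E n) := .of_algebraMap_smul fun _ _ ↦ rfl
  obtain ⟨n, hsubsingleton, hinvertible⟩ :=
    ExtEnveloping.exists_subsingleton_and_invertible_of_linearEquiv_ext (E := fun n ↦ E n)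
      fun i ↦ ExtEnveloping.derivedExtEquiv (projectiveResolution (ModuleCat.of (B ⊗[A] B) B)) i
  exact ⟨n, hsubsingleton, Module.Dual B (E n), inferInstance, inferInstance,
    ⟨(TensorProduct.comm B _ _).trans (Module.Invertible.linearEquiv B _)⟩⟩

open TensorProduct in
/-- **Hochschild cohomology of a smooth algebra with coefficients in the enveloping ring is
an invertible module concentrated in a single degree.**
Let `A` be a commutative noetherian ring and `B` a nonzero, flat, formally smooth
`A`-algebra, essentially of finite type over `A`, with connected spectrum.  Then there is
an `n : ℕ` such that `Ext^i_{B ⊗[A] B}(B, B ⊗[A] B) = 0` for all `i ≠ n`, and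
`Ext^n_{B ⊗[A] B}(B, B ⊗[A] B)` is an invertible `B`-module (for the canonical `B`-module
structure, obtained by restricting scalars along `B → B ⊗[A] B`, `b ↦ b ⊗ 1`). -/
theorem ext_enveloping_concentrated_invertible
    {A B : Type u} [CommRing A] [CommRing B] [Algebra A B]
    [IsNoetherianRing A] [Nontrivial B]
    [Algebra.EssFiniteType A B] [Algebra.FormallySmooth A B]
    (hflat : Module.Flat A B)
    (hconn : ConnectedSpace (PrimeSpectrum B)) :
    ∃ n : ℕ,
      (∀ i : ℕ, i ≠ n →
        letI := ((Algebra.TensorProduct.lmul' A (S := B)).toRingHom).toModule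
        Subsingleton (((Ext (B ⊗[A] B) (ModuleCat.{u} (B ⊗[A] B)) i).obj
          (Opposite.op (ModuleCat.of (B ⊗[A] B) B))).obj
            (ModuleCat.of (B ⊗[A] B) (B ⊗[A] B)))) ∧
      (letI := ((Algebra.TensorProduct.lmul' A (S := B)).toRingHom).toModule
       letI : Module B (((Ext (B ⊗[A] B) (ModuleCat.{u} (B ⊗[A] B)) n).obj
          (Opposite.op (ModuleCat.of (B ⊗[A] B) B))).obj
            (ModuleCat.of (B ⊗[A] B) (B ⊗[A] B))) :=
         Module.compHom _ (algebraMap B (B ⊗[A] B))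
       Module.IsInvertible B (((Ext (B ⊗[A] B) (ModuleCat.{u} (B ⊗[A] B)) n).obj
          (Opposite.op (ModuleCat.of (B ⊗[A] B) B))).obj
            (ModuleCat.of (B ⊗[A] B) (B ⊗[A] B)))) := by
  have : IsNoetherianRing B := Algebra.EssFiniteType.isNoetherianRing A B
  have : IsNoetherianRing (B ⊗[A] B) := Algebra.EssFiniteType.isNoetherianRing B (B ⊗[A] B)
  exact ext_enveloping_concentrated_invertible_general
end

section
/- Let A be a commutative noetherian ring and let B be a nonzero, flat, formally smooth A-algebra which is essentially of finite type over A, and assume Spec(B) is connected. Then there exist an invertible B-module M̄ and an integer n ≥ 0 such that for every B ⊗_A B-module X and every integer i there is an isomorphism of B-modules, natural in X: Ext^i_{B ⊗_A B}(B, X) ≅ M̄ ⊗_B Tor^{B ⊗_A B}_{n−i}(B, X), where Tor in negative homological degrees is interpreted as zero. -/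
universe u

open CategoryTheory CategoryTheory.MonoidalCategory

open TensorProduct in
/-- The Hochschild cohomology functor `Ext^i_{B ⊗[A] B}(B, -)` (with `B` a module over the
enveloping ring `B ⊗[A] B` via the multiplication map), viewed as a functor from
`B ⊗[A] B`-modules to `B`-modules (through restriction of scalars along
`B → B ⊗[A] B`, `b ↦ b ⊗ 1`), with the convention that it is the zero functor in negative
degrees. -/
noncomputable def extEnvelopingFunctor (A B : Type u) [CommRing A] [CommRing B] [Algebra A B]
    (i : ℤ) : ModuleCat.{u} (B ⊗[A] B) ⥤ ModuleCat.{u} B :=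
  letI := ((Algebra.TensorProduct.lmul' A (S := B)).toRingHom).toModule
  if 0 ≤ i then
    ((Ext (B ⊗[A] B) (ModuleCat.{u} (B ⊗[A] B)) i.toNat).obj
        (Opposite.op (ModuleCat.of (B ⊗[A] B) B))) ⋙
      ModuleCat.restrictScalars (algebraMap B (B ⊗[A] B))
  else (Functor.const _).obj (ModuleCat.of B PUnit)

open TensorProduct in
/-- The Hochschild homology functor `Tor^{B ⊗[A] B}_j(B, -)` (with `B` a module over the
enveloping ring `B ⊗[A] B` via the multiplication map), viewed as a functor from
`B ⊗[A] B`-modules to `B`-modules (through restriction of scalars along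
`B → B ⊗[A] B`, `b ↦ b ⊗ 1`), with the convention that it is the zero functor in negative
degrees. -/
noncomputable def torEnvelopingFunctor (A B : Type u) [CommRing A] [CommRing B] [Algebra A B]
    (j : ℤ) : ModuleCat.{u} (B ⊗[A] B) ⥤ ModuleCat.{u} B :=
  letI := ((Algebra.TensorProduct.lmul' A (S := B)).toRingHom).toModule
  if 0 ≤ j then
    ((Tor (ModuleCat.{u} (B ⊗[A] B)) j.toNat).obj (ModuleCat.of (B ⊗[A] B) B)) ⋙
      ModuleCat.restrictScalars (algebraMap B (B ⊗[A] B))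
  else (Functor.const _).obj (ModuleCat.of B PUnit)

/-!
Let `R = B ⊗[A] B`. The left derived functors `L_j H` of a right exact functor `H` are its iterated
left satellites. If `N` is an `R`-module for which `Ext^i(N, F) = 0` for all `i < n` and `F` free,
then likewise `Ext^(n-j)(N, -)` is the `j`-th left satellite of `Ext^n(N, -)`. For `N = B` of
projective dimension at most `n` over `R`, the functor `Ext^n(B, -)` is
`Ext^n(B, R) ⊗[B] (B ⊗[R] -)`, so its satellites are `Ext^n(B, R) ⊗[B] Tor_j(B, -)` as soon as
`Ext^n(B, R)` is flat over `B`.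

Smoothness enters through the kernel `I` of `R → B`: locally on `Spec B`, elements of `I` whose
differentials form a basis of `Ω[R⁄B]` are étale coordinates of `R` over `B`, hence a regular
sequence, and they generate `I` by Nakayama's lemma. This bounds the projective dimension by the
length `n`, and Rees' computation of `Ext^i(B, R)` gives its vanishing for `i < n` and flatness for
`i = n`; the length `n` is constant because it is the rank of a projective module over a connected
spectrum.
Duality for `X = B` in degree `0` reads `Ext^n(B, R) ⊗[B] Tor_n(B, B) ≅ B`, so `Ext^n(B, R)` is
invertible.
-/

section ExtComparison

open Opposite Abelian HomologicalComplex

variable {R : Type u} [CommRing R]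

/-- The functor `X ↦ Ext^n(N, X)` on `R`-modules, formed with the `Ext` of the derived category.
It carries the long exact sequences, which `CategoryTheory.Ext` (a left derived functor in the
first variable) lacks. -/
noncomputable def abelianExtFunctor (N : ModuleCat.{u} R) (n : ℕ) :
    ModuleCat.{u} R ⥤ ModuleCat.{u} R where
  obj X := ModuleCat.of R (Abelian.Ext.{u} N X n)
  map f := ModuleCat.ofHom ((Ext.mk₀ f).postcompOfLinear R N (add_zero n))
  map_id X := by ext; simp
  map_comp f g := by ext x; simp [← Ext.mk₀_comp_mk₀]

/-- The map of complexes `Hom(P, X) ⟶ Hom(P, Y)` induced by `f : X ⟶ Y`, in the form in which it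
comes out of the definition of `CategoryTheory.Ext`. -/
noncomputable def linearYonedaMap (P : ChainComplex (ModuleCat.{u} R) ℕ) {X Y : ModuleCat.{u} R}
    (f : X ⟶ Y) : P.linearYonedaObj R X ⟶ P.linearYonedaObj R Y :=
  (unopFunctor (V := ModuleCat.{u} R) (ComplexShape.down ℕ)).map
    ((NatTrans.mapHomologicalComplex
      (NatTrans.rightOp ((linearYoneda R (ModuleCat.{u} R)).map f)) _).app P).op

variable {N : ModuleCat.{u} R} (P : ProjectiveResolution N) (n : ℕ)

lemma isoExt_hom_naturality {X Y : ModuleCat.{u} R} (f : X ⟶ Y) :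
    ((Ext R (ModuleCat.{u} R) n).obj (op N)).map f ≫ (P.isoExt n Y).hom =
      (P.isoExt (R := R) n X).hom ≫ homologyMap (linearYonedaMap P.complex f) n := by
  let τ := NatTrans.rightOp ((linearYoneda R (ModuleCat.{u} R)).map f)
  have sqDerived : CommSq ((NatTrans.leftDerived τ n).app N) (P.isoLeftDerivedObj _ n).hom
      (P.isoLeftDerivedObj _ n).hom
      (homologyMap ((NatTrans.mapHomologicalComplex τ _).app P.complex) n) :=
    ⟨(Iso.eq_comp_inv _).1 ((P.leftDerived_app_eq τ n).trans (Category.assoc _ _ _).symm)⟩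
  have sqOp : CommSq (homologyMap ((opFunctor _ _).map (linearYonedaMap P.complex f).op) n)
      (homologyOp _ n).hom (homologyOp _ n).hom _ :=
    ⟨homologyOp_hom_naturality (linearYonedaMap P.complex f) n⟩
  exact ((sqDerived.unop.vert_inv (g := Iso.unop _) (h := Iso.unop _)).vert_comp
    (sqOp.unop.vert_inv (g := Iso.unop _) (h := Iso.unop _))).w

variable (X : ModuleCat.{u} R)

/-- The `R`-linear inclusion of the `n`-cocycles of `Hom(P, X)` into `Hom(P_n, X)`. -/
noncomputable def cocycleHom :
    (P.complex.linearYonedaObj R X).cycles n →ₗ[R] (P.complex.X n ⟶ X) :=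
  ((P.complex.linearYonedaObj R X).iCycles n).hom

lemma cocycleHom_injective : Function.Injective (cocycleHom P n X) :=
  (ModuleCat.mono_iff_injective ((P.complex.linearYonedaObj R X).iCycles n)).1 inferInstance

lemma d_comp_cocycleHom (z : (P.complex.linearYonedaObj R X).cycles n) :
    P.complex.d (n + 1) n ≫ cocycleHom P n X z = 0 :=
  LinearMap.congr_fun (congrArg ModuleCat.Hom.hom
    ((P.complex.linearYonedaObj R X).iCycles_d n (n + 1))) z

variable {n X} in
lemma exists_cocycleHom_eq (f : P.complex.X n ⟶ X) (hf : P.complex.d (n + 1) n ≫ f = 0) :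
    ∃ z, cocycleHom P n X z = f :=
  (ShortComplex.moduleCat_exact_iff _).1 (ShortComplex.exact_of_f_is_kernel
    (ShortComplex.mk _ _ ((P.complex.linearYonedaObj R X).iCycles_d n (n + 1)))
    ((P.complex.linearYonedaObj R X).cyclesIsKernel n (n + 1) (by simp))) f hf

lemma cocycleHom_toCycles (p : ℕ) (g : P.complex.X p ⟶ X) :
    cocycleHom P n X ((P.complex.linearYonedaObj R X).toCycles p n g) = P.complex.d n p ≫ g :=
  LinearMap.congr_fun (congrArg ModuleCat.Hom.hom
    ((P.complex.linearYonedaObj R X).toCycles_i p n)) g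

variable {X} in
lemma extMk_zero_eq_zero_iff (f : P.complex.X 0 ⟶ X) (hf : P.complex.d 1 0 ≫ f = 0) :
    P.extMk f 1 rfl hf = 0 ↔ f = 0 := by
  refine ⟨fun h ↦ ?_, by rintro rfl; simp⟩
  rw [← P.extEquivCohomologyClass.apply_eq_iff_eq,
    ProjectiveResolution.extEquivCohomologyClass_extMk,
    ProjectiveResolution.extEquivCohomologyClass_zero,
    CochainComplex.HomComplex.CohomologyClass.mk_eq_zero_iff,
    CochainComplex.HomComplex.Cocycle.toSingleMk_mem_coboundaries_iff _ _ _ _ _ 1 (by lia)] at h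
  obtain ⟨g, hg⟩ := h
  have hd : P.cochainComplex.d (-(0 : ℕ)) 1 = 0 :=
    (P.cochainComplex.isZero_of_isStrictlyLE 0 1 (by lia)).eq_of_tgt _ _
  rw [hd, Limits.zero_comp] at hg
  rw [← cancel_epi (P.cochainComplexXIso (-(0 : ℕ)) 0 rfl).hom, ← hg, Limits.comp_zero]

variable {n X} in
lemma extMk_eq_zero_iff_exists_prev (f : P.complex.X n ⟶ X)
    (hf : P.complex.d (n + 1) n ≫ f = 0) :
    P.extMk f (n + 1) rfl hf = 0 ↔
      ∃ g : P.complex.X ((ComplexShape.up ℕ).prev n) ⟶ X, P.complex.d n _ ≫ g = f := by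
  cases n with
  | zero =>
    rw [extMk_zero_eq_zero_iff, P.complex.shape _ _ (by simp)]
    simp [eq_comm]
  | succ p => rw [P.extMk_eq_zero_iff _ _ _ _ p rfl, CochainComplex.prev_nat_succ]

/-- The map sending an `n`-cocycle of `Hom(P, X)` to the class it represents in `Ext^n(N, X)`. -/
noncomputable def cocycleClass :
    (P.complex.linearYonedaObj R X).cycles n ⟶ (abelianExtFunctor N n).obj X :=
  ModuleCat.ofHom
    { toFun z := P.extMk (cocycleHom P n X z) (n + 1) rfl (d_comp_cocycleHom P n X z)
      map_add' x y := by
        rw [P.add_extMk]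
        congr 1
        exact map_add (cocycleHom P n X) x y
      map_smul' r x := by
        rw [RingHom.id_apply, Ext.smul_eq_comp_mk₀, P.extMk_comp_mk₀]
        congr 1
        rw [Linear.comp_smul, Category.comp_id]
        exact map_smul (cocycleHom P n X) r x }

instance : Epi (cocycleClass P n X) := by
  rw [ModuleCat.epi_iff_surjective]
  intro α
  obtain ⟨f, hf, rfl⟩ := P.extMk_surjective α (n + 1) rfl
  obtain ⟨z, rfl⟩ := exists_cocycleHom_eq P f hf
  exact ⟨z, rfl⟩

lemma cocycleClass_eq_zero_iff (z : (P.complex.linearYonedaObj R X).cycles n) :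
    cocycleClass P n X z = 0 ↔
      ∃ g, (P.complex.linearYonedaObj R X).toCycles ((ComplexShape.up ℕ).prev n) n g = z := by
  refine (extMk_eq_zero_iff_exists_prev P _ (d_comp_cocycleHom P n X z)).trans
    (exists_congr fun g ↦ ?_)
  rw [← cocycleHom_toCycles, (cocycleHom_injective P n X).eq_iff]

lemma toCycles_comp_cocycleClass :
    (P.complex.linearYonedaObj R X).toCycles ((ComplexShape.up ℕ).prev n) n ≫
      cocycleClass P n X = 0 := by
  ext g
  exact (cocycleClass_eq_zero_iff P n X _).2 ⟨g, rfl⟩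

lemma exact_toCycles_cocycleClass :
    (ShortComplex.mk _ _ (toCycles_comp_cocycleClass P n X)).Exact :=
  (ShortComplex.moduleCat_exact_iff _).2 fun z ↦ (cocycleClass_eq_zero_iff P n X z).1

/-- `Ext^n(N, X)` as the `n`-th cohomology of `Hom(P, X)`. -/
noncomputable def homologyIsoAbelianExt :
    (P.complex.linearYonedaObj R X).homology n ≅ (abelianExtFunctor N n).obj X :=
  haveI : Epi (ShortComplex.mk _ _ (toCycles_comp_cocycleClass P n X)).g :=
    inferInstanceAs (Epi (cocycleClass P n X))
  ((P.complex.linearYonedaObj R X).homologyIsCokernel _ n rfl).coconePointUniqueUpToIso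
    (exact_toCycles_cocycleClass P n X).gIsCokernel

lemma homologyπ_comp_homologyIsoAbelianExt_hom :
    (P.complex.linearYonedaObj R X).homologyπ n ≫ (homologyIsoAbelianExt P n X).hom =
      cocycleClass P n X :=
  haveI : Epi (ShortComplex.mk _ _ (toCycles_comp_cocycleClass P n X)).g :=
    inferInstanceAs (Epi (cocycleClass P n X))
  ((P.complex.linearYonedaObj R X).homologyIsCokernel _ n rfl).comp_coconePointUniqueUpToIso_hom
    (exact_toCycles_cocycleClass P n X).gIsCokernel Limits.WalkingParallelPair.one

variable {X} in
lemma homologyIsoAbelianExt_hom_naturality {Y : ModuleCat.{u} R} (f : X ⟶ Y) :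
    homologyMap (linearYonedaMap P.complex f) n ≫ (homologyIsoAbelianExt P n Y).hom =
      (homologyIsoAbelianExt P n X).hom ≫ (abelianExtFunctor N n).map f := by
  rw [← cancel_epi (homologyπ _ n), homologyπ_naturality_assoc,
    homologyπ_comp_homologyIsoAbelianExt_hom, ← Category.assoc,
    homologyπ_comp_homologyIsoAbelianExt_hom]
  ext z
  refine Eq.trans ?_ (P.extMk_comp_mk₀ _ _ rfl (d_comp_cocycleHom P n X z) f).symm
  change P.extMk _ _ rfl (d_comp_cocycleHom P n Y _) = _
  congr 1
  exact LinearMap.congr_fun (congrArg ModuleCat.Hom.hom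
    (cyclesMap_i (linearYonedaMap P.complex f) n)) z

/-- The two definitions of `Ext` in Mathlib agree, naturally in the second variable. -/
noncomputable def extIsoAbelianExtFunctor (N : ModuleCat.{u} R) (n : ℕ) :
    (Ext R (ModuleCat.{u} R) n).obj (op N) ≅ abelianExtFunctor N n :=
  NatIso.ofComponents
    (fun X ↦ (projectiveResolution N).isoExt n X ≪≫ homologyIsoAbelianExt _ n X)
    fun f ↦ by
      rw [Iso.trans_hom, Iso.trans_hom, Category.assoc, ← homologyIsoAbelianExt_hom_naturality,
        ← Category.assoc, isoExt_hom_naturality, Category.assoc]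

end ExtComparison

section LeftDerived

open Limits HomologicalComplex

variable {C : Type*} [Category* C] [Abelian C]

/-- The augmentation `P₀ ⟶ Z` of a projective resolution of `Z`; this is `P.π.f 0`, whose target
is only definitionally equal to `Z`. -/
noncomputable def augmentation {Z : C} (P : ProjectiveResolution Z) : P.complex.X 0 ⟶ Z :=
  P.π.f 0

instance {Z : C} (P : ProjectiveResolution Z) : Epi (augmentation P) :=
  inferInstanceAs (Epi (P.π.f 0))

lemma d_comp_augmentation {Z : C} (P : ProjectiveResolution Z) :
    P.complex.d 1 0 ≫ augmentation P = 0 :=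
  P.complex_d_comp_π_f_zero

/-- The cokernel property of the augmentation. -/
noncomputable def augmentationIsCokernel {Z : C} (P : ProjectiveResolution Z) :
    IsColimit (CokernelCofork.ofπ _ (d_comp_augmentation P)) :=
  P.isColimitCokernelCofork

section Splice

variable {S S' : ShortComplex C} (P : ProjectiveResolution S.X₁) (P' : ProjectiveResolution S'.X₁)

/-- The complex `⋯ ⟶ P₁ ⟶ P₀ ⟶ S.X₂` obtained by splicing a resolution `P` of `S.X₁` with `S`. -/
noncomputable def splice : ChainComplex C ℕ :=
  P.complex.augment (augmentation P ≫ S.f)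
    (by rw [← Category.assoc, d_comp_augmentation, zero_comp])

lemma splice_exactAt_succ (hS : S.ShortExact) (n : ℕ) : (splice P).ExactAt (n + 1) := by
  rw [exactAt_iff' _ (n + 1 + 1) (n + 1) n (by simp) (by simp)]
  cases n with
  | zero =>
    let φ : ShortComplex.mk _ _ (d_comp_augmentation P) ⟶ (splice P).sc' 2 1 0 :=
      { τ₁ := 𝟙 _
        τ₂ := 𝟙 _
        τ₃ := S.f
        comm₁₂ := (Category.id_comp _).trans (Category.comp_id _).symm
        comm₂₃ := Category.id_comp _ }
    have : Epi φ.τ₁ := inferInstanceAs (Epi (𝟙 _))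
    have : IsIso φ.τ₂ := inferInstanceAs (IsIso (𝟙 _))
    have : Mono φ.τ₃ := hS.mono_f
    exact (ShortComplex.exact_iff_of_epi_of_isIso_of_mono φ).1 P.exact₀
  | succ n => exact P.exact_succ n

lemma augmentation_comp_f_comp_g : (augmentation P ≫ S.f) ≫ S.g = 0 := by
  rw [Category.assoc, S.zero, comp_zero]

lemma exact_augmentation_comp_f (hS : S.ShortExact) :
    (ShortComplex.mk _ _ (augmentation_comp_f_comp_g P)).Exact := by
  let φ : ShortComplex.mk _ _ (augmentation_comp_f_comp_g P) ⟶ S :=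
    { τ₁ := augmentation P, τ₂ := 𝟙 _, τ₃ := 𝟙 _ }
  have : Epi φ.τ₁ := inferInstanceAs (Epi (augmentation P))
  exact (ShortComplex.exact_iff_of_epi_of_isIso_of_mono φ).2 hS.exact

/-- The projective resolution of `S.X₃` obtained by splicing `P` with `S`. -/
noncomputable def spliceResolution (hS : S.ShortExact) [Projective S.X₂] :
    ProjectiveResolution S.X₃ where
  complex := splice P
  projective n := by
    cases n with
    | zero => exact inferInstanceAs (Projective S.X₂)
    | succ n => exact P.projective n
  π := (ChainComplex.toSingle₀Equiv _ _).symm ⟨S.g, augmentation_comp_f_comp_g P⟩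
  quasiIso := ⟨fun n ↦ by
    cases n with
    | zero =>
      rw [ChainComplex.quasiIsoAt₀_iff, ShortComplex.quasiIso_iff_of_zeros' _ rfl rfl rfl]
      have hπ : ((ChainComplex.toSingle₀Equiv (splice P) S.X₃).symm
          ⟨S.g, augmentation_comp_f_comp_g P⟩).f 0 = S.g :=
        ChainComplex.toSingle₀Equiv_symm_apply_f_zero ..
      refine (ShortComplex.exact_and_epi_g_iff_of_iso ?_).2
        ⟨exact_augmentation_comp_f P hS, hS.epi_g⟩
      exact ShortComplex.isoMk (Iso.refl _) (Iso.refl _) (Iso.refl _)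
        ((Category.id_comp _).trans (Category.comp_id _).symm)
        ((Category.id_comp _).trans (hπ.symm.trans (Category.comp_id _).symm))
    | succ n =>
      rw [quasiIsoAt_iff_exactAt']
      · exact splice_exactAt_succ P hS n
      · exact ChainComplex.exactAt_succ_single_obj ..⟩

lemma spliceResolution_π_f_zero (hS : S.ShortExact) [Projective S.X₂] :
    (spliceResolution P hS).π.f 0 = S.g :=
  ChainComplex.toSingle₀Equiv_symm_apply_f_zero ..

variable {P P'} in
/-- The functoriality of `splice`. -/
noncomputable def spliceMap (φ : S ⟶ S') (ψ : P.complex ⟶ P'.complex)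
    (h : ψ.f 0 ≫ augmentation P' = augmentation P ≫ φ.τ₁) : splice P ⟶ splice P' where
  f
    | 0 => φ.τ₂
    | n + 1 => ψ.f n
  comm' i j hij := by
    obtain rfl : j + 1 = i := hij
    cases j with
    | zero =>
      change ψ.f 0 ≫ augmentation P' ≫ S'.f = (augmentation P ≫ S.f) ≫ φ.τ₂
      rw [reassoc_of% h, Category.assoc, φ.comm₁₂]
    | succ j => exact ψ.comm (j + 1) j

end Splice

section HomologyOne

variable {D : Type*} [Category* D] [Abelian D] (L : ChainComplex D ℕ) {A : D} (p : L.X 1 ⟶ A)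
  (hp : L.d 2 1 ≫ p = 0)

/-- The map `H₁(L) ⟶ A` induced by a map `L₁ ⟶ A` that vanishes on boundaries. -/
noncomputable def homologyOneDesc : L.homology 1 ⟶ A :=
  L.homologyι 1 ≫ L.descOpcycles p 2 (by simp) hp

variable {L p hp} in
lemma homologyOneDesc_naturality {L' : ChainComplex D ℕ} {A' : D} {p' : L'.X 1 ⟶ A'}
    {hp' : L'.d 2 1 ≫ p' = 0} (f : L ⟶ L') (a : A ⟶ A') (h : f.f 1 ≫ p' = p ≫ a) :
    homologyMap f 1 ≫ homologyOneDesc L' p' hp' = homologyOneDesc L p hp ≫ a := by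
  have : opcyclesMap f 1 ≫ L'.descOpcycles p' 2 (by simp) hp' =
      L.descOpcycles p 2 (by simp) hp ≫ a := by
    rw [← cancel_epi (L.pOpcycles 1), p_opcyclesMap_assoc, p_descOpcycles, p_descOpcycles_assoc, h]
  rw [homologyOneDesc, homologyι_naturality_assoc, this, homologyOneDesc, Category.assoc]

variable {p hp} (hcoker : IsColimit (CokernelCofork.ofπ p hp))
include hcoker

lemma isIso_descOpcycles_of_isCokernel : IsIso (L.descOpcycles p 2 (by simp) hp) := by
  let e := (L.opcyclesIsCokernel 2 1 (by simp)).coconePointUniqueUpToIso hcoker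
  have he : L.pOpcycles 1 ≫ e.hom = p :=
    (L.opcyclesIsCokernel 2 1 (by simp)).comp_coconePointUniqueUpToIso_hom hcoker
      WalkingParallelPair.one
  have : L.descOpcycles p 2 (by simp) hp = e.hom := by
    rw [← cancel_epi (L.pOpcycles 1), p_descOpcycles, he]
  rw [this]
  infer_instance

lemma mono_homologyOneDesc : Mono (homologyOneDesc L p hp) :=
  have := isIso_descOpcycles_of_isCokernel L hcoker
  mono_comp _ _

lemma exists_exact_homologyOneDesc {i : A ⟶ L.X 0} (hi : p ≫ i = L.d 1 0) :
    ∃ w : homologyOneDesc L p hp ≫ i = 0, (ShortComplex.mk _ _ w).Exact := by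
  have := isIso_descOpcycles_of_isCokernel L hcoker
  have h : L.descOpcycles p 2 (by simp) hp ≫ i = L.fromOpcycles 1 0 := by
    rw [← cancel_epi (L.pOpcycles 1), p_descOpcycles_assoc, hi, p_fromOpcycles]
  refine ⟨by rw [homologyOneDesc, Category.assoc, h, homologyι_comp_fromOpcycles],
    ShortComplex.exact_of_iso ?_ (ShortComplex.exact_of_f_is_kernel
      (ShortComplex.mk _ _ (L.homologyι_comp_fromOpcycles 1 0)) (L.homologyIsKernel 1 0 (by simp)))⟩
  exact ShortComplex.isoMk (Iso.refl _) (asIso (L.descOpcycles p 2 _ hp)) (Iso.refl _)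
    (Category.id_comp _) (h.trans (Category.comp_id _).symm)

end HomologyOne

section Connecting

variable {D : Type*} [Category* D] [Abelian D]

section

variable (H : C ⥤ D) [H.Additive] {S S' : ShortComplex C} (P : ProjectiveResolution S.X₁)
  {P' : ProjectiveResolution S'.X₁}

/-- Splicing shifts the homology in degrees at least `2`. -/
noncomputable def homologySpliceIso (j : ℕ) :
    ((H.mapHomologicalComplex _).obj (splice P)).homology (j + 2) ≅
      ((H.mapHomologicalComplex _).obj P.complex).homology (j + 1) :=
  (homologyFunctorIso' D (ComplexShape.down ℕ) (j + 3) (j + 2) (j + 1) (by simp) (by simp)).app _ ≪≫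
    (homologyFunctorIso' D (ComplexShape.down ℕ) (j + 2) (j + 1) j (by simp) (by simp)).symm.app
      ((H.mapHomologicalComplex _).obj P.complex)

variable {P} in
lemma homologySpliceIso_hom_naturality {φ : S ⟶ S'} {ψ : P.complex ⟶ P'.complex}
    (h : ψ.f 0 ≫ augmentation P' = augmentation P ≫ φ.τ₁) (j : ℕ) :
    CommSq (homologyMap ((H.mapHomologicalComplex _).map (spliceMap φ ψ h)) (j + 2))
      (homologySpliceIso H P j).hom (homologySpliceIso H P' j).hom
      (homologyMap ((H.mapHomologicalComplex _).map ψ) (j + 1)) :=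
  (CommSq.mk ((homologyFunctorIso' D _ (j + 3) (j + 2) (j + 1) (by simp) (by simp)).hom.naturality
    ((H.mapHomologicalComplex _).map (spliceMap φ ψ h)))).vert_comp
  (CommSq.mk ((homologyFunctorIso' D _ (j + 2) (j + 1) j (by simp) (by simp)).inv.naturality
    ((H.mapHomologicalComplex _).map ψ)))

lemma map_d_comp_map_augmentation :
    H.map (P.complex.d 1 0) ≫ H.map (augmentation P) = 0 := by
  rw [← H.map_comp, d_comp_augmentation, H.map_zero]

/-- The map from the first homology of the spliced complex induced by the augmentation. -/
noncomputable def homologySpliceDesc :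
    ((H.mapHomologicalComplex _).obj (splice P)).homology 1 ⟶ H.obj S.X₁ :=
  homologyOneDesc ((H.mapHomologicalComplex _).obj (splice P)) (H.map (augmentation P))
    (map_d_comp_map_augmentation H P)

variable {P} in
lemma homologySpliceDesc_naturality {φ : S ⟶ S'} {ψ : P.complex ⟶ P'.complex}
    (h : ψ.f 0 ≫ augmentation P' = augmentation P ≫ φ.τ₁) :
    CommSq (homologyMap ((H.mapHomologicalComplex _).map (spliceMap φ ψ h)) 1)
      (homologySpliceDesc H P) (homologySpliceDesc H P') (H.map φ.τ₁) :=
  ⟨homologyOneDesc_naturality (hp := map_d_comp_map_augmentation H P)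
    (hp' := map_d_comp_map_augmentation H P') ((H.mapHomologicalComplex _).map (spliceMap φ ψ h))
    (H.map φ.τ₁) ((H.map_comp _ _).symm.trans ((congrArg H.map h).trans (H.map_comp _ _)))⟩

variable [PreservesFiniteColimits H]

instance : Mono (homologySpliceDesc H P) :=
  mono_homologyOneDesc ((H.mapHomologicalComplex _).obj (splice P))
    (CokernelCofork.mapIsColimit _ (augmentationIsCokernel P) H)

lemma exists_exact_homologySpliceDesc :
    ∃ w : homologySpliceDesc H P ≫ H.map S.f = 0, (ShortComplex.mk _ _ w).Exact :=
  exists_exact_homologyOneDesc ((H.mapHomologicalComplex _).obj (splice P))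
    (CokernelCofork.mapIsColimit _ (augmentationIsCokernel P) H) (H.map_comp _ _).symm

end

variable [HasProjectiveResolutions C] (H : C ⥤ D) [H.Additive] {S S' : ShortComplex C}
  (hS : S.ShortExact) (hS' : S'.ShortExact) [Projective S.X₂] [Projective S'.X₂]

/-- The left derived functors at `S.X₃`, computed with a spliced resolution. -/
noncomputable def leftDerivedIsoSplice (P : ProjectiveResolution S.X₁) (n : ℕ) :
    (H.leftDerived n).obj S.X₃ ≅ ((H.mapHomologicalComplex _).obj (splice P)).homology n :=
  (spliceResolution P hS).isoLeftDerivedObj H n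

lemma exists_map_spliceResolution (φ : S ⟶ S') (P : ProjectiveResolution S.X₁)
    (P' : ProjectiveResolution S'.X₁) :
    ∃ (ψ : P.complex ⟶ P'.complex) (h : ψ.f 0 ≫ augmentation P' = augmentation P ≫ φ.τ₁),
    ∀ n, CommSq ((H.leftDerived n).map φ.τ₃) (leftDerivedIsoSplice H hS P n).hom
      (leftDerivedIsoSplice H hS' P' n).hom
      (homologyMap ((H.mapHomologicalComplex _).map (spliceMap φ ψ h)) n) := by
  have h := ProjectiveResolution.lift_commutes_zero φ.τ₁ P P'
  refine ⟨_, h, fun n ↦ ⟨ProjectiveResolution.isoLeftDerivedObj_hom_naturality φ.τ₃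
    (spliceResolution P hS) (spliceResolution P' hS') (spliceMap φ _ h) ?_ H n⟩⟩
  rw [spliceResolution_π_f_zero, spliceResolution_π_f_zero]
  exact φ.comm₂₃

/-- Dimension shifting for left derived functors. -/
noncomputable def leftDerivedShiftIso (j : ℕ) :
    (H.leftDerived (j + 2)).obj S.X₃ ≅ (H.leftDerived (j + 1)).obj S.X₁ :=
  leftDerivedIsoSplice H hS (projectiveResolution S.X₁) (j + 2) ≪≫ homologySpliceIso H _ j ≪≫
    ((projectiveResolution S.X₁).isoLeftDerivedObj H (j + 1)).symm

lemma leftDerivedShiftIso_hom_naturality (φ : S ⟶ S') (j : ℕ) :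
    (H.leftDerived (j + 2)).map φ.τ₃ ≫ (leftDerivedShiftIso H hS' j).hom =
      (leftDerivedShiftIso H hS j).hom ≫ (H.leftDerived (j + 1)).map φ.τ₁ := by
  obtain ⟨ψ, h, sq⟩ := exists_map_spliceResolution H hS hS' φ (projectiveResolution S.X₁)
    (projectiveResolution S'.X₁)
  have sqInv := CommSq.mk
    (ProjectiveResolution.isoLeftDerivedObj_inv_naturality φ.τ₁ _ _ ψ h H (j + 1)).symm
  exact ((sq (j + 2)).vert_comp ((homologySpliceIso_hom_naturality H h j).vert_comp sqInv)).w

/-- The connecting map `L₁H(S.X₃) ⟶ H(S.X₁)`. -/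
noncomputable def leftDerivedOneConnecting : (H.leftDerived 1).obj S.X₃ ⟶ H.obj S.X₁ :=
  (leftDerivedIsoSplice H hS (projectiveResolution S.X₁) 1).hom ≫ homologySpliceDesc H _

lemma leftDerivedOneConnecting_naturality (φ : S ⟶ S') :
    (H.leftDerived 1).map φ.τ₃ ≫ leftDerivedOneConnecting H hS' =
      leftDerivedOneConnecting H hS ≫ H.map φ.τ₁ := by
  obtain ⟨ψ, h, sq⟩ := exists_map_spliceResolution H hS hS' φ (projectiveResolution S.X₁)
    (projectiveResolution S'.X₁)
  exact ((sq 1).vert_comp (homologySpliceDesc_naturality H h)).w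

variable [PreservesFiniteColimits H]

instance : Mono (leftDerivedOneConnecting H hS) :=
  mono_comp _ (homologySpliceDesc H _)

lemma exists_exact_leftDerivedOneConnecting :
    ∃ w : leftDerivedOneConnecting H hS ≫ H.map S.f = 0, (ShortComplex.mk _ _ w).Exact := by
  let e := leftDerivedIsoSplice H hS (projectiveResolution S.X₁) 1
  obtain ⟨w, hw⟩ := exists_exact_homologySpliceDesc H (projectiveResolution S.X₁)
  have w' : leftDerivedOneConnecting H hS ≫ H.map S.f = 0 := by
    rw [leftDerivedOneConnecting, Category.assoc, w, comp_zero]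
  refine ⟨w', ShortComplex.exact_of_iso ?_ hw⟩
  exact ShortComplex.isoMk e.symm (Iso.refl _) (Iso.refl _)
    ((e.inv_hom_id_assoc _).trans (Category.comp_id _).symm)
    ((Category.id_comp _).trans (Category.comp_id _).symm)

end Connecting

end LeftDerived

section Satellite

open Limits

variable {C : Type*} [Category* C] {D : Type*} [Category* D] [HasZeroMorphisms D]
  {E : Type*} [Category* E] [HasZeroMorphisms E] {K F : C ⥤ C} (i : K ⟶ F)

/-- The functor `T'` is the left satellite of `T` along `i : K ⟶ F`: there are maps
`T' X ⟶ T (K X)`, natural in `X`, which are kernels of `T (K X) ⟶ T (F X)`. This is used for the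
inclusion `i` of the first syzygy functor `K` into a functorial projective cover `F`. -/
def IsLeftSatellite (T' T : C ⥤ D) : Prop :=
  ∃ δ : T' ⟶ K ⋙ T, ∀ X, ∃ w : δ.app X ≫ T.map (i.app X) = 0,
    Nonempty (IsLimit (KernelFork.ofι (δ.app X) w))

namespace IsLeftSatellite

variable {i} {T' T U' U : C ⥤ D}

lemma nonempty_iso (hT : IsLeftSatellite i T' T) (hU : IsLeftSatellite i U' U) (e : T ≅ U) :
    Nonempty (T' ≅ U') := by
  obtain ⟨δ, hδ⟩ := hT
  obtain ⟨ε, hε⟩ := hU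
  choose v hδ using hδ
  choose w hε using hε
  let arrowIso (X : C) : Arrow.mk (T.map (i.app X)) ≅ Arrow.mk (U.map (i.app X)) :=
    Arrow.isoMk (e.app _) (e.app _) (e.hom.naturality _).symm
  let a (X : C) : T'.obj X ≅ U'.obj X :=
    KernelFork.mapIsoOfIsLimit (hδ X).some (hε X).some (arrowIso X)
  have ha (X : C) : (a X).hom ≫ ε.app X = δ.app X ≫ e.hom.app (K.obj X) :=
    KernelFork.mapOfIsLimit_ι _ (hε X).some (arrowIso X).hom
  have (X : C) : Mono (ε.app X) := mono_of_isLimit_fork (hε X).some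
  refine ⟨NatIso.ofComponents a fun {X Y} f ↦ ?_⟩
  rw [← cancel_mono (ε.app Y), Category.assoc, Category.assoc, ha, NatTrans.naturality,
    reassoc_of% ha, NatTrans.naturality_assoc, Functor.comp_map, Functor.comp_map,
    e.hom.naturality]

lemma comp (h : IsLeftSatellite i T' T) (G : D ⥤ E) [G.PreservesZeroMorphisms]
    [PreservesFiniteLimits G] : IsLeftSatellite i (T' ⋙ G) (T ⋙ G) := by
  obtain ⟨δ, hδ⟩ := h
  refine ⟨Functor.whiskerRight δ G, fun X ↦ ?_⟩
  obtain ⟨w, ⟨hw⟩⟩ := hδ X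
  exact ⟨(G.map_comp _ _).symm.trans ((congrArg G.map w).trans (G.map_zero _ _)),
    ⟨KernelFork.mapIsLimit _ hw G⟩⟩

lemma ofIso (h : IsLeftSatellite i T' T) (e : T ≅ U) : IsLeftSatellite i T' U := by
  obtain ⟨δ, hδ⟩ := h
  refine ⟨δ ≫ Functor.whiskerLeft K e.hom, fun X ↦ ?_⟩
  obtain ⟨w, ⟨hw⟩⟩ := hδ X
  have w' : (δ.app X ≫ e.hom.app (K.obj X)) ≫ U.map (i.app X) = 0 := by
    rw [Category.assoc, ← e.hom.naturality, reassoc_of% w, zero_comp]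
  exact ⟨w', ⟨IsKernel.ofIso _ hw (KernelFork.ofι _ w') (e.app _) (e.app _) (Iso.refl _)
    (e.hom.naturality _).symm (Category.id_comp _)⟩⟩

lemma isZero_obj (h : IsLeftSatellite i T' T) (X : C) [Mono (T.map (i.app X))] :
    IsZero (T'.obj X) := by
  obtain ⟨δ, hδ⟩ := h
  obtain ⟨w, ⟨hw⟩⟩ := hδ X
  exact KernelFork.IsLimit.isZero_of_mono hw

end IsLeftSatellite

end Satellite

section Syzygy

open Limits

variable {C : Type*} [Category* C] [Abelian C] {F : C ⥤ C} (ε : F ⟶ 𝟭 C)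

/-- The short complex `0 ⟶ K X ⟶ F X ⟶ X`, where `K` is the kernel of `ε`. -/
noncomputable abbrev syzygySequence (X : C) : ShortComplex C where
  X₁ := (kernel ε).obj X
  X₂ := F.obj X
  X₃ := X
  f := (kernel.ι ε).app X
  g := ε.app X
  zero := congrArg (NatTrans.app · X) (kernel.condition ε)

/-- The functoriality of `syzygySequence`. -/
noncomputable abbrev syzygySequenceMap {X Y : C} (f : X ⟶ Y) :
    syzygySequence ε X ⟶ syzygySequence ε Y where
  τ₁ := (kernel ε).map f
  τ₂ := F.map f
  τ₃ := f
  comm₁₂ := (kernel.ι ε).naturality f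
  comm₂₃ := ε.naturality f

variable [∀ X, Epi (ε.app X)]

lemma shortExact_syzygySequence (X : C) : (syzygySequence ε X).ShortExact where
  exact := (ShortComplex.exact_of_f_is_kernel (ShortComplex.mk _ _ (kernel.condition ε))
    (kernelIsKernel ε)).map ((evaluation C C).obj X)
  mono_f := inferInstanceAs (Mono ((kernel.ι ε).app X))
  epi_g := inferInstanceAs (Epi (ε.app X))

lemma isLeftSatellite_leftDerived [∀ X, Projective (F.obj X)] [HasProjectiveResolutions C]
    {D : Type*} [Category* D] [Abelian D] (H : C ⥤ D) [H.Additive] [PreservesFiniteColimits H]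
    (j : ℕ) : IsLeftSatellite (kernel.ι ε) (H.leftDerived (j + 1)) (H.leftDerived j) := by
  have hS := shortExact_syzygySequence ε
  have (X : C) : Projective (syzygySequence ε X).X₂ := inferInstanceAs (Projective (F.obj X))
  cases j with
  | zero =>
    refine IsLeftSatellite.ofIso ?_ H.leftDerivedZeroIsoSelf.symm
    refine ⟨{ app X := leftDerivedOneConnecting H (hS X), naturality X Y f :=
      leftDerivedOneConnecting_naturality H (hS X) (hS Y) (syzygySequenceMap ε f) }, fun X ↦ ?_⟩
    obtain ⟨w, hw⟩ := exists_exact_leftDerivedOneConnecting H (hS X)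
    have : Mono (ShortComplex.mk _ _ w).f := inferInstanceAs (Mono (leftDerivedOneConnecting ..))
    exact ⟨w, ⟨hw.fIsKernel⟩⟩
  | succ j =>
    refine ⟨{ app X := (leftDerivedShiftIso H (hS X) j).hom, naturality X Y f :=
      leftDerivedShiftIso_hom_naturality H (hS X) (hS Y) (syzygySequenceMap ε f) j }, fun X ↦ ?_⟩
    have hz : (H.leftDerived (j + 1)).map ((kernel.ι ε).app X) = 0 :=
      (H.isZero_leftDerived_obj_projective_succ j (F.obj X)).eq_of_tgt _ _
    exact ⟨by rw [hz, comp_zero], ⟨IsKernel.isoKernel _ _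
      (KernelFork.IsLimit.ofId _ hz) (leftDerivedShiftIso H (hS X) j) (Category.comp_id _)⟩⟩

end Syzygy

section ExtSatellite

open Limits Abelian

variable {R : Type u} [CommRing R] (N : ModuleCat.{u} R)

instance {X Y : ModuleCat.{u} R} (f : X ⟶ Y) [Mono f] : Mono ((abelianExtFunctor N 0).map f) :=
  (ModuleCat.mono_iff_injective _).2 (Ext.postcomp_mk₀_injective_of_mono N f)

variable {F : ModuleCat.{u} R ⥤ ModuleCat.{u} R} (ε : F ⟶ 𝟭 _) [∀ X, Epi (ε.app X)]

/-- The connecting maps `Ext^n(N, X) ⟶ Ext^{n+1}(N, K X)` of `0 ⟶ K X ⟶ F X ⟶ X ⟶ 0`. -/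
noncomputable def extConnecting (n : ℕ) :
    abelianExtFunctor N n ⟶ kernel ε ⋙ abelianExtFunctor N (n + 1) where
  app X := ModuleCat.ofHom ((shortExact_syzygySequence ε X).extClass.postcompOfLinear R N rfl)
  naturality X Y f := by
    have h := (shortExact_syzygySequence ε X).extClass_naturality (shortExact_syzygySequence ε Y)
      (syzygySequenceMap ε f)
    have (x : Abelian.Ext.{u} N X n) : (x.comp (Ext.mk₀ f) (add_zero n)).comp
        (shortExact_syzygySequence ε Y).extClass rfl =
        (x.comp (shortExact_syzygySequence ε X).extClass rfl).comp
          (Ext.mk₀ ((kernel ε).map f)) (add_zero _) := by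
      rw [Ext.comp_assoc (h₂₃ := zero_add 1) (h := by lia), ← h, Ext.comp_assoc (h := by lia)]
    ext x
    exact this x

variable {N} in
lemma isLeftSatellite_abelianExtFunctor {n : ℕ}
    (hN : ∀ X, Subsingleton (Abelian.Ext.{u} N (F.obj X) n)) :
    IsLeftSatellite (kernel.ι ε) (abelianExtFunctor N n) (abelianExtFunctor N (n + 1)) := by
  refine ⟨extConnecting N ε n, fun X ↦ ?_⟩
  have hS := shortExact_syzygySequence ε X
  have w : (extConnecting N ε n).app X ≫
      (abelianExtFunctor N (n + 1)).map ((kernel.ι ε).app X) = 0 := by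
    have (x : Abelian.Ext.{u} N X n) :
        (x.comp hS.extClass rfl).comp (Ext.mk₀ (syzygySequence ε X).f) (add_zero (n + 1)) = 0 := by
      rw [Ext.comp_assoc (h₂₃ := add_zero 1) (h := by lia), hS.extClass_comp, Ext.comp_zero]
    ext x
    exact this x
  have exact : (ShortComplex.mk _ _ w).Exact := (ShortComplex.moduleCat_exact_iff _).2
    fun x hx ↦ Ext.covariant_sequence_exact₁ N hS x hx rfl
  have : Mono (ShortComplex.mk _ _ w).f := by
    refine (ModuleCat.mono_iff_injective _).2 ((injective_iff_map_eq_zero _).2 fun x hx ↦ ?_)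
    obtain ⟨y, rfl⟩ := Ext.covariant_sequence_exact₃ N hS x rfl hx
    rw [(hN X).elim y 0, Ext.zero_comp]
    rfl
  exact ⟨w, ⟨exact.fIsKernel⟩⟩

end ExtSatellite

section Comparison

open Limits Abelian

variable (R : Type u) [CommRing R]

/-- The functorial free cover of a module. -/
noncomputable def freeCover : forget (ModuleCat.{u} R) ⋙ ModuleCat.free R ⟶ 𝟭 _ :=
  (ModuleCat.adj R).counit

instance (X : ModuleCat.{u} R) : Epi ((freeCover R).app X) :=
  inferInstanceAs (Epi ((ModuleCat.adj R).counit.app X))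

instance (X : ModuleCat.{u} R) : Projective ((forget _ ⋙ ModuleCat.free R).obj X) :=
  ModuleCat.projective_of_free (ι := X) Finsupp.basisSingleOne

variable {R} {E : Type*} [Category* E] [Abelian E] {N : ModuleCat.{u} R} {n : ℕ}
  {H : ModuleCat.{u} R ⥤ ModuleCat.{u} R} [H.Additive] [PreservesFiniteColimits H]
  {V G : ModuleCat.{u} R ⥤ E} [V.PreservesZeroMorphisms] [G.PreservesZeroMorphisms]
  [PreservesFiniteLimits V] [PreservesFiniteLimits G]
  (hN : ∀ i < n, ∀ X : ModuleCat.{u} R, Projective X → Subsingleton (Abelian.Ext.{u} N X i))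
  (e : abelianExtFunctor N n ⋙ V ≅ H ⋙ G)
include hN e

theorem nonempty_abelianExtFunctor_iso_leftDerived {i j : ℕ} (hij : i + j = n) :
    Nonempty (abelianExtFunctor N i ⋙ V ≅ H.leftDerived j ⋙ G) := by
  induction j generalizing i with
  | zero =>
    obtain rfl : i = n := hij
    exact ⟨e ≪≫ Functor.isoWhiskerRight H.leftDerivedZeroIsoSelf.symm G⟩
  | succ j ih =>
    obtain ⟨e'⟩ := ih (i := i + 1) (by lia)
    have hExt := isLeftSatellite_abelianExtFunctor (freeCover R)
      fun X ↦ hN i (by lia) _ inferInstance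
    exact (hExt.comp V).nonempty_iso ((isLeftSatellite_leftDerived (freeCover R) H j).comp G) e'

theorem isZero_leftDerived_of_gt {j : ℕ} (hj : n < j) (X : ModuleCat.{u} R) :
    IsZero ((H.leftDerived j ⋙ G).obj X) := by
  induction j, hj using Nat.le_induction generalizing X with
  | base =>
    obtain ⟨e'⟩ := nonempty_abelianExtFunctor_iso_leftDerived hN e (zero_add n)
    have : Mono ((kernel.ι (freeCover R)).app X) := inferInstance
    have : Mono ((abelianExtFunctor N 0 ⋙ V).map ((kernel.ι (freeCover R)).app X)) :=
      inferInstanceAs (Mono (V.map _))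
    have : Mono ((H.leftDerived n ⋙ G).map ((kernel.ι (freeCover R)).app X)) :=
      ((MorphismProperty.monomorphisms E).arrow_mk_iso_iff
        (Arrow.isoMk (e'.app _) (e'.app _) (e'.hom.naturality _).symm)).1 this
    exact ((isLeftSatellite_leftDerived (freeCover R) H n).comp G).isZero_obj X
  | succ j _ ih =>
    have : Mono ((H.leftDerived j ⋙ G).map ((kernel.ι (freeCover R)).app X)) :=
      ⟨fun _ _ _ ↦ (ih _).eq_of_tgt _ _⟩
    exact ((isLeftSatellite_leftDerived (freeCover R) H j).comp G).isZero_obj X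

end Comparison

section ExtTensor

open Abelian TensorProduct

lemma dualTensorHom_bijective_of_flat {R N : Type*} (Y : Type*) [CommRing R] [AddCommGroup N]
    [Module R N] [AddCommGroup Y] [Module R Y] [Module.Flat R Y] [Module.FinitePresentation R N] :
    Function.Bijective (dualTensorHom R N Y) := by
  obtain ⟨m, k, f, g, hf, hgf⟩ := Module.FinitePresentation.exists_fin' R N
  exact LinearMap.bijective_of_bijective_of_injective_of_left_exact _ _ _ _ _ _ _
    (dualTensorHom_comp_rTensor_dualMap f).symm (dualTensorHom_comp_rTensor_dualMap g).symm
    (Module.Flat.rTensor_exact Y (LinearMap.exact_lcomp_of_exact_of_surjective _ hgf hf))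
    (LinearMap.exact_lcomp_of_exact_of_surjective _ hgf hf) dualTensorHom_bijective
    dualTensorHom_bijective.1 (Module.Flat.rTensor_preserves_injective_linearMap _
      (LinearMap.dualMap_injective_of_surjective hf))
    (LinearMap.lcomp_injective_of_surjective f hf)

variable {R : Type u} [CommRing R]

/-- The element `x` of `X` as the class in `Ext^0(R, X)` of the map `R ⟶ X`, `r ↦ r • x`. -/
noncomputable def toExtZero (X : ModuleCat.{u} R) :
    X →ₗ[R] Abelian.Ext.{u} (ModuleCat.of R R) X 0 :=
  Ext.linearEquiv₀.symm.toLinearMap ∘ₗ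
    (ModuleCat.homLinearEquiv (S := R)).symm.toLinearMap ∘ₗ
      (LinearMap.ringLmapEquivSelf R R X).symm.toLinearMap

lemma toExtZero_apply {X : ModuleCat.{u} R} (x : X) :
    toExtZero X x = Ext.mk₀ (ModuleCat.ofHom (LinearMap.toSpanSingleton R X x)) :=
  rfl

lemma toExtZero_comp_mk₀ {X Y : ModuleCat.{u} R} (f : X ⟶ Y) (x : X) :
    (toExtZero X x).comp (Ext.mk₀ f) (add_zero 0) = toExtZero Y (f x) := by
  rw [toExtZero_apply, toExtZero_apply, Ext.mk₀_comp_mk₀]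
  congr 1
  ext
  simp

/-- The pairing `Ext^i(N, R) ⊗ X ⟶ Ext^i(N, X)` sending `α ⊗ x` to the composition of `α` with
the map `R ⟶ X`, `r ↦ r • x`. -/
noncomputable def extTensorHom (N X : ModuleCat.{u} R) (i : ℕ) :
    Abelian.Ext.{u} N (ModuleCat.of R R) i ⊗[R] X →ₗ[R] Abelian.Ext.{u} N X i :=
  TensorProduct.lift
    ((Ext.bilinearCompOfLinear R N (ModuleCat.of R R) X i 0 i (add_zero i)).compl₂ (toExtZero X))

lemma extTensorHom_tmul {N X : ModuleCat.{u} R} {i : ℕ}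
    (α : Abelian.Ext.{u} N (ModuleCat.of R R) i) (x : X) :
    extTensorHom N X i (α ⊗ₜ x) = α.comp (toExtZero X x) (add_zero i) :=
  rfl

lemma precomp_comp_extTensorHom {N N' : ModuleCat.{u} R} (X : ModuleCat.{u} R) {a i j : ℕ}
    (h : a + i = j) (α : Abelian.Ext.{u} N' N a) :
    α.precompOfLinear R X h ∘ₗ extTensorHom N X i =
      extTensorHom N' X j ∘ₗ (α.precompOfLinear R _ h).rTensor _ := by
  ext β x
  simp [extTensorHom_tmul]

lemma extTensorHom_zero_bijective {N X : ModuleCat.{u} R}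
    (h : Function.Bijective (dualTensorHom R N X)) :
    Function.Bijective (extTensorHom N X 0) := by
  let homEquiv (Y : ModuleCat.{u} R) : (N →ₗ[R] Y) ≃ₗ[R] Abelian.Ext.{u} N Y 0 :=
    (ModuleCat.homLinearEquiv (S := R)).symm.trans Ext.linearEquiv₀.symm
  have hcomp : extTensorHom N X 0 ∘ₗ ((homEquiv (ModuleCat.of R R)).rTensor X).toLinearMap =
      (homEquiv X).toLinearMap ∘ₗ dualTensorHom R N X := by
    ext f x
    refine (Ext.mk₀_comp_mk₀ (ModuleCat.ofHom f) _).trans ?_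
    rfl
  refine (Function.Bijective.of_comp_iff _ ((homEquiv (ModuleCat.of R R)).rTensor X).bijective).1 ?_
  rw [← LinearEquiv.coe_toLinearMap, ← LinearMap.coe_comp, hcomp]
  exact (homEquiv X).bijective.comp h

lemma extTensorHom_succ_bijective {S : ShortComplex (ModuleCat.{u} R)} (hS : S.ShortExact)
    [Projective S.X₂] {X : ModuleCat.{u} R} {i : ℕ}
    (h₁ : Function.Bijective (extTensorHom S.X₁ X i))
    (h₂ : Function.Bijective (extTensorHom S.X₂ X i)) :
    Function.Bijective (extTensorHom S.X₃ X (i + 1)) := by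
  have exact (Y : ModuleCat.{u} R) : Function.Exact
      ((Ext.mk₀ S.f).precompOfLinear R Y (zero_add i))
      (hS.extClass.precompOfLinear R Y (add_comm 1 i)) :=
    fun α ↦ ⟨fun hα ↦ Ext.contravariant_sequence_exact₁ hS Y α (add_comm 1 i) hα,
      by rintro ⟨β, rfl⟩; exact hS.extClass_comp_assoc _ (h := add_comm 1 i)⟩
  have surj (Y : ModuleCat.{u} R) :
      Function.Surjective (hS.extClass.precompOfLinear R Y (add_comm 1 i)) :=
    fun α ↦ Ext.contravariant_sequence_exact₃ hS Y α (Ext.eq_zero_of_projective _) (add_comm 1 i)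
  exact LinearMap.bijective_of_surjective_of_bijective_of_right_exact _ _ _ _ _ _ _
    (precomp_comp_extTensorHom X (zero_add i) (Ext.mk₀ S.f))
    (precomp_comp_extTensorHom X (add_comm 1 i) hS.extClass)
    (rTensor_exact _ (exact _) (surj _)) (exact X) h₂.2 h₁
    (LinearMap.rTensor_surjective _ (surj _)) (surj X)

section Noetherian

variable [IsNoetherianRing R]

lemma exists_shortExact_finite_projective (N : ModuleCat.{u} R) [Module.Finite R N] :
    ∃ S : ShortComplex (ModuleCat.{u} R), S.ShortExact ∧ Module.Finite R S.X₁ ∧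
      Module.Finite R S.X₂ ∧ Projective S.X₂ ∧ S.X₃ = N := by
  obtain ⟨m, f, hf⟩ := Module.Finite.exists_fin' R N
  exact ⟨_, LinearMap.shortExact_shortComplexKer hf, inferInstanceAs (Module.Finite R f.ker),
    inferInstanceAs (Module.Finite R (Fin m → R)),
    ModuleCat.projective_of_free (Pi.basisFun R (Fin m)), rfl⟩

theorem extTensorHom_bijective_of_flat (N X : ModuleCat.{u} R) [Module.Finite R N]
    [Module.Flat R X] (i : ℕ) : Function.Bijective (extTensorHom N X i) := by
  induction i generalizing N with
  | zero =>
    have := Module.finitePresentation_of_finite R N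
    exact extTensorHom_zero_bijective (dualTensorHom_bijective_of_flat X)
  | succ i ih =>
    obtain ⟨S, hS, _, _, _, rfl⟩ := exists_shortExact_finite_projective N
    exact extTensorHom_succ_bijective hS (ih _) (ih _)

theorem extTensorHom_bijective_of_hasProjectiveDimensionLE (N X : ModuleCat.{u} R)
    [Module.Finite R N] (i : ℕ) [HasProjectiveDimensionLE N i] :
    Function.Bijective (extTensorHom N X i) := by
  induction i generalizing N with
  | zero =>
    have : Module.Projective R N := (IsProjective.iff_projective N).2
      ((projective_iff_hasProjectiveDimensionLE_zero N).2 inferInstance)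
    exact extTensorHom_zero_bijective dualTensorHom_bijective
  | succ i ih =>
    obtain ⟨S, hS, _, _, _, rfl⟩ := exists_shortExact_finite_projective N
    have : HasProjectiveDimensionLE S.X₂ i := hasProjectiveDimensionLT_of_ge _ 1 _ (by lia)
    have : HasProjectiveDimensionLE S.X₁ i :=
      hS.hasProjectiveDimensionLT_X₁ (i + 1) inferInstance inferInstance
    exact extTensorHom_succ_bijective hS (ih _) (ih _)

end Noetherian

end ExtTensor

section AugmentedAlgebra

open Abelian TensorProduct

variable {B R : Type u} [CommRing B] [CommRing R] [Algebra B R] [Algebra R B] [IsScalarTower B R B]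

variable (B R) in
/-- The `B`-module `Ext^n_R(B, R)` of a `B`-algebra `R` with an augmentation `R → B`. -/
noncomputable abbrev dualizingModule (n : ℕ) : ModuleCat.{u} B :=
  (ModuleCat.restrictScalars (algebraMap B R)).obj
    ((abelianExtFunctor (ModuleCat.of R B) n).obj (ModuleCat.of R R))

/-- The `B`-module structure on `Ext^n_R(N, X)` for a `B`-algebra `R`. -/
noncomputable abbrev extRestrictModule (N X : ModuleCat.{u} R) (n : ℕ) :
    Module B (Abelian.Ext.{u} N X n) :=
  Module.compHom _ (algebraMap B R)

attribute [local instance] extRestrictModule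

instance (N X : ModuleCat.{u} R) (n : ℕ) : IsScalarTower B R (Abelian.Ext.{u} N X n) :=
  .of_algebraMap_smul fun _ _ ↦ rfl

instance (X : ModuleCat.{u} R) (n : ℕ) :
    IsScalarTower R B (Abelian.Ext.{u} (ModuleCat.of R B) X n) :=
  .of_algebraMap_smul fun r α ↦ by
    have hr : algebraMap B R (algebraMap R B r) • 𝟙 (ModuleCat.of R B) = r • 𝟙 _ := by
      ext b
      exact (algebraMap_smul R _ b).trans (algebraMap_smul B r b)
    have smul_eq (s : R) : s • α = (Ext.mk₀ (s • 𝟙 _)).comp α (zero_add n) := by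
      rw [Ext.mk₀_smul, Ext.smul_comp, Ext.mk₀_id_comp]
    exact (smul_eq _).trans ((congrArg (fun f ↦ (Ext.mk₀ f).comp α (zero_add n)) hr).trans
      (smul_eq r).symm)

/-- `extTensorHom`, where it is bijective, as a `B`-linear isomorphism
`Ext^n(B, R) ⊗[B] (B ⊗[R] X) ≃ Ext^n(B, X)`. -/
noncomputable def tensorExtEquiv {X : ModuleCat.{u} R} {n : ℕ}
    (hX : Function.Bijective (extTensorHom (ModuleCat.of R B) X n)) :
    dualizingModule B R n ⊗[B] (B ⊗[R] X) ≃ₗ[B] Abelian.Ext.{u} (ModuleCat.of R B) X n :=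
  AlgebraTensorModule.cancelBaseChange R B B
      (Abelian.Ext.{u} (ModuleCat.of R B) (ModuleCat.of R R) n) X ≪≫ₗ
    (LinearEquiv.ofBijective _ hX).restrictScalars B

lemma tensorExtEquiv_tmul {X : ModuleCat.{u} R} {n : ℕ}
    (hX : Function.Bijective (extTensorHom (ModuleCat.of R B) X n))
    (α : Abelian.Ext.{u} (ModuleCat.of R B) (ModuleCat.of R R) n) (b : B) (x : X) :
    tensorExtEquiv hX (TensorProduct.tmul B (M := dualizingModule B R n) α (b ⊗ₜ x)) =
      (b • α).comp (toExtZero X x) (add_zero n) :=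
  rfl

lemma tensorExtEquiv_naturality {X Y : ModuleCat.{u} R} {n : ℕ} (f : X ⟶ Y)
    (hX : Function.Bijective (extTensorHom (ModuleCat.of R B) X n))
    (hY : Function.Bijective (extTensorHom (ModuleCat.of R B) Y n))
    (t : dualizingModule B R n ⊗[B] (B ⊗[R] X)) :
    tensorExtEquiv hY ((f.hom.baseChange B).lTensor _ t) =
      (tensorExtEquiv hX t).comp (Ext.mk₀ f) (add_zero n) := by
  have key : (tensorExtEquiv hY).toLinearMap ∘ₗ (f.hom.baseChange B).lTensor _ =
      ((Ext.mk₀ f).postcompOfLinear R _ (add_zero n)).restrictScalars B ∘ₗ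
        (tensorExtEquiv hX).toLinearMap := by
    ext α x
    refine (tensorExtEquiv_tmul hY α 1 (f x)).trans (Eq.trans ?_
      (congrArg (·.comp (Ext.mk₀ f) (add_zero n)) (tensorExtEquiv_tmul hX α 1 x)).symm)
    rw [Ext.comp_assoc_of_third_deg_zero, toExtZero_comp_mk₀]
  exact LinearMap.congr_fun key t

variable (B) in
/-- Restricting an `R`-module `M` to `B` gives back the `B`-module structure of `M` when the two
are compatible. -/
noncomputable def restrictScalarsObjEquiv (M : Type u) [AddCommGroup M] [Module R M] [Module B M]
    [IsScalarTower B R M] :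
    (ModuleCat.restrictScalars (algebraMap B R)).obj (ModuleCat.of R M) ≃ₗ[B] M where
  toFun m := m
  invFun m := m
  left_inv _ := rfl
  right_inv _ := rfl
  map_add' _ _ := rfl
  map_smul' b m := algebraMap_smul (M := M) R b m

lemma lTensor_restrictScalarsObjEquiv_naturality (M : ModuleCat.{u} B) {X Y : ModuleCat.{u} R}
    (f : X ⟶ Y) (t : M ⊗[B] (ModuleCat.restrictScalars (algebraMap B R)).obj
      (ModuleCat.of R B ⊗ X)) :
    (restrictScalarsObjEquiv B (B ⊗[R] Y)).toLinearMap.lTensor M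
        (((ModuleCat.restrictScalars (algebraMap B R)).map (_ ◁ f)).hom.lTensor M t) =
      (f.hom.baseChange B).lTensor M
        ((restrictScalarsObjEquiv B (B ⊗[R] X)).toLinearMap.lTensor M t) := by
  have h : (restrictScalarsObjEquiv B (B ⊗[R] Y)).toLinearMap ∘ₗ
      ((ModuleCat.restrictScalars (algebraMap B R)).map (ModuleCat.of R B ◁ f)).hom =
        f.hom.baseChange B ∘ₗ (restrictScalarsObjEquiv B (B ⊗[R] X)).toLinearMap := rfl
  have := congrArg (LinearMap.lTensor M) h
  rw [LinearMap.lTensor_comp, LinearMap.lTensor_comp] at this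
  exact LinearMap.congr_fun this t

variable (B R) in
include B in
lemma algebraMap_surjective_of_augmentation : Function.Surjective (algebraMap R B) := fun b ↦
  ⟨algebraMap B R b, (IsScalarTower.algebraMap_apply B R B b).symm⟩

instance : Module.Finite R B :=
  .of_surjective (Algebra.linearMap R B) (algebraMap_surjective_of_augmentation B R)

variable [IsNoetherianRing R]

variable (B R) in
/-- `Ext^n(B, X) ≅ Ext^n(B, R) ⊗[B] (B ⊗[R] X)`, naturally in `X`, when `B` has projective
dimension at most `n` over `R`. -/
noncomputable def abelianExtFunctorIsoTensor (n : ℕ)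
    [HasProjectiveDimensionLE (ModuleCat.of R B) n] :
    abelianExtFunctor (ModuleCat.of R B) n ⋙ ModuleCat.restrictScalars (algebraMap B R) ≅
      (tensoringLeft (ModuleCat.{u} R)).obj (ModuleCat.of R B) ⋙
        ModuleCat.restrictScalars (algebraMap B R) ⋙ tensorLeft (dualizingModule B R n) :=
  have bij (X : ModuleCat.{u} R) : Function.Bijective (extTensorHom (ModuleCat.of R B) X n) :=
    extTensorHom_bijective_of_hasProjectiveDimensionLE _ X n
  Iso.symm <| NatIso.ofComponents
    (fun X ↦ (((restrictScalarsObjEquiv B (B ⊗[R] X)).lTensor _).trans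
      (tensorExtEquiv (bij X))).toModuleIso)
    fun {X Y} f ↦ by
      refine ModuleCat.hom_ext (LinearMap.ext fun t ↦ ?_)
      exact (congrArg (tensorExtEquiv (bij Y))
        (lTensor_restrictScalarsObjEquiv_naturality _ f t)).trans
          (tensorExtEquiv_naturality f (bij X) (bij Y) _)

end AugmentedAlgebra

section Rees

open Abelian RingTheory.Sequence

variable {R : Type u} [CommRing R] {N : ModuleCat.{u} R}

lemma annihilator_le_annihilator_ext (N X : ModuleCat.{u} R) (i : ℕ) :
    Module.annihilator R N ≤ Module.annihilator R (Abelian.Ext.{u} N X i) := fun r hr ↦ by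
  refine Module.mem_annihilator.2 fun α ↦ ?_
  have hN : r • 𝟙 N = 0 := by
    ext x
    exact Module.mem_annihilator.1 hr x
  rw [← Ext.mk₀_id_comp α, ← Ext.smul_comp, ← Ext.mk₀_smul, hN, Ext.mk₀_zero, Ext.zero_comp]

section RegularElement

variable {M : ModuleCat.{u} R} {r : R} (hr : r ∈ Module.annihilator R N) (hM : IsSMulRegular M r)

include hr in
lemma ext_comp_smulShortComplex_f_eq_zero {i : ℕ} (α : Abelian.Ext.{u} N M i) :
    α.comp (Ext.mk₀ (ModuleCat.smulShortComplex M r).f) (add_zero i) = 0 :=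
  (Ext.smul_eq_comp_mk₀ α r).symm.trans
    (Module.mem_annihilator.1 (annihilator_le_annihilator_ext N M i hr) α)

include hr hM in
lemma subsingleton_ext_zero_of_isSMulRegular : Subsingleton (Abelian.Ext.{u} N M 0) := by
  have := hM.smulShortComplex_shortExact.mono_f
  refine subsingleton_of_forall_eq 0 fun α ↦
    Ext.postcomp_mk₀_injective_of_mono N (ModuleCat.smulShortComplex M r).f ?_
  exact (ext_comp_smulShortComplex_f_eq_zero hr α).trans
    (ext_comp_smulShortComplex_f_eq_zero hr 0).symm

include hr in
lemma extClass_postcomp_surjective (i : ℕ) : Function.Surjective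
    (hM.smulShortComplex_shortExact.extClass.postcompOfLinear R N (rfl : i + 1 = i + 1)) :=
  fun α ↦ Ext.covariant_sequence_exact₁ N hM.smulShortComplex_shortExact α
    (ext_comp_smulShortComplex_f_eq_zero hr α) rfl

lemma extClass_postcomp_injective (i : ℕ) [Subsingleton (Abelian.Ext.{u} N M i)] :
    Function.Injective
      (hM.smulShortComplex_shortExact.extClass.postcompOfLinear R N (rfl : i + 1 = i + 1)) := by
  refine (injective_iff_map_eq_zero _).2 fun α hα ↦ ?_
  obtain ⟨β, rfl⟩ := Ext.covariant_sequence_exact₃ N hM.smulShortComplex_shortExact α rfl hα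
  have hβ : β = 0 := Subsingleton.elim (α := Abelian.Ext.{u} N M i) _ _
  rw [hβ, Ext.zero_comp]

end RegularElement

lemma subsingleton_ext_of_isWeaklyRegular {M : ModuleCat.{u} R} {rs : List R}
    (hM : IsWeaklyRegular M rs) (hrs : ∀ r ∈ rs, r ∈ Module.annihilator R N) {i : ℕ}
    (hi : i < rs.length) : Subsingleton (Abelian.Ext.{u} N M i) := by
  induction rs generalizing M i with
  | nil => exact absurd hi i.not_lt_zero
  | cons r rs ih =>
    obtain ⟨hr, hquot⟩ := (isWeaklyRegular_cons_iff M r rs).1 hM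
    have hrN := hrs r List.mem_cons_self
    cases i with
    | zero => exact subsingleton_ext_zero_of_isSMulRegular hrN hr
    | succ i =>
      have : Subsingleton (Abelian.Ext.{u} N (M.smulShortComplex r).X₃ i) :=
        ih (M := ModuleCat.of R (QuotSMulTop r M)) hquot
          (fun s hs ↦ hrs s (List.mem_cons_of_mem r hs)) (Nat.lt_of_succ_lt_succ hi)
      exact (extClass_postcomp_surjective hrN hr i).subsingleton

/-- Rees' isomorphism `Ext^n(N, M) ≃ Hom(N, M ⧸ (r₁, …, rₙ)M)`, for an `M`-regular sequence
`r₁, …, rₙ` of elements killing `N`. -/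
noncomputable def extLengthEquiv (M : ModuleCat.{u} R) : (rs : List R) → IsWeaklyRegular M rs →
    (∀ r ∈ rs, r ∈ Module.annihilator R N) →
    Abelian.Ext.{u} N M rs.length ≃ₗ[R] (N →ₗ[R] M ⧸ (Ideal.ofList rs • ⊤ : Submodule R M))
  | [], _, _ =>
    Ext.linearEquiv₀ ≪≫ₗ ModuleCat.homLinearEquiv (S := R) ≪≫ₗ
      LinearEquiv.congrRight (Submodule.quotEquivOfEqBot _ (by simp)).symm
  | r :: rs, hM, hrs =>
    have hr := ((isWeaklyRegular_cons_iff M r rs).1 hM).1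
    have := subsingleton_ext_of_isWeaklyRegular hM hrs rs.length.lt_succ_self
    (LinearEquiv.ofBijective _ ⟨extClass_postcomp_injective hr rs.length,
      extClass_postcomp_surjective (hrs r List.mem_cons_self) hr rs.length⟩).symm ≪≫ₗ
    extLengthEquiv (ModuleCat.of R (QuotSMulTop r M)) rs ((isWeaklyRegular_cons_iff M r rs).1 hM).2
      (fun s hs ↦ hrs s (List.mem_cons_of_mem r hs)) ≪≫ₗ
    LinearEquiv.congrRight (Submodule.quotOfListConsSMulTopEquivQuotSMulTopInner M r rs).symm

end Rees

section LocallyRegular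

open Abelian TensorProduct RingTheory.Sequence

variable {R : Type u} [CommRing R]

/-- After localization at the prime `p`, the ideal `I` is generated by a weakly regular sequence
of `n` elements of `I`. -/
def IsGeneratedByRegularSequenceAt (I : Ideal R) (n : ℕ) (p : Ideal R) [p.IsPrime] : Prop :=
  ∃ rs : List R, rs.length = n ∧ (∀ r ∈ rs, r ∈ I) ∧ IsWeaklyRegular (Localization.AtPrime p) rs ∧
    (Ideal.ofList rs).map (algebraMap R (Localization.AtPrime p)) =
      I.map (algebraMap R (Localization.AtPrime p))

/-- The ideal `I` is generated by a regular sequence of length `n` at every maximal ideal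
containing it. -/
def IsLocallyGeneratedByRegularSequence (I : Ideal R) (n : ℕ) : Prop :=
  ∀ (p : Ideal R) [p.IsMaximal], I ≤ p → IsGeneratedByRegularSequenceAt I n p

lemma subsingleton_localization_of_not_annihilator_le {M M' : Type*} [AddCommGroup M] [Module R M]
    [AddCommGroup M'] [Module R M'] {p : Ideal R} [p.IsPrime] (f : M →ₗ[R] M')
    [IsLocalizedModule.AtPrime p f] (hp : ¬ Module.annihilator R M ≤ p) : Subsingleton M' := by
  obtain ⟨r, hr, hrp⟩ := SetLike.not_le_iff_exists.1 hp
  exact (IsLocalizedModule.subsingleton_iff p.primeCompl f).2 fun x ↦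
    ⟨r, hrp, Module.mem_annihilator.1 hr x⟩

lemma smul_top_eq_of_map_eq {I J : Ideal R} {p : Ideal R} [p.IsPrime]
    (h : J.map (algebraMap R (Localization.AtPrime p)) =
      I.map (algebraMap R (Localization.AtPrime p))) :
    (J • ⊤ : Submodule R (Localization.AtPrime p)) = I • ⊤ := by
  rw [Ideal.smul_top_eq_map, Ideal.smul_top_eq_map, h]

variable {S : Type u} [CommRing S] [Algebra R S]

variable (R S) in
lemma ker_algebraMap_le_annihilator :
    RingHom.ker (algebraMap R S) ≤ Module.annihilator R S := fun r hr ↦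
  Module.mem_annihilator.2 fun s ↦ by
    rw [Algebra.smul_def, (RingHom.mem_ker).1 hr, zero_mul]

section Surjective

variable (hS : Function.Surjective (algebraMap R S))

/-- `M ⧸ JM ≃ S ⊗ M` for a quotient `S` of `R`, if `JM = IM` where `I = ker (R → S)`. -/
noncomputable def quotSMulTopEquivTensor {M : Type*} [AddCommGroup M] [Module R M] {J : Ideal R}
    (hJ : (J • ⊤ : Submodule R M) = RingHom.ker (algebraMap R S) • ⊤) :
    (M ⧸ (J • ⊤ : Submodule R M)) ≃ₗ[R] S ⊗[R] M :=
  Submodule.quotEquivOfEq _ _ hJ ≪≫ₗ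
    (TensorProduct.quotTensorEquivQuotSMul M (RingHom.ker (algebraMap R S))).symm ≪≫ₗ
      (Ideal.quotientKerAlgEquivOfSurjective (f := Algebra.ofId R S) hS).toLinearEquiv.rTensor M

include hS

lemma nonempty_ext_localization_equiv {n : ℕ} {p : Ideal R} [p.IsPrime]
    (h : IsGeneratedByRegularSequenceAt (RingHom.ker (algebraMap R S)) n p) :
    Nonempty (Abelian.Ext.{u} (ModuleCat.of R S) (ModuleCat.of R (Localization.AtPrime p)) n ≃ₗ[R]
      S ⊗[R] Localization.AtPrime p) := by
  obtain ⟨rs, rfl, hrs, hreg, hmap⟩ := h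
  exact ⟨extLengthEquiv (ModuleCat.of R (Localization.AtPrime p)) rs hreg
      (fun r hr ↦ ker_algebraMap_le_annihilator R S (hrs r hr)) ≪≫ₗ
    LinearEquiv.congrRight (quotSMulTopEquivTensor hS (smul_top_eq_of_map_eq hmap)) ≪≫ₗ
    (LinearMap.extendScalarsOfSurjectiveEquiv hS ≪≫ₗ LinearMap.ringLmapEquivSelf S R _)⟩

variable [IsNoetherianRing R]

lemma nonempty_localized_ext_equiv {n : ℕ} {p : Ideal R} [p.IsPrime]
    (h : IsGeneratedByRegularSequenceAt (RingHom.ker (algebraMap R S)) n p) :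
    Nonempty (Abelian.Ext.{u} (ModuleCat.of R S) (ModuleCat.of R R) n ⊗[R] Localization.AtPrime p
      ≃ₗ[R] S ⊗[R] Localization.AtPrime p) := by
  have : Module.Finite R (ModuleCat.of R S) := .of_surjective (Algebra.linearMap R S) hS
  obtain ⟨e⟩ := nonempty_ext_localization_equiv hS h
  exact ⟨(LinearEquiv.ofBijective _ (extTensorHom_bijective_of_flat (ModuleCat.of R S)
    (ModuleCat.of R (Localization.AtPrime p)) n)) ≪≫ₗ e⟩

lemma subsingleton_ext_of_isLocallyGeneratedByRegularSequence {n : ℕ}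
    (h : IsLocallyGeneratedByRegularSequence (RingHom.ker (algebraMap R S)) n) {i : ℕ}
    (hi : i < n) : Subsingleton (Abelian.Ext.{u} (ModuleCat.of R S) (ModuleCat.of R R) i) := by
  have : Module.Finite R (ModuleCat.of R S) := .of_surjective (Algebra.linearMap R S) hS
  refine Module.subsingleton_of_localization_maximal (R := R)
    (fun p _ ↦ Localization.AtPrime p ⊗[R] _) (fun p _ ↦ TensorProduct.mk R _ _ 1) fun p _ ↦ ?_
  by_cases hp : RingHom.ker (algebraMap R S) ≤ p
  · obtain ⟨rs, rfl, hrs, hreg, -⟩ := h p hp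
    have : Subsingleton (Abelian.Ext.{u} (ModuleCat.of R S)
        (ModuleCat.of R (Localization.AtPrime p)) i) :=
      subsingleton_ext_of_isWeaklyRegular hreg
        (fun r hr ↦ ker_algebraMap_le_annihilator R S (hrs r hr)) hi
    exact ((TensorProduct.comm R _ _).trans (LinearEquiv.ofBijective _
      (extTensorHom_bijective_of_flat (ModuleCat.of R S)
        (ModuleCat.of R (Localization.AtPrime p)) i))).toEquiv.subsingleton
  · have hann := annihilator_le_annihilator_ext (ModuleCat.of R S) (ModuleCat.of R R) i
    exact subsingleton_localization_of_not_annihilator_le (TensorProduct.mk R _ _ 1) fun hle ↦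
      hp ((ker_algebraMap_le_annihilator R S).trans (hann.trans hle))

end Surjective

section ProjectiveDimension

lemma nonempty_localizedModule_equiv_quotient (hS : Function.Surjective (algebraMap R S))
    {p : Ideal R} [p.IsPrime] {rs : List R}
    (hmap : (Ideal.ofList rs).map (algebraMap R (Localization.AtPrime p)) =
      (RingHom.ker (algebraMap R S)).map (algebraMap R (Localization.AtPrime p))) :
    Nonempty ((ModuleCat.of R S).localizedModule p.primeCompl ≃ₗ[Localization.AtPrime p]
      Localization.AtPrime p ⧸ (Ideal.ofList (rs.map (algebraMap R (Localization.AtPrime p))) • ⊤ :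
        Submodule (Localization.AtPrime p) (Localization.AtPrime p))) := by
  have hrestrict : (Ideal.ofList rs • ⊤ : Submodule R (Localization.AtPrime p)) =
      (Ideal.ofList (rs.map (algebraMap R (Localization.AtPrime p))) • ⊤ :
        Submodule (Localization.AtPrime p) (Localization.AtPrime p)).restrictScalars R := by
    rw [Ideal.smul_top_eq_map, Ideal.map_ofList, smul_eq_mul, Ideal.mul_top]
  exact ⟨LinearEquiv.extendScalarsOfIsLocalization p.primeCompl (Localization.AtPrime p) <|
    have := ModuleCat.localizedModule_isLocalizedModule (ModuleCat.of R S) p.primeCompl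
    IsLocalizedModule.linearEquiv p.primeCompl
      ((ModuleCat.of R S).localizedModuleMkLinearMap p.primeCompl)
      (TensorProduct.mk R (Localization.AtPrime p) S 1) ≪≫ₗ
    TensorProduct.comm R _ _ ≪≫ₗ
    (quotSMulTopEquivTensor hS (smul_top_eq_of_map_eq hmap)).symm ≪≫ₗ
    Submodule.quotEquivOfEq _ _ hrestrict ≪≫ₗ Submodule.Quotient.restrictScalarsEquiv R _⟩

variable [IsNoetherianRing R]

lemma hasProjectiveDimensionLE_quotient_of_isWeaklyRegular [IsLocalRing R] {rs : List R}
    (hreg : IsWeaklyRegular R rs) (hrs : ∀ r ∈ rs, r ∈ IsLocalRing.maximalIdeal R) :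
    HasProjectiveDimensionLE (ModuleCat.of R (R ⧸ (Ideal.ofList rs • ⊤ : Submodule R R)))
      rs.length := by
  have h := ModuleCat.projectiveDimension_quotient_eq_add_length_of_isWeaklyRegular
    (ModuleCat.of R R) rs hreg hrs
  rw [ModuleCat.projectiveDimension_eq_zero_of_projective (ModuleCat.of R R), zero_add] at h
  exact (projectiveDimension_le_iff _ _).1 h.le

lemma hasProjectiveDimensionLE_of_isLocallyGeneratedByRegularSequence
    (hS : Function.Surjective (algebraMap R S)) {n : ℕ}
    (h : IsLocallyGeneratedByRegularSequence (RingHom.ker (algebraMap R S)) n) :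
    HasProjectiveDimensionLE (ModuleCat.of R S) n := by
  have : Module.Finite R (ModuleCat.of R S) := .of_surjective (Algebra.linearMap R S) hS
  refine (ModuleCat.hasProjectiveDimensionLE_iff_forall_maximalSpectrum n _).2 fun ⟨p, _⟩ ↦ ?_
  by_cases hp : RingHom.ker (algebraMap R S) ≤ p
  · obtain ⟨rs, rfl, hrs, hreg, hmap⟩ := h p hp
    obtain ⟨e⟩ := nonempty_localizedModule_equiv_quotient hS hmap
    have hquot := hasProjectiveDimensionLE_quotient_of_isWeaklyRegular
      ((isWeaklyRegular_map_algebraMap_iff (Localization.AtPrime p) _ rs).2 hreg) fun r hr ↦ by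
        obtain ⟨s, hs, rfl⟩ := List.mem_map.1 hr
        rw [← Localization.AtPrime.map_eq_maximalIdeal]
        exact Ideal.mem_map_of_mem _ (hp (hrs s hs))
    rw [List.length_map] at hquot
    exact hasProjectiveDimensionLT_of_iso e.symm.toModuleIso (rs.length + 1)
  · have := ModuleCat.localizedModule_isLocalizedModule (ModuleCat.of R S) p.primeCompl
    have : Subsingleton ((ModuleCat.of R S).localizedModule p.primeCompl) :=
      subsingleton_localization_of_not_annihilator_le
        ((ModuleCat.of R S).localizedModuleMkLinearMap p.primeCompl)
        fun hle ↦ hp ((ker_algebraMap_le_annihilator R S).trans hle)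
    have := (ModuleCat.isZero_of_subsingleton
      ((ModuleCat.of R S).localizedModule p.primeCompl)).hasProjectiveDimensionLT_zero
    exact hasProjectiveDimensionLT_of_ge _ 0 (n + 1) n.succ.zero_le

end ProjectiveDimension

section Flat

lemma isLocalizedModule_tensor_localization_comap (hS : Function.Surjective (algebraMap R S))
    (L : Type*) [AddCommGroup L] [Module R L] [Module S L] [IsScalarTower R S L]
    (q : Ideal S) [q.IsPrime] :
    IsLocalizedModule.AtPrime q <| LinearMap.flip
      (AlgebraTensorModule.mk R S L (Localization.AtPrime (q.comap (algebraMap R S)))) 1 := by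
  let p := q.comap (algebraMap R S)
  have : IsLocalizedModule p.primeCompl (((AlgebraTensorModule.mk R S L
      (Localization.AtPrime p)).flip 1).restrictScalars R) :=
    .of_linearEquiv _ (TensorProduct.mk R (Localization.AtPrime p) L 1) (TensorProduct.comm R _ _)
  have := IsLocalizedModule.of_restrictScalars p.primeCompl
    ((AlgebraTensorModule.mk R S L (Localization.AtPrime p)).flip 1)
  rwa [Algebra.algebraMapSubmonoid, q.map_primeCompl_comap_of_surjective _ hS] at this

lemma flat_of_forall_tensor_localization_equiv (hS : Function.Surjective (algebraMap R S))
    {L : Type*} [AddCommGroup L] [Module R L] [Module S L] [IsScalarTower R S L]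
    (h : ∀ (q : Ideal S) [q.IsMaximal],
      Nonempty (L ⊗[R] Localization.AtPrime (q.comap (algebraMap R S)) ≃ₗ[R]
        S ⊗[R] Localization.AtPrime (q.comap (algebraMap R S)))) :
    Module.Flat S L := by
  let f (q : Ideal S) [q.IsMaximal] :
      L →ₗ[S] L ⊗[R] Localization.AtPrime (q.comap (algebraMap R S)) :=
    (AlgebraTensorModule.mk R S L _).flip 1
  have (q : Ideal S) [q.IsMaximal] : IsLocalizedModule.AtPrime q (f q) :=
    isLocalizedModule_tensor_localization_comap hS L q
  refine @Module.flat_of_isLocalized_maximal S S _ _ _ L _ _ _ _ _ _ _ _ _ f this fun q _ ↦ ?_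
  obtain ⟨e⟩ := h q
  exact .of_linearEquiv (e.extendScalarsOfSurjective hS)

end Flat

end LocallyRegular

section FormallySmooth

open KaehlerDifferential MvPolynomial RingTheory.Sequence TensorProduct

lemma isWeaklyRegular_map_X {B κ : Type*} [CommRing B] {l : List κ} (hl : l.Nodup) :
    IsWeaklyRegular (MvPolynomial κ B) (l.map (X (R := B))) := by
  refine ⟨fun i hi ↦ ?_⟩
  rw [List.length_map] at hi
  have htake : (Ideal.ofList ((l.map (X (R := B))).take i) •
      (⊤ : Submodule (MvPolynomial κ B) (MvPolynomial κ B))) =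
        Ideal.span (X '' {x | x ∈ l.take i}) := by
    simp [Ideal.ofList, ← List.map_take, Set.image]
  rw [isSMulRegular_quotient_iff_mem_of_smul_mem]
  intro g hg
  rw [htake, List.getElem_map, smul_eq_mul] at hg
  rw [htake]
  refine mem_ideal_span_X_image.2 fun m hm ↦ ?_
  obtain ⟨j, hj, hne⟩ := mem_ideal_span_X_image.1 hg (Finsupp.single l[i] 1 + m) (by
    rwa [mem_support_iff, coeff_X_mul, ← mem_support_iff])
  have hij : l[i] ≠ j := fun h ↦ by
    obtain ⟨k, hk, hkj⟩ := List.mem_take_iff_getElem.1 hj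
    have := hl.getElem_inj_iff.1 (hkj.trans h.symm)
    omega
  exact ⟨j, hj, by simpa [Finsupp.single_eq_of_ne hij, Finsupp.single_eq_of_ne hij.symm] using hne⟩

lemma mapBaseChange_bijective_of_basis {A C κ : Type*} [CommRing A] [CommRing C] [Algebra A C]
    [Algebra (MvPolynomial κ A) C] [IsScalarTower A (MvPolynomial κ A) C]
    (b : Module.Basis κ C Ω[C⁄A])
    (hb : ∀ i, b i = D A C (algebraMap (MvPolynomial κ A) C (X i))) :
    Function.Bijective (mapBaseChange A (MvPolynomial κ A) C) := by
  let b' : Module.Basis κ C (C ⊗[MvPolynomial κ A] Ω[MvPolynomial κ A⁄A]) :=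
    (mvPolynomialBasis A κ).baseChange C
  have h : mapBaseChange A (MvPolynomial κ A) C = (b'.equiv b (Equiv.refl κ)).toLinearMap :=
    b'.ext fun i ↦ by
      rw [LinearEquiv.coe_coe, Module.Basis.equiv_apply]
      simp [b', hb]
  rw [h]
  exact (b'.equiv b (Equiv.refl κ)).bijective

lemma formallyEtale_of_mapBaseChange_bijective {A P C : Type*} [CommRing A] [CommRing P]
    [CommRing C] [Algebra A P] [Algebra A C] [Algebra P C] [IsScalarTower A P C]
    [Algebra.FormallySmooth A C] (h : Function.Bijective (mapBaseChange A P C)) :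
    Algebra.FormallyEtale P C where
  subsingleton_kaehlerDifferential := subsingleton_of_forall_eq 0 fun x ↦ by
    obtain ⟨y, rfl⟩ := map_surjective A P C x
    exact (exact_mapBaseChange_map A P C y).2 (h.2 y)
  subsingleton_h1Cotangent := subsingleton_of_forall_eq 0 fun x ↦ by
    have hx : Algebra.H1Cotangent.δ A P C x = 0 := h.1 <| by
      rw [map_zero]
      exact (Algebra.H1Cotangent.exact_δ_mapBaseChange A P C _).2 ⟨x, rfl⟩
    obtain ⟨y, rfl⟩ := (Algebra.H1Cotangent.exact_map_δ A P C x).1 hx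
    rw [Subsingleton.elim y 0, map_zero]

lemma exists_localization_surjective_of_essFiniteType (P C : Type*) [CommRing P] [CommRing C]
    [Algebra P C] [Algebra.EssFiniteType P C] :
    ∃ (k : ℕ) (M : Submonoid (MvPolynomial (Fin k) P)) (f : Localization M →ₐ[P] C),
      Function.Surjective f := by
  obtain ⟨k, g, hg⟩ := (Algebra.FiniteType.iff_quotient_mvPolynomial''
    (R := P) (S := Algebra.EssFiniteType.subalgebra P C)).1 inferInstance
  let M := (Algebra.EssFiniteType.submonoid P C).comap g.toRingHom
  have hM : M.map g.toRingHom = Algebra.EssFiniteType.submonoid P C :=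
    Submonoid.map_comap_eq_of_surjective hg _
  have : IsLocalization (M.map g.toRingHom) C := hM ▸ inferInstance
  refine ⟨k, M, ⟨IsLocalization.map C g.toRingHom M.le_comap_map, fun r ↦ ?_⟩,
    IsLocalization.map_surjective_of_surjective _ _ _ hg⟩
  rw [IsScalarTower.algebraMap_apply P (MvPolynomial (Fin k) P) (Localization M)]
  refine (IsLocalization.map_eq M.le_comap_map _).trans ?_
  exact congrArg (algebraMap (Algebra.EssFiniteType.subalgebra P C) C) (g.commutes r)

lemma flat_of_formallySmooth_of_essFiniteType (P C : Type u) [CommRing P] [CommRing C]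
    [Algebra P C] [IsNoetherianRing P] [Algebra.EssFiniteType P C] [Algebra.FormallySmooth P C] :
    Module.Flat P C := by
  obtain ⟨k, M, f, hf⟩ := exists_localization_surjective_of_essFiniteType P C
  have : Module.Flat P (Localization M) := .trans _ (MvPolynomial (Fin k) P) _
  have : IsNoetherianRing (Localization M) := IsLocalization.isNoetherianRing M _ inferInstance
  exact Algebra.FormallySmooth.flat_of_algHom_of_isNoetherianRing f hf

lemma isWeaklyRegular_map_of_basis_kaehlerDifferential {B C κ : Type u} [CommRing B]
    [IsNoetherianRing B] [CommRing C] [Algebra B C] [Algebra.EssFiniteType B C]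
    [Algebra.FormallySmooth B C] [Finite κ] (f : κ → C) (b : Module.Basis κ C Ω[C⁄B])
    (hb : ∀ i, b i = D B C (f i)) {l : List κ} (hl : l.Nodup) : IsWeaklyRegular C (l.map f) := by
  algebraize [(aeval (R := B) f).toRingHom]
  have hX (i : κ) : algebraMap (MvPolynomial κ B) C (X i) = f i := aeval_X f i
  have : IsScalarTower B (MvPolynomial κ B) C :=
    .of_algebraMap_eq' (aeval (R := B) f).comp_algebraMap.symm
  have : Algebra.FormallyEtale (MvPolynomial κ B) C := formallyEtale_of_mapBaseChange_bijective <|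
    mapBaseChange_bijective_of_basis b fun i ↦ by rw [hb, hX]
  have : Algebra.EssFiniteType (MvPolynomial κ B) C := .of_comp B _ _
  have := flat_of_formallySmooth_of_essFiniteType (MvPolynomial κ B) C
  have h := (isWeaklyRegular_map_X (B := B) hl).of_flat (S := C)
  rw [List.map_map] at h
  rwa [← funext hX]

lemma exists_smul_mem_span_of_span_image_eq_top {R C M N : Type*} [CommRing R] [CommRing C]
    [Algebra R C] (S : Submonoid R) [IsLocalization S C] [AddCommGroup M] [Module R M]
    [AddCommGroup N] [Module R N] [Module C N] [IsScalarTower R C N] (g : M →ₗ[R] N)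
    [IsLocalizedModule S g] {s : Set M} (hs : Submodule.span C (g '' s) = ⊤) (m : M) :
    ∃ t ∈ S, t • m ∈ Submodule.span R s := by
  have hm : g m ∈ Submodule.localized' C S g (Submodule.span R s) := by
    rw [Submodule.localized'_span, hs]
    exact Submodule.mem_top
  obtain ⟨m', hm', t, ht⟩ := hm
  have hgm : g m' = g ((t : R) • m) := by
    rw [map_smul]
    exact IsLocalizedModule.mk'_eq_iff.1 ht
  obtain ⟨c, hc⟩ := (IsLocalizedModule.eq_iff_exists S g).1 hgm
  refine ⟨c * t, (c * t).2, ?_⟩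
  rw [mul_smul]
  exact (show (c : R) • m' = _ from hc) ▸ Submodule.smul_mem _ _ hm'

section Augmentation

variable {B R : Type u} [CommRing B] [CommRing R] [Algebra B R] [Algebra R B] [IsScalarTower B R B]

lemma mul_mem_span_sup_sq_of_smul_D_mem_span [Algebra.FormallySmooth B R] {s : Set R}
    (hs : s ⊆ RingHom.ker (algebraMap R B)) {t y : R} (hy : y ∈ RingHom.ker (algebraMap R B))
    (h : t • D B R y ∈ Submodule.span R (D B R '' s)) :
    t * y ∈ Ideal.span s ⊔ RingHom.ker (algebraMap R B) ^ 2 := by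
  let I := RingHom.ker (algebraMap R B)
  have hinj : Function.Injective (kerCotangentToTensor B R B) :=
    (Algebra.FormallySmooth.kerCotangentToTensor_injective_iff
      (algebraMap_surjective_of_augmentation B R)).2 inferInstance
  have hle : Submodule.span R (D B R '' s) ≤
      (((Submodule.comap I.subtype (Ideal.span s)).map I.toCotangent).map
        (kerCotangentToTensor B R B)).comap (TensorProduct.mk R B Ω[R⁄B] 1) := by
    rw [Submodule.span_le]
    rintro _ ⟨x, hx, rfl⟩
    exact ⟨_, ⟨⟨x, hs hx⟩, Ideal.subset_span hx, rfl⟩, rfl⟩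
  obtain ⟨_, ⟨z, hz, rfl⟩, hzy⟩ := hle h
  have hcot : I.toCotangent z = I.toCotangent (t • ⟨y, hy⟩) := hinj <| by
    rw [hzy, map_smul, map_smul, map_smul]
    rfl
  have hsub : t * y - z ∈ I ^ 2 := I.toCotangent_eq.1 hcot.symm
  rw [← sub_add_cancel (t * y) z]
  exact add_mem (Ideal.mem_sup_right hsub) (Ideal.mem_sup_left hz)

lemma map_span_eq_map_ker_of_span_map_D_eq_top [IsNoetherianRing R] [Algebra.FormallySmooth B R]
    {p : Ideal R} [p.IsPrime] (hp : RingHom.ker (algebraMap R B) ≤ p) {s : Set R}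
    (hs : s ⊆ RingHom.ker (algebraMap R B))
    (hspan : Submodule.span (Localization.AtPrime p)
      (map B B R (Localization.AtPrime p) '' (D B R '' s)) = ⊤) :
    (Ideal.span s).map (algebraMap R (Localization.AtPrime p)) =
      (RingHom.ker (algebraMap R B)).map (algebraMap R (Localization.AtPrime p)) := by
  refine le_antisymm (Ideal.map_mono (Ideal.span_le.2 hs)) ?_
  refine Submodule.le_of_le_smul_of_le_jacobson_bot (I := (RingHom.ker (algebraMap R B)).map
    (algebraMap R (Localization.AtPrime p))) (Ideal.FG.map (IsNoetherian.noetherian _) _) ?_ ?_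
  · rw [IsLocalRing.jacobson_eq_maximalIdeal _ bot_ne_top,
      ← Localization.AtPrime.map_eq_maximalIdeal]
    exact Ideal.map_mono hp
  · rw [smul_eq_mul, ← Ideal.map_mul, ← pow_two, ← Ideal.map_sup, Ideal.map_le_iff_le_comap]
    intro y hy
    obtain ⟨t, ht, hty⟩ := exists_smul_mem_span_of_span_image_eq_top p.primeCompl
      (map B B R (Localization.AtPrime p)) hspan (D B R y)
    have hu : IsUnit (algebraMap R (Localization.AtPrime p) t) :=
      IsLocalization.map_units _ (⟨t, ht⟩ : p.primeCompl)
    rw [Ideal.mem_comap, ← Ideal.unit_mul_mem_iff_mem _ hu, ← map_mul]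
    exact Ideal.mem_map_of_mem _ (mul_mem_span_sup_sq_of_smul_D_mem_span hs hy hty)

lemma span_range_D_ker_eq_top (C : Type*) [CommRing C] [Algebra R C] [Algebra B C]
    [IsScalarTower B R C] (S : Submonoid R) [IsLocalization S C] :
    Submodule.span C (Set.range fun y : RingHom.ker (algebraMap R B) ↦
      D B C (algebraMap R C y)) = ⊤ := by
  rw [eq_top_iff, ← span_range_map_derivation_of_isLocalization B R C S]
  refine Submodule.span_mono ?_
  rintro _ ⟨r, rfl⟩
  refine ⟨⟨r - algebraMap B R (algebraMap R B r), ?_⟩, ?_⟩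
  · rw [RingHom.mem_ker, map_sub, ← IsScalarTower.algebraMap_apply B R B, Algebra.algebraMap_self,
      RingHom.id_apply, sub_self]
  · simp [← IsScalarTower.algebraMap_apply B R C]

variable [IsNoetherianRing B] [IsNoetherianRing R] [Algebra.EssFiniteType B R]
  [Algebra.FormallySmooth B R]

lemma isGeneratedByRegularSequenceAt_ker_of_formallySmooth {p : Ideal R} [p.IsPrime]
    (hp : RingHom.ker (algebraMap R B) ≤ p) :
    IsGeneratedByRegularSequenceAt (RingHom.ker (algebraMap R B))
      (Module.finrank (Localization.AtPrime p) Ω[Localization.AtPrime p⁄B]) p := by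
  have : Algebra.FormallySmooth R (Localization.AtPrime p) := .of_isLocalization p.primeCompl
  have : Algebra.FormallySmooth B (Localization.AtPrime p) := .comp B R _
  obtain ⟨κ, a, b, hb⟩ := Module.exists_basis_of_span_of_flat _
    (span_range_D_ker_eq_top (B := B) (Localization.AtPrime p) p.primeCompl)
  have : Finite κ := Module.Finite.finite_basis b
  have := Fintype.ofFinite κ
  let g (i : κ) : R := a i
  have hreg := isWeaklyRegular_map_of_basis_kaehlerDifferential
    (fun i ↦ algebraMap R (Localization.AtPrime p) (g i)) b hb Finset.univ.nodup_toList
  refine ⟨Finset.univ.toList.map g, ?_, fun r hr ↦ ?_, ?_, ?_⟩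
  · rw [List.length_map, Finset.length_toList, Finset.card_univ, Module.finrank_eq_card_basis b]
  · obtain ⟨i, -, rfl⟩ := List.mem_map.1 hr
    exact (a i).2
  · rw [← isWeaklyRegular_map_algebraMap_iff (Localization.AtPrime p), List.map_map]
    exact hreg
  · have hrange : {r | r ∈ Finset.univ.toList.map g} = Set.range g := by ext; simp
    rw [Ideal.ofList, hrange]
    refine map_span_eq_map_ker_of_span_map_D_eq_top hp (Set.range_subset_iff.2 fun i ↦ (a i).2) ?_
    rw [← b.span_eq, ← Set.range_comp, ← Set.range_comp]
    congr 2
    ext i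
    simp [hb, g]

variable (B R) in
lemma exists_isLocallyGeneratedByRegularSequence_ker [ConnectedSpace (PrimeSpectrum B)] :
    ∃ n, IsLocallyGeneratedByRegularSequence (RingHom.ker (algebraMap R B)) n := by
  obtain ⟨n, hn⟩ :=
    (Module.isLocallyConstant_rankAtStalk (R := B) (M := B ⊗[R] Ω[R⁄B])).exists_eq_const
  refine ⟨n, fun p _ hp ↦ ?_⟩
  have hmem : (⟨p, inferInstance⟩ : PrimeSpectrum R) ∈
      Set.range (PrimeSpectrum.comap (algebraMap R B)) := by
    rw [range_comap_of_surjective _ _ (algebraMap_surjective_of_augmentation B R)]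
    exact hp
  obtain ⟨q, hq⟩ := hmem
  have hrank : Module.finrank (Localization.AtPrime p) Ω[Localization.AtPrime p⁄B] = n := by
    have : Algebra.FormallyEtale R (Localization.AtPrime p) := .of_isLocalization p.primeCompl
    rw [← (tensorKaehlerEquivOfFormallyEtale B R (Localization.AtPrime p)).finrank_eq]
    refine (Module.rankAtStalk_eq_finrank_tensorProduct
      (⟨p, inferInstance⟩ : PrimeSpectrum R)).symm.trans ?_
    rw [← hq, ← Module.rankAtStalk_baseChange, hn, Function.const_apply]
  exact hrank ▸ isGeneratedByRegularSequenceAt_ker_of_formallySmooth hp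

end Augmentation

end FormallySmooth

section Duality

open Abelian Limits TensorProduct

lemma subsingleton_ext_of_projective {R : Type u} [CommRing R] [IsNoetherianRing R]
    {N : ModuleCat.{u} R} [Module.Finite R N] {i : ℕ}
    (h : Subsingleton (Abelian.Ext.{u} N (ModuleCat.of R R) i)) (X : ModuleCat.{u} R)
    [Projective X] : Subsingleton (Abelian.Ext.{u} N X i) := by
  have : Module.Projective R X := (IsProjective.iff_projective X).2 inferInstance
  exact (extTensorHom_bijective_of_flat N X i).2.subsingleton

variable (B R : Type u) [CommRing B] [CommRing R] [Algebra B R] [Algebra R B] [IsScalarTower B R B]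

/-- The functor `X ↦ Ext^i_R(B, X)` from `R`-modules to `B`-modules, for an augmented `B`-algebra
`R`. -/
noncomputable abbrev extAugmentationFunctor (i : ℕ) : ModuleCat.{u} R ⥤ ModuleCat.{u} B :=
  (Ext R (ModuleCat.{u} R) i).obj (.op (ModuleCat.of R B)) ⋙
    ModuleCat.restrictScalars (algebraMap B R)

/-- The functor `X ↦ Tor_j^R(B, X)` from `R`-modules to `B`-modules, for an augmented `B`-algebra
`R`. -/
noncomputable abbrev torAugmentationFunctor (j : ℕ) : ModuleCat.{u} R ⥤ ModuleCat.{u} B :=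
  (Tor (ModuleCat.{u} R) j).obj (ModuleCat.of R B) ⋙ ModuleCat.restrictScalars (algebraMap B R)

/-- `Ext^0_R(B, B) = Hom_R(B, B) = B`. -/
noncomputable def extAugmentationZeroIso :
    (extAugmentationFunctor B R 0).obj (ModuleCat.of R B) ≅ ModuleCat.of B B :=
  have endEquiv : Abelian.Ext.{u} (ModuleCat.of R B) (ModuleCat.of R B) 0 ≃ₗ[R] B :=
    Ext.linearEquiv₀ ≪≫ₗ ModuleCat.homLinearEquiv (S := R) ≪≫ₗ
      LinearMap.extendScalarsOfSurjectiveEquiv (algebraMap_surjective_of_augmentation B R) ≪≫ₗ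
      LinearMap.ringLmapEquivSelf B R B
  (ModuleCat.restrictScalars (algebraMap B R)).mapIso
      ((extIsoAbelianExtFunctor (ModuleCat.of R B) 0).app (ModuleCat.of R B) ≪≫
        endEquiv.toModuleIso) ≪≫
    (restrictScalarsObjEquiv B B).toModuleIso

variable {B R} [IsNoetherianRing R] {n : ℕ}
  (h : IsLocallyGeneratedByRegularSequence (RingHom.ker (algebraMap R B)) n)
include h

lemma flat_dualizingModule : Module.Flat B (dualizingModule B R n) := by
  have hS := algebraMap_surjective_of_augmentation B R
  let : Module B (Abelian.Ext.{u} (ModuleCat.of R B) (ModuleCat.of R R) n) :=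
    extRestrictModule _ _ n
  refine flat_of_forall_tensor_localization_equiv hS
    (L := Abelian.Ext.{u} (ModuleCat.of R B) (ModuleCat.of R R) n) fun q _ ↦ ?_
  have := Ideal.comap_isMaximal_of_surjective (algebraMap R B) hS (K := q)
  exact nonempty_localized_ext_equiv hS (h _ (Ideal.comap_mono bot_le))

lemma nonempty_extAugmentationFunctor_iso_tor {i j : ℕ} (hij : i + j = n) :
    Nonempty (extAugmentationFunctor B R i ≅
      torAugmentationFunctor B R j ⋙ tensorLeft (dualizingModule B R n)) := by
  have hS := algebraMap_surjective_of_augmentation B R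
  have := flat_dualizingModule h
  have := hasProjectiveDimensionLE_of_isLocallyGeneratedByRegularSequence hS h
  obtain ⟨e⟩ := nonempty_abelianExtFunctor_iso_leftDerived (fun i hi X _ ↦
    subsingleton_ext_of_projective
      (subsingleton_ext_of_isLocallyGeneratedByRegularSequence hS h hi) X)
    (abelianExtFunctorIsoTensor B R n) hij
  exact ⟨Functor.isoWhiskerRight (extIsoAbelianExtFunctor _ i) _ ≪≫ e⟩

lemma isZero_torAugmentationFunctor_of_gt {j : ℕ} (hj : n < j) (X : ModuleCat.{u} R) :
    IsZero ((torAugmentationFunctor B R j ⋙ tensorLeft (dualizingModule B R n)).obj X) := by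
  have hS := algebraMap_surjective_of_augmentation B R
  have := flat_dualizingModule h
  have := hasProjectiveDimensionLE_of_isLocallyGeneratedByRegularSequence hS h
  exact isZero_leftDerived_of_gt (fun i hi X _ ↦ subsingleton_ext_of_projective
      (subsingleton_ext_of_isLocallyGeneratedByRegularSequence hS h hi) X)
    (abelianExtFunctorIsoTensor B R n) hj X

lemma isZero_extAugmentationFunctor_of_gt {i : ℕ} (hi : n < i) (X : ModuleCat.{u} R) :
    IsZero ((extAugmentationFunctor B R i).obj X) := by
  have := hasProjectiveDimensionLE_of_isLocallyGeneratedByRegularSequence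
    (algebraMap_surjective_of_augmentation B R) h
  have : Subsingleton (Abelian.Ext.{u} (ModuleCat.of R B) X i) :=
    HasProjectiveDimensionLT.subsingleton (ModuleCat.of R B) (n + 1) i hi X
  exact (ModuleCat.restrictScalars _).map_isZero <|
    (ModuleCat.isZero_of_subsingleton (ModuleCat.of R _)).of_iso
      ((extIsoAbelianExtFunctor (ModuleCat.of R B) i).app X)

lemma isInvertible_dualizingModule : Module.IsInvertible B (dualizingModule B R n) := by
  obtain ⟨e⟩ := nonempty_extAugmentationFunctor_iso_tor h (zero_add n)
  exact ⟨(torAugmentationFunctor B R n).obj (ModuleCat.of R B), inferInstance, inferInstance,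
    ⟨((e.app (ModuleCat.of R B)).symm ≪≫ extAugmentationZeroIso B R).toLinearEquiv⟩⟩

end Duality

section Enveloping

open Limits TensorProduct

variable (A B : Type u) [CommRing A] [CommRing B] [Algebra A B]

/-- The augmentation of the enveloping algebra `B ⊗[A] B` given by multiplication. -/
noncomputable abbrev envelopingAugmentation : Algebra (B ⊗[A] B) B :=
  (Algebra.TensorProduct.lmul' A (S := B)).toRingHom.toAlgebra

attribute [local instance] envelopingAugmentation

instance : IsScalarTower B (B ⊗[A] B) B :=
  .of_algebraMap_eq' (by ext b; exact (mul_one b).symm)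

lemma extEnvelopingFunctor_natCast (i : ℕ) :
    extEnvelopingFunctor A B i = extAugmentationFunctor B (B ⊗[A] B) i :=
  if_pos (Int.natCast_nonneg i)

lemma torEnvelopingFunctor_natCast (j : ℕ) :
    torEnvelopingFunctor A B j = torAugmentationFunctor B (B ⊗[A] B) j :=
  if_pos (Int.natCast_nonneg j)

variable {A B}

lemma isZero_extEnvelopingFunctor_of_neg {i : ℤ} (hi : i < 0) :
    IsZero (extEnvelopingFunctor A B i) := by
  rw [extEnvelopingFunctor, if_neg hi.not_ge]
  exact Functor.isZero _ fun _ ↦ ModuleCat.isZero_of_subsingleton (ModuleCat.of B PUnit)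

lemma isZero_torEnvelopingFunctor_of_neg {j : ℤ} (hj : j < 0) :
    IsZero (torEnvelopingFunctor A B j) := by
  rw [torEnvelopingFunctor, if_neg hj.not_ge]
  exact Functor.isZero _ fun _ ↦ ModuleCat.isZero_of_subsingleton (ModuleCat.of B PUnit)

lemma nonempty_extEnvelopingFunctor_iso_tor [IsNoetherianRing (B ⊗[A] B)] {n : ℕ}
    (h : IsLocallyGeneratedByRegularSequence (RingHom.ker (algebraMap (B ⊗[A] B) B)) n) (i : ℤ) :
    Nonempty (extEnvelopingFunctor A B i ≅
      torEnvelopingFunctor A B (n - i) ⋙ tensorLeft (dualizingModule B (B ⊗[A] B) n)) := by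
  rcases lt_or_ge i 0 with hi | hi
  · obtain ⟨j, hj⟩ := Int.eq_ofNat_of_zero_le (a := n - i) (by lia)
    rw [hj, torEnvelopingFunctor_natCast]
    exact ⟨(isZero_extEnvelopingFunctor_of_neg hi).iso <| Functor.isZero _ <|
      isZero_torAugmentationFunctor_of_gt h (by lia)⟩
  lift i to ℕ using hi
  rw [extEnvelopingFunctor_natCast]
  rcases le_or_gt i n with hin | hin
  · rw [← Nat.cast_sub hin, torEnvelopingFunctor_natCast]
    exact nonempty_extAugmentationFunctor_iso_tor h (Nat.add_sub_cancel' hin)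
  · exact ⟨(Functor.isZero _ (isZero_extAugmentationFunctor_of_gt h hin)).iso <|
      Functor.isZero _ fun X ↦ (tensorLeft _).map_isZero <|
        (isZero_torEnvelopingFunctor_of_neg (by lia)).obj X⟩

variable (A B) in
theorem vdb_duality_hochschild_general [IsNoetherianRing B] [Algebra.EssFiniteType A B]
    [Algebra.FormallySmooth A B] [ConnectedSpace (PrimeSpectrum B)] :
    ∃ (M : Type u) (_ : AddCommGroup M) (_ : Module B M) (n : ℕ),
      Module.IsInvertible B M ∧
      ∀ i : ℤ, Nonempty
        (extEnvelopingFunctor A B i ≅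
          torEnvelopingFunctor A B ((n : ℤ) - i) ⋙ tensorLeft (ModuleCat.of B M)) := by
  have : IsNoetherianRing (B ⊗[A] B) := Algebra.EssFiniteType.isNoetherianRing B (B ⊗[A] B)
  obtain ⟨n, hn⟩ := exists_isLocallyGeneratedByRegularSequence_ker B (B ⊗[A] B)
  exact ⟨dualizingModule B (B ⊗[A] B) n, inferInstance, inferInstance, n,
    isInvertible_dualizingModule hn, nonempty_extEnvelopingFunctor_iso_tor hn⟩

end Enveloping

open TensorProduct in
/-- **Van den Bergh duality between Hochschild cohomology and homology for smooth maps.**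
Let `A` be a commutative noetherian ring and `B` a nonzero, flat, formally smooth
`A`-algebra, essentially of finite type over `A`, with connected spectrum.  Then there are
an invertible `B`-module `M̄` and an `n : ℕ` such that for every `B ⊗[A] B`-module `X` and
every integer `i` there is an isomorphism of `B`-modules
`Ext^i_{B ⊗[A] B}(B, X) ≅ M̄ ⊗[B] Tor^{B ⊗[A] B}_{n-i}(B, X)`, natural in `X` (with `Ext`
and `Tor` in negative degrees interpreted as zero). -/
theorem vdb_duality_hochschild
    {A B : Type u} [CommRing A] [CommRing B] [Algebra A B]
    [IsNoetherianRing A] [Nontrivial B]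
    [Algebra.EssFiniteType A B] [Algebra.FormallySmooth A B]
    (hflat : Module.Flat A B)
    (hconn : ConnectedSpace (PrimeSpectrum B)) :
    ∃ (M : Type u) (_ : AddCommGroup M) (_ : Module B M) (n : ℕ),
      Module.IsInvertible B M ∧
      ∀ i : ℤ, Nonempty
        (extEnvelopingFunctor A B i ≅
          torEnvelopingFunctor A B ((n : ℤ) - i) ⋙ tensorLeft (ModuleCat.of B M)) := by
  have : IsNoetherianRing B := Algebra.EssFiniteType.isNoetherianRing A B
  exact vdb_duality_hochschild_general A B
end
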